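/- arXiv:1601.07205 — 2 statements merged into one kernel-verified Lean document; each statement's English description precedes it below -/
import Mathlib

section
/- Fix α ∈ [1, 2) and a one-dimensional linear subspace L ⊂ ℝ². For any β < (2/α) − 1 there exist a set E ⊆ L^⊥ and a quasiconformal homeomorphism f : ℝ² → ℝ² such that the Hausdorff dimension of f(a + L) is at least α for every a ∈ E, and the Hausdorff dimension of E is strictly greater than β. -/
open Set Metric Filter MeasureTheory
open scoped ENNReal Topology NNReal

noncomputable section

/-- `L_Φ(x,r) = sup {|Φ(x) - Φ(y)| : y ∈ Ω, |x - y| ≤ r}`. -/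
noncomputable def linDil {X : Type*} [MetricSpace X] (Ω : Set X) (Φ : X → X) (x : X) (r : ℝ) :
    ℝ≥0∞ :=
  ⨆ y ∈ {y | y ∈ Ω ∧ dist x y ≤ r}, edist (Φ x) (Φ y)

/-- `l_Φ(x,r) = inf {|Φ(x) - Φ(y)| : y ∈ Ω, |x - y| ≥ r}`. -/
noncomputable def linCon {X : Type*} [MetricSpace X] (Ω : Set X) (Φ : X → X) (x : X) (r : ℝ) :
    ℝ≥0∞ :=
  ⨅ y ∈ {y | y ∈ Ω ∧ r ≤ dist x y}, edist (Φ x) (Φ y)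

/-- `H_Φ(x) = limsup_{r → 0⁺} L_Φ(x,r) / l_Φ(x,r)`. -/
noncomputable def qcH {X : Type*} [MetricSpace X] (Ω : Set X) (Φ : X → X) (x : X) : ℝ≥0∞ :=
  Filter.limsup (fun r : ℝ => linDil Ω Φ x r / linCon Ω Φ x r) (𝓝[>] (0 : ℝ))

/-- A map `Φ`, viewed as a map of `Ω` into `X`, is quasiconformal if `H_Φ(x) ≤ H` for all
`x ∈ Ω`, for some finite `H ≥ 1`. -/
def QuasiconformalOn {X : Type*} [MetricSpace X] (Ω : Set X) (Φ : X → X) : Prop :=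
  ∃ H : ℝ, 1 ≤ H ∧ ∀ x ∈ Ω, qcH Ω Φ x ≤ ENNReal.ofReal H

/-- `Φ` restricts to a homeomorphism of `Ω` onto `Ω'`. -/
def IsHomeoOn {X : Type*} [TopologicalSpace X] (Φ : X → X) (Ω Ω' : Set X) : Prop :=
  ∃ e : Ω ≃ₜ Ω', ∀ x : Ω, (e x : X) = Φ (x : X)

/-- `f` is a similarity with ratio `r`. -/
def IsSimilarityWith {X : Type*} [MetricSpace X] (r : ℝ) (f : X → X) : Prop :=
  0 < r ∧ ∀ x y, dist (f x) (f y) = r * dist x y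

/-- The strong separation condition for the iterated function system `f` on the set `Q`:
each `f i` maps the closure of `Q` into `Q`, and the images of the closure of `Q` are
pairwise disjoint. -/
def StrongSeparation {X : Type*} [MetricSpace X] {ι : Type*} (f : ι → X → X) (Q : Set X) :
    Prop :=
  (∀ i, f i '' closure Q ⊆ Q) ∧
    ∀ i j, i ≠ j → Disjoint (f i '' closure Q) (f j '' closure Q)

/-- `f_σ = f_{σ₁} ∘ ⋯ ∘ f_{σ_k}` for a finite word `σ`. -/
def iterComp {X ι : Type*} (f : ι → X → X) : List ι → X → X
  | [] => id
  | i :: w => f i ∘ iterComp f w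

/-- The invariant set `K = ⋂_k ⋃_{|σ| = k} f_σ(closure Q)` of an iterated function system. -/
def invariantSet {X : Type*} [MetricSpace X] {ι : Type*} (f : ι → X → X) (Q : Set X) :
    Set X :=
  ⋂ k : ℕ, ⋃ w : Fin k → ι, iterComp f (List.ofFn w) '' closure Q

/-- The distance between two subsets of a metric space. -/
noncomputable def setDist {X : Type*} [MetricSpace X] (A B : Set X) : ℝ :=
  sInf ((fun p : X × X => dist p.1 p.2) '' A ×ˢ B)

end

/-!
Two finite packings of the unit ball by balls of equal radius, indexed by the same set, define
iterated function systems of homotheties. If the centers of the first packing can be moved to those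
of the second without collision, then some homeomorphism equal to the identity outside the unit ball
maps the balls of the first packing homothetically onto those of the second. Inserting copies of
this homeomorphism into the balls, again and again, produces in the limit a quasiconformal map that
conjugates the two systems and so maps one limit set onto the other, respecting codes.

The first packing consists of `N₁` columns of `N₂` balls of radius `1 / (12 * N₁)`, and the second
one of `N₁ * N₂` balls of radius `1 / (12 * M)` at points of an `M × M` grid, numbered in the same
lexicographic order; no collision occurs along straight lines, since differences of centers stay in
a convex cone. Prescribing the vertical digits of a code gives points of the first limit set on a
horizontal line, which are mapped to a set of dimension at least `log N₁ / log (12 * M)`, while such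
lines are parametrized by a set of dimension at least `log N₂ / log (12 * N₁)`. For large `M` these
numbers can be made at least `α` and `β` as soon as `α * (1 + β) < 2`.
-/

section GeometricDecay

lemma hasSum_one_sub_mul_pow {r : ℝ} (h₀ : 0 ≤ r) (h₁ : r < 1) :
    HasSum (fun k => (1 - r) * r ^ k) 1 := by
  simpa [(sub_pos.2 h₁).ne'] using (hasSum_geometric_of_lt_one h₀ h₁).mul_left (1 - r)

/-- Iterating the second alternative gives `e x ≤ κ ^ n * B` for every `n`. -/
lemma nonpos_of_forall_exists_le_mul {X : Type*} {e : X → ℝ} {κ B : ℝ} (hκ₀ : 0 ≤ κ) (hκ₁ : κ < 1)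
    (hB : ∀ x, e x ≤ B) (h : ∀ x, e x ≤ 0 ∨ ∃ y, e x ≤ κ * e y) (x : X) : e x ≤ 0 := by
  have key : ∀ n : ℕ, ∀ x, e x ≤ κ ^ n * max B 0 := by
    intro n
    induction n with
    | zero => exact fun x => by simpa using Or.inl (hB x)
    | succ n ih =>
      intro x
      rcases h x with hx | ⟨y, hy⟩
      · exact hx.trans (by positivity)
      · calc e x ≤ κ * e y := hy
          _ ≤ κ * (κ ^ n * max B 0) := by gcongr; exact ih y
          _ = κ ^ (n + 1) * max B 0 := by ring
  have hlim : Tendsto (fun n : ℕ => κ ^ n * max B 0) atTop (𝓝 0) := by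
    simpa using (tendsto_pow_atTop_nhds_zero_of_lt_one hκ₀ hκ₁).mul_const (max B 0)
  exact ge_of_tendsto' hlim fun n => key n x

end GeometricDecay

section WeaklyQuasisymmetric

/-- Weak quasisymmetry with constant `H`. -/
def IsWeaklyQuasisymmetric {X : Type*} [MetricSpace X] (H : ℝ) (f : X → X) : Prop :=
  ∀ x y z, dist x y ≤ dist x z → dist (f x) (f y) ≤ H * dist (f x) (f z)

lemma IsWeaklyQuasisymmetric.quasiconformalOn_univ {X : Type*} [MetricSpace X] {H : ℝ} {f : X → X}
    (h : IsWeaklyQuasisymmetric H f) : QuasiconformalOn univ f := by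
  have hpos : 0 < max 1 H := one_pos.trans_le (le_max_left _ _)
  have hne : ENNReal.ofReal (max 1 H) ≠ 0 := (ENNReal.ofReal_pos.2 hpos).ne'
  have hdiv (x : X) (r : ℝ) : linDil univ f x r / linCon univ f x r ≤ ENNReal.ofReal (max 1 H) := by
    refine ENNReal.div_le_of_le_mul (iSup₂_le fun y hy => ?_)
    simp only [linCon, ENNReal.mul_iInf_of_ne hne ENNReal.ofReal_ne_top]
    refine le_iInf₂ fun z hz => ?_
    rw [edist_dist, edist_dist, ← ENNReal.ofReal_mul hpos.le]
    refine ENNReal.ofReal_le_ofReal ((h x y z (hy.2.trans hz.2)).trans ?_)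
    gcongr
    exact le_max_right _ _
  exact ⟨max 1 H, le_max_left _ _, fun x _ =>
    (limsup_le_limsup (.of_forall (hdiv x))).trans_eq (limsup_const _)⟩

end WeaklyQuasisymmetric

section Dimension

open Real

lemma dimH_range_le_of_dist_le_rpow {A X Y : Type*} [MetricSpace X] [MetricSpace Y] {u : A → X}
    {g : A → Y} {C σ : ℝ} (hC : 0 ≤ C) (hσ : 0 < σ)
    (h : ∀ a b, dist (g a) (g b) ≤ C * dist (u a) (u b) ^ σ) :
    dimH (range g) ≤ dimH (range u) / ENNReal.ofReal σ := by
  rcases isEmpty_or_nonempty A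
  · rw [range_eq_empty g, dimH_empty]
    exact zero_le
  have hinv (a : A) : g (Function.invFun u (u a)) = g a := by
    have hle := h (Function.invFun u (u a)) a
    rwa [Function.invFun_eq (f := u) ⟨a, rfl⟩, dist_self, zero_rpow hσ.ne', mul_zero,
      dist_le_zero] at hle
  have hholder : HolderOnWith C.toNNReal σ.toNNReal (g ∘ Function.invFun u) (range u) := by
    rintro _ ⟨a, rfl⟩ _ ⟨b, rfl⟩
    simp only [Function.comp_apply, hinv, edist_dist]
    rw [coe_toNNReal _ hσ.le, ENNReal.ofReal_rpow_of_nonneg dist_nonneg hσ.le]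
    change _ ≤ ENNReal.ofReal C * _
    rw [← ENNReal.ofReal_mul hC]
    exact ENNReal.ofReal_le_ofReal (h a b)
  have hrange : (g ∘ Function.invFun u) '' range u = range g := by
    rw [← range_comp]
    exact congrArg range (funext hinv)
  exact hrange ▸ hholder.dimH_image_le (toNNReal_pos.2 hσ)

lemma inv_pow_le_of_mul_pow_le {b c s σ d : ℝ} {k : ℕ} (hb : 0 < b) (hc : 0 < c) (hs : 0 < s)
    (hσ : 0 ≤ σ) (hbs : 1 ≤ b * s ^ σ) (h : c * s ^ k ≤ d) : (b ^ k)⁻¹ ≤ c⁻¹ ^ σ * d ^ σ := by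
  have hd : s ^ k ≤ c⁻¹ * d := (le_inv_mul_iff₀ hc).2 h
  have hd₀ : 0 ≤ d := (by positivity : 0 ≤ c * s ^ k).trans h
  calc (b ^ k)⁻¹ = b⁻¹ ^ k := (inv_pow b k).symm
    _ ≤ (s ^ σ) ^ k := by
      gcongr
      exact (inv_le_iff_one_le_mul₀' hb).2 hbs
    _ = (s ^ k) ^ σ := rpow_pow_comm hs.le σ k
    _ ≤ (c⁻¹ * d) ^ σ := by gcongr
    _ = c⁻¹ ^ σ * d ^ σ := mul_rpow (by positivity) hd₀

/-- Reading codes as base `b` expansions maps the coded set onto the unit interval, and the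
separation makes this map `σ`-Hölder. -/
lemma le_dimH_range_of_mul_pow_le_dist {X : Type*} [MetricSpace X] {b : ℕ} (hb : 1 < b)
    {u : (ℕ → Fin b) → X} {c s σ : ℝ} (hc : 0 < c) (hs : 0 < s) (hσ : 0 < σ)
    (hbs : 1 ≤ b * s ^ σ)
    (hu : ∀ k ω ω', (∀ j < k, ω j = ω' j) → ω k ≠ ω' k → c * s ^ k ≤ dist (u ω) (u ω')) :
    ENNReal.ofReal σ ≤ dimH (range u) := by
  have hb₀ : (0 : ℝ) < b := by positivity
  have hdist (ω ω' : ℕ → Fin b) :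
      dist (ofDigits ω) (ofDigits ω') ≤ c⁻¹ ^ σ * dist (u ω) (u ω') ^ σ := by
    rcases eq_or_ne ω ω' with rfl | hne
    · rw [dist_self]
      positivity
    · have heq : ∀ j < PiNat.firstDiff ω ω', ω j = ω' j := fun j => PiNat.apply_eq_of_lt_firstDiff
      exact (abs_ofDigits_sub_ofDigits_le heq).trans <| inv_pow_le_of_mul_pow_le hb₀ hc hs hσ.le hbs
        (hu _ ω ω' heq (PiNat.apply_firstDiff_ne hne))
  have hone : 1 ≤ dimH (range (ofDigits (b := b))) := by
    have hIcc : dimH (Icc (0 : ℝ) 1) = 1 := by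
      rw [dimH_of_nonempty_interior (by simp [interior_Icc]), Module.finrank_self, Nat.cast_one]
    exact hIcc ▸ dimH_mono (image_univ (f := ofDigits (b := b)) ▸ ofDigits_SurjOn hb)
  have hle := hone.trans (dimH_range_le_of_dist_le_rpow (by positivity) hσ hdist)
  rwa [ENNReal.le_div_iff_mul_le (by simp [hσ]) (by simp), one_mul] at hle

end Dimension

section GridSizes

open Real

variable {a b c s x : ℝ}

lemma one_le_ceil_rpow_mul_inv_rpow (hx : 0 < x) (s : ℝ) : 1 ≤ (⌈x ^ s⌉₊ : ℝ) * x⁻¹ ^ s := by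
  rw [inv_rpow hx.le, ← div_eq_mul_inv, one_le_div (rpow_pos_of_pos hx s)]
  exact Nat.le_ceil _

lemma ceil_rpow_le_two_mul_rpow (hx : 1 ≤ x) (hs : 0 ≤ s) : (⌈x ^ s⌉₊ : ℝ) ≤ 2 * x ^ s :=
  Nat.ceil_le_two_mul (by linarith [one_le_rpow hx hs])

lemma eventually_mul_rpow_le_rpow (hab : a < b) (C : ℝ) :
    ∀ᶠ x : ℝ in atTop, C * x ^ a ≤ x ^ b := by
  filter_upwards [eventually_gt_atTop 0,
    (tendsto_rpow_atTop (sub_pos.2 hab)).eventually_ge_atTop C] with x hx hC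
  calc C * x ^ a ≤ x ^ (b - a) * x ^ a := by gcongr
    _ = x ^ b := by rw [← rpow_add hx, sub_add_cancel]

lemma eventually_ceil_rpow_le (hc : 1 ≤ c) {β : ℝ} (hβ₀ : 0 ≤ β) (hβ : β < 1) :
    ∀ᶠ x : ℝ in atTop, (⌈(c * x) ^ β⌉₊ : ℝ) ≤ x := by
  filter_upwards [eventually_ge_atTop 1, eventually_mul_rpow_le_rpow hβ (2 * c ^ β)] with x hx hle
  calc (⌈(c * x) ^ β⌉₊ : ℝ) ≤ 2 * (c * x) ^ β :=
        ceil_rpow_le_two_mul_rpow (one_le_mul_of_one_le_of_one_le hc hx) hβ₀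
    _ = 2 * c ^ β * x ^ β := by rw [mul_rpow (by positivity) (by positivity), mul_assoc]
    _ ≤ x ^ (1 : ℝ) := hle
    _ = x := rpow_one x

lemma eventually_ceil_rpow_mul_ceil_rpow_le (hc : 1 ≤ c) {α β : ℝ} (hα : 0 ≤ α) (hβ : 0 ≤ β)
    (hαβ : α * (1 + β) < 2) : ∀ᶠ x : ℝ in atTop,
      (⌈(c * x) ^ α⌉₊ : ℝ) * ⌈(c * ⌈(c * x) ^ α⌉₊) ^ β⌉₊ ≤ x * x := by
  filter_upwards [eventually_ge_atTop 1,
    eventually_mul_rpow_le_rpow hαβ (2 * c ^ β * (2 * c ^ α) ^ (1 + β))] with x hx hle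
  have hcx : 1 ≤ c * x := one_le_mul_of_one_le_of_one_le hc hx
  set y : ℝ := ((⌈(c * x) ^ α⌉₊ : ℕ) : ℝ)
  have hy : 1 ≤ y := (one_le_rpow hcx hα).trans (Nat.le_ceil _)
  calc y * ⌈(c * y) ^ β⌉₊ ≤ y * (2 * (c * y) ^ β) := by
        gcongr
        exact ceil_rpow_le_two_mul_rpow (one_le_mul_of_one_le_of_one_le hc hy) hβ
    _ = 2 * c ^ β * y ^ (1 + β) := by
      rw [mul_rpow (by positivity) (by positivity), rpow_one_add' (by positivity) (by positivity)]
      ring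
    _ ≤ 2 * c ^ β * (2 * (c * x) ^ α) ^ (1 + β) := by
      gcongr
      exact ceil_rpow_le_two_mul_rpow hcx hα
    _ = 2 * c ^ β * (2 * c ^ α) ^ (1 + β) * x ^ (α * (1 + β)) := by
      rw [mul_rpow (x := c) (by positivity) (by positivity), ← mul_assoc 2,
        mul_rpow (by positivity) (by positivity), ← rpow_mul (by positivity),
        ← mul_assoc]
    _ ≤ x ^ (2 : ℝ) := hle
    _ = x * x := by rw [rpow_two, sq]

/-- The least admissible sizes work, as then `N₁` is comparable to `M ^ α` and `N₁ * N₂` to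
`M ^ (α * (1 + β))`. -/
lemma exists_grid_sizes (hc : 1 ≤ c) {α β : ℝ} (hα : 1 ≤ α) (hβ : 0 < β)
    (hαβ : α * (1 + β) < 2) : ∃ M N₁ N₂ : ℕ, 1 < M ∧ M ≤ N₁ ∧ 1 < N₂ ∧ N₂ ≤ N₁ ∧
      N₁ * N₂ ≤ M * M ∧ 1 ≤ (N₁ : ℝ) * (c * M)⁻¹ ^ α ∧ 1 ≤ (N₂ : ℝ) * (c * N₁)⁻¹ ^ β := by
  have hβ₁ : β < 1 := by nlinarith
  obtain ⟨M, ⟨hN₂, hprod⟩, hM⟩ := (tendsto_natCast_atTop_atTop.eventually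
    ((eventually_forall_ge_atTop.2 (eventually_ceil_rpow_le hc hβ.le hβ₁)).and
      (eventually_ceil_rpow_mul_ceil_rpow_le hc (by positivity) hβ.le hαβ))
    |>.and (eventually_gt_atTop 1)).exists
  have hM' : (1 : ℝ) < M := by exact_mod_cast hM
  have hMN₁ : (M : ℝ) ≤ ⌈(c * M) ^ α⌉₊ :=
    calc (M : ℝ) ≤ c * M := le_mul_of_one_le_left (by positivity) hc
      _ ≤ (c * M) ^ α := self_le_rpow_of_one_le (by nlinarith) hα
      _ ≤ ⌈(c * M) ^ α⌉₊ := Nat.le_ceil _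
  refine ⟨M, ⌈(c * M) ^ α⌉₊, ⌈(c * ⌈(c * M) ^ α⌉₊) ^ β⌉₊, hM, by exact_mod_cast hMN₁,
    Nat.lt_ceil.2 ?_, by exact_mod_cast hN₂ _ hMN₁, by exact_mod_cast hprod,
    one_le_ceil_rpow_mul_inv_rpow (by positivity) α,
    one_le_ceil_rpow_mul_inv_rpow (mul_pos (by positivity) (by linarith)) β⟩
  rw [Nat.cast_one]
  exact one_lt_rpow (by nlinarith) hβ

lemma exists_one_add_mul_lt_two {α β : ℝ} (hα₁ : 1 ≤ α) (hα₂ : α < 2) (hβ : β < 2 / α - 1) :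
    ∃ γ, 0 < γ ∧ β < γ ∧ α * (1 + γ) < 2 := by
  have hα : 0 < 2 / α - 1 := sub_pos.2 ((one_lt_div (by linarith)).2 hα₂)
  obtain ⟨γ, hγ, hγα⟩ := exists_between (max_lt hα hβ)
  obtain ⟨hγ₀, hβγ⟩ := max_lt_iff.1 hγ
  refine ⟨γ, hγ₀, hβγ, ?_⟩
  rwa [lt_sub_iff_add_lt', lt_div_iff₀' (by linarith)] at hγα

end GridSizes

section Perturbation

variable {E : Type*} [NormedAddCommGroup E] [NormedSpace ℝ E]

lemma exists_homeomorph_of_lipschitzWith [CompleteSpace E] {u : E → E} {c : ℝ≥0} (hc : c < 1)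
    (hu : LipschitzWith c u) :
    ∃ Φ : E ≃ₜ E, (∀ z, Φ z = z + u z) ∧ (∃ K, LipschitzWith K Φ) ∧
      ∃ K, LipschitzWith K Φ.symm := by
  set f : E → E := fun z => z + u z
  have hf : ApproximatesLinearOn f (ContinuousLinearEquiv.refl ℝ E : E →L[ℝ] E) univ c := by
    rw [ApproximatesLinearOn.approximatesLinearOn_iff_lipschitzOnWith, lipschitzOnWith_univ]
    convert hu using 1
    ext z
    simp [f]
  have hinv : Subsingleton E ∨
      c < ‖((ContinuousLinearEquiv.refl ℝ E).symm : E →L[ℝ] E)‖₊⁻¹ :=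
    (ContinuousLinearEquiv.refl ℝ E).subsingleton_or_nnnorm_symm_pos.imp_right fun hpos =>
      hc.trans_le ((one_le_inv₀ hpos).2 ContinuousLinearMap.norm_id_le)
  set Φ : E ≃ₜ E := hf.toHomeomorph f hinv
  have hanti : AntilipschitzWith (1 - c)⁻¹ Φ := by
    have := AntilipschitzWith.id.add_lipschitzWith hu (by simpa using hc)
    rwa [inv_one] at this
  exact ⟨Φ, fun z => rfl, ⟨_, LipschitzWith.id.add hu⟩,
    ⟨_, hanti.to_rightInverse Φ.apply_symm_apply⟩⟩

lemma lipschitzWith_smul_of_eq_zero {φ : E → ℝ} {h : E → E} {S : Set E} {K L B : ℝ≥0}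
    (hφ : LipschitzWith K φ) (hφ₁ : ∀ z, ‖φ z‖ ≤ 1) (hφ₀ : ∀ z ∉ S, φ z = 0)
    (hh : LipschitzWith L h) (hB : ∀ z ∈ S, ‖h z‖₊ ≤ B) :
    LipschitzWith (K * B + L) fun z => φ z • h z := by
  have key : ∀ x ∈ S, ∀ y, dist (φ x • h x) (φ y • h y) ≤ (K * B + L) * dist x y := by
    intro x hx y
    have h₁ : dist (φ x • h x) (φ y • h x) ≤ K * dist x y * B := by
      refine (dist_pair_smul (φ x) (φ y) (h x)).trans ?_
      rw [dist_zero_right]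
      gcongr
      exacts [hφ.dist_le_mul x y, hB x hx]
    have h₂ : dist (φ y • h x) (φ y • h y) ≤ 1 * (L * dist x y) := by
      rw [dist_smul₀]
      gcongr
      exacts [hφ₁ y, hh.dist_le_mul x y]
    linarith [dist_triangle (φ x • h x) (φ y • h x) (φ y • h y)]
  refine LipschitzWith.of_dist_le_mul fun x y => ?_
  push_cast
  by_cases hx : x ∈ S
  · exact key x hx y
  by_cases hy : y ∈ S
  · rw [dist_comm, dist_comm x]
    exact key y hy x
  · simp only [hφ₀ x hx, hφ₀ y hy, zero_smul, dist_self]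
    positivity

end Perturbation

section LexicographicOrder

lemma strictMono_toLex_castLE {N₁ N₂ : ℕ} (h : N₂ ≤ N₁) :
    StrictMono fun i : Fin N₁ ×ₗ Fin N₂ => toLex ((ofLex i).1, Fin.castLE h (ofLex i).2) :=
  fun _ _ hij => Prod.Lex.lt_iff.2 <| (Prod.Lex.lt_iff.1 hij).imp_right <|
    And.imp_right (Fin.castLE_lt_castLE_iff h).2

lemma exists_strictMono_of_card_le {ι κ : Type*} [LinearOrder ι] [LinearOrder κ] [Fintype ι]
    [Fintype κ] (h : Fintype.card ι ≤ Fintype.card κ) : ∃ g : ι → κ, StrictMono g :=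
  ⟨_, (Finset.univ.orderEmbOfCardLe h).strictMono.comp
    (Fintype.orderIsoFinOfCardEq ι rfl).symm.strictMono⟩

end LexicographicOrder

section Grid

open RealInnerProductSpace

variable {V : Type*} [NormedAddCommGroup V] [InnerProductSpace ℝ V] {M : ℕ} {e : Fin 2 → V}
  {a b : Fin M ×ₗ Fin M}

lemma exists_orthonormal_mem_mem_orthogonal {L : Submodule ℝ V} (hL : L ≠ ⊥) (hL' : Lᗮ ≠ ⊥) :
    ∃ e : Fin 2 → V, Orthonormal ℝ e ∧ e 0 ∈ L ∧ e 1 ∈ Lᗮ := by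
  obtain ⟨u, hu, hu₀⟩ := Submodule.exists_mem_ne_zero_of_ne_bot hL
  obtain ⟨v, hv, hv₀⟩ := Submodule.exists_mem_ne_zero_of_ne_bot hL'
  refine ⟨![(‖u‖⁻¹ : ℝ) • u, (‖v‖⁻¹ : ℝ) • v], ?_, L.smul_mem _ hu, Lᗮ.smul_mem _ hv⟩
  simp [orthonormal_vecCons_iff, norm_smul, hu₀, hv₀, inner_smul_left, inner_smul_right,
    L.inner_right_of_mem_orthogonal hu hv]

/-- The cone of vectors that are positive for the lexicographic order of the coordinates. -/
def lexCone (e : Fin 2 → V) : Set V := {v | 0 < ⟪e 0, v⟫ ∨ ⟪e 0, v⟫ = 0 ∧ 0 < ⟪e 1, v⟫}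

lemma zero_notMem_lexCone : 0 ∉ lexCone e := by
  simp [lexCone]

lemma convex_lexCone (e : Fin 2 → V) : Convex ℝ (lexCone e) := by
  refine convex_iff_forall_pos.2 ?_
  rintro v hv w hw a b ha hb -
  simp only [lexCone, mem_ofPred_eq, inner_add_right, inner_smul_right] at hv hw ⊢
  rcases hv with hv | ⟨hv, hv'⟩ <;> rcases hw with hw | ⟨hw, hw'⟩
  · exact .inl (by positivity)
  · exact .inl (by rw [hw]; positivity)
  · exact .inl (by rw [hv]; positivity)
  · exact .inr ⟨by simp [hv, hw], by positivity⟩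

/-- The points of a square grid of mesh `1 / (4 * M)` with `M` columns and rows, numbered column by
column. -/
noncomputable def gridPoint (e : Fin 2 → V) (a : Fin M ×ₗ Fin M) : V :=
  (4 * M : ℝ)⁻¹ • (((ofLex a).1 : ℝ) • e 0 + ((ofLex a).2 : ℝ) • e 1)

lemma inner_zero_gridPoint_sub (he : Orthonormal ℝ e) (a b : Fin M ×ₗ Fin M) :
    ⟪e 0, gridPoint e b - gridPoint e a⟫ =
      (4 * M : ℝ)⁻¹ * (((ofLex b).1 : ℝ) - (ofLex a).1) := by
  simp [gridPoint, inner_sub_right, inner_add_right, inner_smul_right, orthonormal_iff_ite.1 he,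
    he.1, mul_sub]

lemma inner_one_gridPoint_sub (he : Orthonormal ℝ e) (a b : Fin M ×ₗ Fin M) :
    ⟪e 1, gridPoint e b - gridPoint e a⟫ =
      (4 * M : ℝ)⁻¹ * (((ofLex b).2 : ℝ) - (ofLex a).2) := by
  simp [gridPoint, inner_sub_right, inner_add_right, inner_smul_right, orthonormal_iff_ite.1 he,
    he.1, mul_sub]

lemma gridPoint_sub_mem_lexCone (he : Orthonormal ℝ e) (hab : a < b) :
    gridPoint e b - gridPoint e a ∈ lexCone e := by
  have hM : 0 < (4 * M : ℝ)⁻¹ := by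
    have : 0 < M := (ofLex a).1.pos
    positivity
  simp only [lexCone, mem_ofPred_eq, inner_zero_gridPoint_sub he, inner_one_gridPoint_sub he]
  rcases Prod.Lex.lt_iff.1 hab with hlt | ⟨heq, hlt⟩
  · exact .inl (mul_pos hM (sub_pos.2 (by exact_mod_cast hlt)))
  · exact .inr ⟨by rw [heq, sub_self, mul_zero], mul_pos hM (sub_pos.2 (by exact_mod_cast hlt))⟩

lemma inv_le_dist_gridPoint (he : Orthonormal ℝ e) (hab : a ≠ b) :
    (4 * M : ℝ)⁻¹ ≤ dist (gridPoint e a) (gridPoint e b) := by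
  have hM : 0 ≤ (4 * M : ℝ)⁻¹ := by positivity
  have hone {i j : Fin M} (hij : i ≠ j) : 1 ≤ |(j : ℝ) - i| := by
    have hne : ((j : ℕ) : ℤ) - (i : ℕ) ≠ 0 :=
      sub_ne_zero.2 (by exact_mod_cast Fin.val_ne_of_ne hij.symm)
    exact_mod_cast Int.one_le_abs hne
  have hinner (k : Fin 2) : |⟪e k, gridPoint e b - gridPoint e a⟫| ≤
      dist (gridPoint e a) (gridPoint e b) := by
    simpa [he.1 k, dist_eq_norm'] using abs_real_inner_le_norm (e k) (gridPoint e b - gridPoint e a)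
  by_cases hfst : (ofLex a).1 = (ofLex b).1
  · have hsnd : (ofLex a).2 ≠ (ofLex b).2 := fun hsnd => hab (Prod.ext hfst hsnd)
    refine le_trans ?_ (hinner 1)
    rw [inner_one_gridPoint_sub he, abs_mul, abs_of_nonneg hM]
    exact le_mul_of_one_le_right hM (hone hsnd)
  · refine le_trans ?_ (hinner 0)
    rw [inner_zero_gridPoint_sub he, abs_mul, abs_of_nonneg hM]
    exact le_mul_of_one_le_right hM (hone hfst)

lemma norm_gridPoint_le (he : ∀ k, ‖e k‖ = 1) (a : Fin M ×ₗ Fin M) :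
    ‖gridPoint e a‖ ≤ 1 / 2 := by
  have hM : (0 : ℝ) < M := by exact_mod_cast (ofLex a).1.pos
  have hle (i : Fin M) : (i : ℝ) ≤ M := by exact_mod_cast i.2.le
  calc ‖gridPoint e a‖ ≤ (4 * M : ℝ)⁻¹ * (((ofLex a).1 : ℝ) + (ofLex a).2) := by
        rw [gridPoint, norm_smul, Real.norm_of_nonneg (by positivity)]
        gcongr
        refine (norm_add_le _ _).trans_eq ?_
        simp [norm_smul, he]
    _ ≤ (4 * M : ℝ)⁻¹ * (M + M) := by
      gcongr (4 * M : ℝ)⁻¹ * (?_ + ?_) <;> exact hle _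
    _ = 1 / 2 := by field_simp; norm_num

end Grid

/-- A disjoint family of closed balls of a common radius, contained in the open ball of radius
`3 / 4`. It encodes the iterated function system of the similarities `BallPacking.chart` mapping
the closed unit ball onto the balls of the family. -/
@[ext]
structure BallPacking (ι V : Type*) [NormedAddCommGroup V] where
  center : ι → V
  radius : ℝ
  radius_pos : 0 < radius
  two_mul_radius_lt_dist : Pairwise fun i j => 2 * radius < dist (center i) (center j)
  norm_center_add_radius_lt : ∀ i, ‖center i‖ + radius < 3 / 4

namespace BallPacking

variable {ι V : Type*} [NormedAddCommGroup V]

section Ball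

variable (P : BallPacking ι V) {i j : ι} {x y z : V}

/-- The `i`-th ball of the packing. -/
def ball (i : ι) : Set V := closedBall (P.center i) P.radius

variable {P}

lemma eq_of_mem_ball (hi : z ∈ P.ball i) (hj : z ∈ P.ball j) : i = j := by
  by_contra hij
  have := dist_triangle_left (P.center i) (P.center j) z
  linarith [P.two_mul_radius_lt_dist hij, mem_closedBall.1 hi, mem_closedBall.1 hj]

lemma dist_le_of_mem_ball (hx : x ∈ P.ball i) (hy : y ∈ P.ball i) : dist x y ≤ 2 * P.radius := by
  linarith [dist_triangle_right x y (P.center i), mem_closedBall.1 hx, mem_closedBall.1 hy]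

lemma norm_lt_of_mem_ball (hi : z ∈ P.ball i) : ‖z‖ < 3 / 4 := by
  linarith [P.norm_center_add_radius_lt i, norm_le_norm_add_norm_sub' z (P.center i),
    mem_closedBall_iff_norm.1 hi]

lemma notMem_ball_of_le_norm (hz : 3 / 4 ≤ ‖z‖) (i : ι) : z ∉ P.ball i :=
  fun hi => (norm_lt_of_mem_ball hi).not_ge hz

variable (P)

lemma radius_lt_one [Nonempty ι] : P.radius < 1 := by
  obtain ⟨i⟩ := ‹Nonempty ι›
  linarith [P.norm_center_add_radius_lt i, norm_nonneg (P.center i)]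

lemma exists_margin [Finite ι] : ∃ η > 0,
    (Pairwise fun i j => 2 * P.radius + η ≤ dist (P.center i) (P.center j)) ∧
      ∀ i, ‖P.center i‖ + P.radius + η ≤ 3 / 4 := by
  have hlim (a : ℝ) : Tendsto (fun η => a + η) (𝓝[>] 0) (𝓝 a) :=
    tendsto_nhdsWithin_of_tendsto_nhds (by simpa using (continuous_const_add a).tendsto 0)
  have hsep : ∀ᶠ η in 𝓝[>] (0 : ℝ), Pairwise fun i j =>
      2 * P.radius + η ≤ dist (P.center i) (P.center j) :=
    eventually_all.2 fun i => eventually_all.2 fun j => eventually_imp_distrib_left.2 fun hij =>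
      (hlim _).eventually_le_const (P.two_mul_radius_lt_dist hij)
  have hnorm : ∀ᶠ η in 𝓝[>] (0 : ℝ), ∀ i, ‖P.center i‖ + P.radius + η ≤ 3 / 4 :=
    eventually_all.2 fun i => (hlim _).eventually_le_const (P.norm_center_add_radius_lt i)
  obtain ⟨η, ⟨hsep, hnorm⟩, hη⟩ := ((hsep.and hnorm).and self_mem_nhdsWithin).exists
  exact ⟨η, hη, hsep, hnorm⟩

end Ball

section Chart

variable [NormedSpace ℝ V] (P : BallPacking ι V) {i : ι} {v x y z : V}

/-- The similarity `v ↦ center i + radius • v` of the iterated function system. -/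
noncomputable def chart (i : ι) : V ≃ₜ V :=
  (Homeomorph.smulOfNeZero P.radius P.radius_pos.ne').trans (Homeomorph.addLeft (P.center i))

lemma chart_apply (i : ι) (v : V) : P.chart i v = P.center i + P.radius • v := rfl

lemma dist_chart (i : ι) (v w : V) : dist (P.chart i v) (P.chart i w) = P.radius * dist v w := by
  rw [chart_apply, chart_apply, dist_add_left, dist_smul₀, Real.norm_of_nonneg P.radius_pos.le]

lemma dist_chart_center (i : ι) (v : V) : dist (P.chart i v) (P.center i) = P.radius * ‖v‖ := by
  simpa [chart_apply] using P.dist_chart i v 0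

lemma chart_mem_ball_iff : P.chart i v ∈ P.ball i ↔ ‖v‖ ≤ 1 := by
  rw [ball, mem_closedBall, dist_chart_center, mul_le_iff_le_one_right P.radius_pos]

variable {P}

lemma mem_ball_iff : z ∈ P.ball i ↔ ∃ v, ‖v‖ ≤ 1 ∧ P.chart i v = z := by
  constructor
  · intro hz
    have hchart := (P.chart i).apply_symm_apply z
    exact ⟨(P.chart i).symm z, P.chart_mem_ball_iff.1 (hchart.symm ▸ hz), hchart⟩
  · rintro ⟨v, hv, rfl⟩
    exact P.chart_mem_ball_iff.2 hv

lemma radius_div_four_le_dist_chart (hv : ‖v‖ ≤ 3 / 4) (hy : y ∉ P.ball i) :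
    P.radius / 4 ≤ dist (P.chart i v) y := by
  have hfar : P.radius < dist y (P.center i) := not_le.1 hy
  have hnear : dist (P.chart i v) (P.center i) ≤ P.radius * (3 / 4) := by
    rw [dist_chart_center]
    exact mul_le_mul_of_nonneg_left hv P.radius_pos.le
  linarith [dist_triangle_left y (P.center i) (P.chart i v)]

/-- Two distinct points lie in a common ball of only finitely many generations, so a relation that
is inherited by the next generation only has to be checked on points without a common ball. -/
lemma dist_induction [Nonempty ι] {R : V → V → Prop}
    (base : ∀ x y, (∀ i, x ∈ P.ball i → y ∉ P.ball i) → R x y)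
    (chart : ∀ i v w, ‖v‖ ≤ 1 → ‖w‖ ≤ 1 → R v w → R (P.chart i v) (P.chart i w)) (hxy : x ≠ y) :
    R x y := by
  have key : ∀ n : ℕ, ∀ x y, 2 * P.radius ^ n < dist x y → R x y := by
    intro n
    induction n with
    | zero =>
      intro x y hdist
      refine base x y fun i hx hy => ?_
      linarith [dist_le_of_mem_ball hx hy, P.radius_lt_one, pow_zero P.radius]
    | succ n ih =>
      intro x y hdist
      by_cases hcommon : ∀ i, x ∈ P.ball i → y ∉ P.ball i
      · exact base x y hcommon
      push Not at hcommon
      obtain ⟨i, hx, hy⟩ := hcommon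
      obtain ⟨v, hv, rfl⟩ := mem_ball_iff.1 hx
      obtain ⟨w, hw, rfl⟩ := mem_ball_iff.1 hy
      refine chart i v w hv hw (ih v w ?_)
      rw [dist_chart, pow_succ', mul_left_comm] at hdist
      exact lt_of_mul_lt_mul_left hdist P.radius_pos.le
  have hlim : Tendsto (fun n : ℕ => 2 * P.radius ^ n) atTop (𝓝 0) := by
    simpa using (tendsto_pow_atTop_nhds_zero_of_lt_one P.radius_pos.le P.radius_lt_one).const_mul 2
  obtain ⟨n, hn⟩ := (hlim.eventually_lt_const (dist_pos.2 hxy)).exists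
  exact key n x y hn

end Chart

section Transport

variable [NormedSpace ℝ V]

/-- A bilipschitz homeomorphism of `V`, the identity off the open ball of radius `3 / 4`, which
maps every ball of `P` onto the corresponding ball of `Q` by the similarity respecting the
charts. -/
structure Transport (P Q : BallPacking ι V) where
  map : V ≃ₜ V
  exists_lipschitzWith : ∃ K, LipschitzWith K map
  exists_lipschitzWith_symm : ∃ K, LipschitzWith K map.symm
  map_eq_self : ∀ z, 3 / 4 ≤ ‖z‖ → map z = z
  map_chart : ∀ i v, ‖v‖ ≤ 1 → map (P.chart i v) = Q.chart i v

namespace Transport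

variable {P Q R : BallPacking ι V} {i : ι} {z : V}

/-- The inverse of a transport. -/
def symm (T : P.Transport Q) : Q.Transport P where
  map := T.map.symm
  exists_lipschitzWith := T.exists_lipschitzWith_symm
  exists_lipschitzWith_symm := T.exists_lipschitzWith
  map_eq_self z hz := T.map.symm_apply_eq.2 (T.map_eq_self z hz).symm
  map_chart i v hv := T.map.symm_apply_eq.2 (T.map_chart i v hv).symm

/-- The composition of two transports. -/
def trans (T : P.Transport Q) (S : Q.Transport R) : P.Transport R where
  map := T.map.trans S.map
  exists_lipschitzWith :=
    let ⟨_, hT⟩ := T.exists_lipschitzWith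
    let ⟨_, hS⟩ := S.exists_lipschitzWith
    ⟨_, hS.comp hT⟩
  exists_lipschitzWith_symm :=
    let ⟨_, hT⟩ := T.exists_lipschitzWith_symm
    let ⟨_, hS⟩ := S.exists_lipschitzWith_symm
    ⟨_, hT.comp hS⟩
  map_eq_self z hz := by
    rw [Homeomorph.trans_apply, T.map_eq_self z hz, S.map_eq_self z hz]
  map_chart i v hv := by
    rw [Homeomorph.trans_apply, T.map_chart i v hv, S.map_chart i v hv]

lemma map_mem_ball (T : P.Transport Q) (hz : z ∈ P.ball i) : T.map z ∈ Q.ball i := by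
  obtain ⟨v, hv, rfl⟩ := mem_ball_iff.1 hz
  exact T.map_chart i v hv ▸ Q.chart_mem_ball_iff.2 hv

lemma map_mem_ball_iff (T : P.Transport Q) : T.map z ∈ Q.ball i ↔ z ∈ P.ball i :=
  ⟨fun hz => T.map.symm_apply_apply z ▸ T.symm.map_mem_ball hz, T.map_mem_ball⟩

lemma norm_map_le_max (T : P.Transport Q) (z : V) : ‖T.map z‖ ≤ max (3 / 4) ‖z‖ := by
  rcases le_total (3 / 4) ‖T.map z‖ with h | h
  · rw [T.map.injective (T.map_eq_self _ h)]
    exact le_max_right _ _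
  · exact le_max_of_le_left h

end Transport

end Transport

section Deformation

variable [NormedSpace ℝ V] (P : BallPacking ι V)

/-- Packings are close when their centers and radii are. -/
instance : TopologicalSpace (BallPacking ι V) :=
  .induced (fun P => (P.center, P.radius)) inferInstance

/-- The sum of the displacements `z ↦ Q.chart i ((P.chart i).symm z) - z`, each cut off outside the
`η`-neighborhood of the `i`-th ball. -/
noncomputable def displacement [Fintype ι] (P Q : BallPacking ι V) {η : ℝ} (hη : 0 < η) (z : V) :
    V :=
  ∑ i, (thickenedIndicator hη (P.ball i) z : ℝ) • (Q.chart i ((P.chart i).symm z) - z)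

variable {P}

lemma chart_chart_symm_sub (Q : BallPacking ι V) (i : ι) (z : V) :
    Q.chart i ((P.chart i).symm z) - z =
      (Q.center i - P.center i) + (Q.radius / P.radius - 1) • (z - P.center i) := by
  obtain ⟨v, rfl⟩ := (P.chart i).surjective z
  rw [Homeomorph.symm_apply_apply, chart_apply, chart_apply, add_sub_cancel_left, smul_smul,
    sub_one_mul, div_mul_cancel₀ _ P.radius_pos.ne', sub_smul]
  abel

lemma thickening_ball {η : ℝ} (hη : 0 < η) (i : ι) :
    thickening η (P.ball i) = Metric.ball (P.center i) (η + P.radius) :=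
  thickening_closedBall hη P.radius_pos.le _

lemma displacement_eq_zero [Fintype ι] (Q : BallPacking ι V) {η : ℝ} (hη : 0 < η)
    (hmargin : ∀ i, ‖P.center i‖ + P.radius + η ≤ 3 / 4) {z : V} (hz : 3 / 4 ≤ ‖z‖) :
    P.displacement Q hη z = 0 := by
  refine Finset.sum_eq_zero fun i _ => ?_
  rw [thickenedIndicator_zero hη, NNReal.coe_zero, zero_smul]
  rw [thickening_ball hη, mem_ball_iff_norm]
  linarith [hmargin i, norm_le_norm_add_norm_sub' z (P.center i)]

lemma displacement_chart [Fintype ι] (Q : BallPacking ι V) {η : ℝ} (hη : 0 < η)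
    (hmargin : Pairwise fun i j => 2 * P.radius + η ≤ dist (P.center i) (P.center j)) (i : ι)
    {v : V} (hv : ‖v‖ ≤ 1) : P.displacement Q hη (P.chart i v) = Q.chart i v - P.chart i v := by
  have hmem : P.chart i v ∈ P.ball i := P.chart_mem_ball_iff.2 hv
  rw [displacement, Finset.sum_eq_single_of_mem i (Finset.mem_univ i),
    thickenedIndicator_one hη _ hmem, NNReal.coe_one, one_smul, Homeomorph.symm_apply_apply]
  intro j _ hji
  rw [thickenedIndicator_zero hη, NNReal.coe_zero, zero_smul]
  rw [thickening_ball hη, Metric.mem_ball]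
  linarith [hmargin hji.symm, mem_closedBall.1 hmem,
    dist_triangle_left (P.center i) (P.center j) (P.chart i v)]

lemma lipschitzWith_displacement [Fintype ι] (Q : BallPacking ι V) {η : ℝ} (hη : 0 < η) :
    LipschitzWith (∑ i, (η.toNNReal⁻¹ * (‖Q.center i - P.center i‖₊ +
      ‖Q.radius / P.radius - 1‖₊ * (η + P.radius).toNNReal) + ‖Q.radius / P.radius - 1‖₊))
      (P.displacement Q hη) := by
  have key (i : ι) := lipschitzWith_smul_of_eq_zero (S := thickening η (P.ball i))
    (φ := fun z => thickenedIndicator hη (P.ball i) z)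
    (h := fun z => Q.chart i ((P.chart i).symm z) - z) (L := ‖Q.radius / P.radius - 1‖₊)
    (B := ‖Q.center i - P.center i‖₊ + ‖Q.radius / P.radius - 1‖₊ * (η + P.radius).toNNReal)
    (lipschitzWith_thickenedIndicator hη _)
    (fun z => by simpa using thickenedIndicator_le_one hη (P.ball i) z)
    (fun z hz => by rw [thickenedIndicator_zero hη _ hz, NNReal.coe_zero])
    (LipschitzWith.of_dist_le_mul fun x y => by
      simp only [chart_chart_symm_sub, dist_add_left, dist_smul₀, dist_sub_right, coe_nnnorm,
        le_refl])
    (fun z hz => by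
      rw [thickening_ball hη, mem_ball_iff_norm] at hz
      rw [chart_chart_symm_sub]
      refine (nnnorm_add_le _ _).trans ?_
      rw [nnnorm_smul]
      gcongr
      exact NNReal.le_toNNReal_of_coe_le hz.le)
  refine LipschitzWith.of_dist_le_mul fun x y => ?_
  rw [NNReal.coe_sum, Finset.sum_mul]
  exact dist_sum_sum_le_of_le _ fun i _ => (key i).dist_le_mul x y

lemma eventually_nonempty_transport [CompleteSpace V] [Finite ι] (P : BallPacking ι V) :
    ∀ᶠ Q in 𝓝 P, Nonempty (P.Transport Q) := by
  cases nonempty_fintype ι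
  obtain ⟨η, hη, hsep, hnorm⟩ := P.exists_margin
  let c (p : (ι → V) × ℝ) : ℝ≥0 := ∑ i, (η.toNNReal⁻¹ * (‖p.1 i - P.center i‖₊ +
    ‖p.2 / P.radius - 1‖₊ * (η + P.radius).toNNReal) + ‖p.2 / P.radius - 1‖₊)
  have hc : Tendsto (fun Q : BallPacking ι V => c (Q.center, Q.radius)) (𝓝 P) (𝓝 0) := by
    have : Continuous c := by fun_prop
    simpa [c, Function.comp_def, div_self P.radius_pos.ne'] using
      (this.comp continuous_induced_dom).tendsto P
  filter_upwards [hc.eventually_lt_const one_pos] with Q hQ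
  obtain ⟨Φ, hΦ, hlip, hlip'⟩ :=
    exists_homeomorph_of_lipschitzWith hQ (P.lipschitzWith_displacement Q hη)
  refine ⟨⟨Φ, hlip, hlip', fun z hz => ?_, fun i v hv => ?_⟩⟩
  · rw [hΦ, P.displacement_eq_zero Q hη hnorm hz, add_zero]
  · rw [hΦ, P.displacement_chart Q hη hsep i hv, add_sub_cancel]

end Deformation

section Joined

variable [NormedSpace ℝ V] {P Q : BallPacking ι V}

lemma nonempty_transport_of_joined [CompleteSpace V] [Finite ι] (h : Joined P Q) :
    Nonempty (P.Transport Q) := by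
  obtain ⟨γ⟩ := h
  have hlocal (s : unitInterval) : ∀ᶠ t in 𝓝 s,
      Nonempty ((γ s).Transport (γ t)) ∧ Nonempty ((γ t).Transport (γ s)) := by
    filter_upwards [(γ.continuous.tendsto s).eventually (γ s).eventually_nonempty_transport]
    rintro t ⟨T⟩
    exact ⟨⟨T⟩, ⟨T.symm⟩⟩
  simpa using PreconnectedSpace.induction₂' (fun s t => Nonempty ((γ s).Transport (γ t))) hlocal
    ⟨fun _ _ _ ⟨T⟩ ⟨S⟩ => ⟨T.trans S⟩⟩ 0 1

open AffineMap in
lemma joined_of_forall_two_mul_lineMap_lt_dist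
    (h : ∀ t ∈ Icc (0 : ℝ) 1, Pairwise fun i j => 2 * lineMap P.radius Q.radius t <
      dist (lineMap (P.center i) (Q.center i) t) (lineMap (P.center j) (Q.center j) t)) :
    Joined P Q := by
  have hradius (t : unitInterval) : 0 < lineMap P.radius Q.radius (t : ℝ) :=
    (convex_Ioi (0 : ℝ)).lineMap_mem P.radius_pos Q.radius_pos t.2
  have hnorm (t : unitInterval) (i : ι) :
      ‖lineMap (P.center i) (Q.center i) (t : ℝ)‖ + lineMap P.radius Q.radius (t : ℝ) < 3 / 4 := by
    have hmem : lineMap (‖P.center i‖ + P.radius) (‖Q.center i‖ + Q.radius) (t : ℝ) < 3 / 4 :=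
      (convex_Iio (3 / 4 : ℝ)).lineMap_mem (P.norm_center_add_radius_lt i)
        (Q.norm_center_add_radius_lt i) t.2
    have hconv : ‖lineMap (P.center i) (Q.center i) (t : ℝ)‖ ≤
        (1 - t) * ‖P.center i‖ + t * ‖Q.center i‖ := by
      rw [lineMap_apply_module]
      refine (norm_add_le _ _).trans_eq ?_
      rw [norm_smul, norm_smul, Real.norm_of_nonneg (sub_nonneg.2 t.2.2),
        Real.norm_of_nonneg t.2.1]
    simp only [lineMap_apply_module, smul_eq_mul] at hmem ⊢ hconv
    linarith
  let γ (t : unitInterval) : BallPacking ι V :=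
    ⟨fun i => lineMap (P.center i) (Q.center i) (t : ℝ), lineMap P.radius Q.radius (t : ℝ),
      hradius t, h t t.2, hnorm t⟩
  have hγ : Continuous γ := continuous_induced_rng.2 <| .prodMk
    (continuous_pi fun i => lineMap_continuous.comp continuous_subtype_val)
    (lineMap_continuous.comp continuous_subtype_val)
  exact ⟨⟨γ, hγ⟩, by ext <;> simp [γ], by ext <;> simp [γ]⟩

/-- The packing with the same centers and a smaller radius. -/
def shrink (P : BallPacking ι V) {ε : ℝ} (hε : 0 < ε) (h : ε ≤ P.radius) : BallPacking ι V where
  center := P.center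
  radius := ε
  radius_pos := hε
  two_mul_radius_lt_dist i j hij := by linarith [P.two_mul_radius_lt_dist hij]
  norm_center_add_radius_lt i := by linarith [P.norm_center_add_radius_lt i]

lemma joined_shrink (P : BallPacking ι V) {ε : ℝ} (hε : 0 < ε) (h : ε ≤ P.radius) :
    Joined P (P.shrink hε h) := by
  refine joined_of_forall_two_mul_lineMap_lt_dist fun t ht i j hij => ?_
  have hle : AffineMap.lineMap P.radius ε t ≤ P.radius :=
    (convex_Iic P.radius).lineMap_mem (mem_Iic.2 le_rfl) h ht
  simp only [shrink, AffineMap.lineMap_same_apply]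
  linarith [P.two_mul_radius_lt_dist hij]

lemma joined_of_notMem_segment [Finite ι]
    (h : Pairwise fun i j => 0 ∉ segment ℝ (P.center i - P.center j) (Q.center i - Q.center j)) :
    Joined P Q := by
  have hsmall (a : ℝ) (ha : 0 < a) : ∀ᶠ ε in 𝓝[>] (0 : ℝ), 2 * ε < a :=
    mem_nhdsWithin_of_mem_nhds <| ((continuous_const_mul 2).tendsto' 0 0 (mul_zero 2)
      |>.eventually_lt_const ha)
  have hseg : ∀ᶠ ε in 𝓝[>] (0 : ℝ), ∀ i j, i ≠ j → 2 * ε <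
      infDist 0 (segment ℝ (P.center i - P.center j) (Q.center i - Q.center j)) := by
    refine eventually_all.2 fun i => eventually_all.2 fun j => eventually_imp_distrib_left.2
      fun hij => hsmall _ ?_
    refine (IsClosed.notMem_iff_infDist_pos ?_ ⟨_, left_mem_segment ..⟩).1 (h hij)
    rw [segment_eq_image_lineMap]
    exact (isCompact_Icc.image AffineMap.lineMap_continuous).isClosed
  obtain ⟨ε, ⟨⟨hPε, hQε⟩, hε⟩, hε₀ : 0 < ε⟩ := (((hsmall _ P.radius_pos).and
    (hsmall _ Q.radius_pos)).and hseg |>.and self_mem_nhdsWithin).exists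
  have hmid : Joined (P.shrink hε₀ (by linarith)) (Q.shrink hε₀ (by linarith)) := by
    refine joined_of_forall_two_mul_lineMap_lt_dist fun t ht i j hij => ?_
    have hmem := lineMap_mem_segment ℝ (P.center i - P.center j)
      (Q.center i - Q.center j) ht
    simp only [shrink, AffineMap.lineMap_same_apply, dist_eq_norm, ← vsub_eq_sub,
      AffineMap.lineMap_vsub_lineMap] at hmem ⊢
    exact (hε i j hij).trans_le ((infDist_le_dist_of_mem hmem).trans_eq (dist_zero_left _))
  exact (P.joined_shrink hε₀ _).trans (hmid.trans (Q.joined_shrink hε₀ _).symm)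

lemma joined_of_convex [LinearOrder ι] [Finite ι] {S : Set V} (hS : Convex ℝ S) (h0 : 0 ∉ S)
    (hP : ∀ i j, i < j → P.center j - P.center i ∈ S)
    (hQ : ∀ i j, i < j → Q.center j - Q.center i ∈ S) : Joined P Q := by
  refine joined_of_notMem_segment fun i j hij hmem => h0 ?_
  rcases hij.lt_or_gt with hlt | hgt
  · refine neg_zero (G := V) ▸ hS.neg.segment_subset ?_ ?_ hmem
    · simpa using hP i j hlt
    · simpa using hQ i j hlt
  · exact hS.segment_subset (hP j i hgt) (hQ j i hgt) hmem

end Joined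

section Gluing

open BoundedContinuousFunction

/-- The closed set of displacements supported in the closed ball of radius `3 / 4`. -/
def vanishingOutside (V : Type*) [NormedAddCommGroup V] : Set (V →ᵇ V) :=
  {g | ∀ z, 3 / 4 ≤ ‖z‖ → g z = 0}

lemma isClosed_vanishingOutside : IsClosed (vanishingOutside V) := by
  simp only [vanishingOutside, ofPred_forall]
  exact isClosed_iInter fun z => isClosed_iInter fun _ =>
    isClosed_eq (continuous_eval_const z) continuous_const

variable [NormedSpace ℝ V] {P : BallPacking ι V} {i : ι} {v z : V}

lemma one_lt_norm_chart_symm (hz : z ∉ P.ball i) : 1 < ‖(P.chart i).symm z‖ := by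
  rwa [← not_le, ← P.chart_mem_ball_iff, Homeomorph.apply_symm_apply]

variable [Fintype ι]

/-- A copy of `g`, rescaled in the argument only, in each ball of the packing. -/
noncomputable def copies (P : BallPacking ι V) (g : V →ᵇ V) : V →ᵇ V :=
  ∑ i, g.compContinuous (P.chart i).symm

lemma copies_apply (g : V →ᵇ V) (z : V) : P.copies g z = ∑ i, g ((P.chart i).symm z) := by
  simp [copies]

lemma copies_sub (g g' : V →ᵇ V) : P.copies (g - g') = P.copies g - P.copies g' := by
  ext z
  simp [copies_apply]

lemma copies_eq_zero {g : V →ᵇ V} (hg : g ∈ vanishingOutside V) (hz : ∀ i, z ∉ P.ball i) :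
    P.copies g z = 0 := by
  rw [copies_apply]
  exact Finset.sum_eq_zero fun i _ => hg _ (by linarith [one_lt_norm_chart_symm (hz i)])

lemma copies_chart {g : V →ᵇ V} (hg : g ∈ vanishingOutside V) (i : ι) (hv : ‖v‖ ≤ 1) :
    P.copies g (P.chart i v) = g v := by
  rw [copies_apply, Finset.sum_eq_single_of_mem i (Finset.mem_univ i),
    Homeomorph.symm_apply_apply]
  intro j _ hji
  have hj : P.chart i v ∉ P.ball j := fun hj =>
    hji (eq_of_mem_ball hj (P.chart_mem_ball_iff.2 hv))
  exact hg _ (by linarith [one_lt_norm_chart_symm hj])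

lemma norm_copies_le {g : V →ᵇ V} (hg : g ∈ vanishingOutside V) : ‖P.copies g‖ ≤ ‖g‖ := by
  refine (norm_le (norm_nonneg g)).2 fun z => ?_
  by_cases hz : ∀ i, z ∉ P.ball i
  · rw [copies_eq_zero hg hz, norm_zero]
    exact norm_nonneg g
  · push Not at hz
    obtain ⟨i, hi⟩ := hz
    obtain ⟨v, hv, rfl⟩ := mem_ball_iff.1 hi
    exact copies_chart hg i hv ▸ g.norm_coe_le_norm v

end Gluing

section Conjugacy

variable [NormedSpace ℝ V] {P Q : BallPacking ι V} {T : P.Transport Q} {f g : V → V} {i : ι}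
  {v z : V}

/-- `f` conjugates the iterated function system of `P` to that of `Q`, and agrees with `T` off the
balls of `P`: it is obtained by repeating `T` at all scales. -/
structure Transport.IsConjugacy (T : P.Transport Q) (f : V → V) : Prop where
  map_chart : ∀ i v, ‖v‖ ≤ 1 → f (P.chart i v) = Q.chart i (f v)
  map_eq : ∀ z, (∀ i, z ∉ P.ball i) → f z = T.map z
  exists_dist_le : ∃ B, ∀ z, dist (f z) z ≤ B

lemma Transport.norm_map_sub_le (T : P.Transport Q) (z : V) : ‖T.map z - z‖ ≤ 3 / 2 := by
  rcases le_total (3 / 4) ‖z‖ with hz | hz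
  · norm_num [T.map_eq_self z hz]
  · linarith [norm_sub_le (T.map z) z, T.norm_map_le_max z, max_eq_left hz]

open BoundedContinuousFunction in
/-- The conjugacy is `z ↦ z + g z`, where the displacement `g` is the fixed point of
`g ↦ (T - id) + Q.radius • copies g`. -/
lemma Transport.exists_continuous_isConjugacy [CompleteSpace V] [Finite ι] [Nonempty ι]
    (T : P.Transport Q) : ∃ f, Continuous f ∧ T.IsConjugacy f := by
  cases nonempty_fintype ι
  let d : V →ᵇ V := ofNormedAddCommGroup (fun z => T.map z - z)
    (T.map.continuous.sub continuous_id) _ T.norm_map_sub_le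
  let F (g : V →ᵇ V) : V →ᵇ V := d + Q.radius • P.copies g
  have hF : MapsTo F (vanishingOutside V) (vanishingOutside V) := fun g hg z hz => by
    simp [F, d, T.map_eq_self z hz, copies_eq_zero hg (notMem_ball_of_le_norm hz)]
  have hcontr : ContractingWith Q.radius.toNNReal hF.restrict := by
    refine ⟨Real.toNNReal_lt_one.2 Q.radius_lt_one, LipschitzWith.of_dist_le_mul ?_⟩
    rintro ⟨g, hg⟩ ⟨g', hg'⟩
    have hsub : g - g' ∈ vanishingOutside V := fun z hz => by simp [hg z hz, hg' z hz]
    simp only [Subtype.dist_eq, MapsTo.val_restrict_apply, F, dist_add_left, dist_smul₀]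
    rw [Real.coe_toNNReal _ Q.radius_pos.le, Real.norm_of_nonneg Q.radius_pos.le, dist_eq_norm,
      dist_eq_norm, ← copies_sub]
    exact mul_le_mul_of_nonneg_left (norm_copies_le hsub) Q.radius_pos.le
  obtain ⟨g, hg, hfix, -⟩ := hcontr.exists_fixedPoint' isClosed_vanishingOutside.isComplete hF
    (x := 0) (fun _ _ => rfl) (edist_ne_top _ _)
  have hgz (z : V) : z + g z = T.map z + Q.radius • P.copies g z := by
    have hfix_z : T.map z - z + Q.radius • P.copies g z = g z := DFunLike.congr_fun hfix z
    rw [← hfix_z, ← add_assoc, add_sub_cancel]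
  refine ⟨fun z => z + g z, continuous_id.add g.continuous, fun i v hv => ?_, fun z hz => ?_,
    ‖g‖, fun z => ?_⟩
  · rw [hgz, T.map_chart i v hv, copies_chart hg i hv, chart_apply, chart_apply, smul_add,
      add_assoc]
  · rw [hgz, copies_eq_zero hg hz, smul_zero, add_zero]
  · simpa using g.norm_coe_le_norm z

namespace Transport.IsConjugacy

lemma norm_map_le_one [Nonempty ι] (hf : T.IsConjugacy f) (hv : ‖v‖ ≤ 1) : ‖f v‖ ≤ 1 := by
  obtain ⟨B, hB⟩ := hf.exists_dist_le
  have key := nonpos_of_forall_exists_le_mul (e := fun z => ‖f z‖ - max 1 ‖z‖) (B := B)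
    Q.radius_pos.le Q.radius_lt_one (fun z => ?_) (fun z => ?_) v
  · simpa [hv] using key
  · linarith [norm_le_norm_add_norm_sub' (f z) z, dist_eq_norm (f z) z, hB z, le_max_right 1 ‖z‖]
  by_cases hz : ∀ i, z ∉ P.ball i
  · left
    rw [hf.map_eq z hz, sub_nonpos]
    exact (T.norm_map_le_max z).trans (max_le_max_right _ (by norm_num))
  · push Not at hz
    obtain ⟨i, hi⟩ := hz
    obtain ⟨w, hw, rfl⟩ := mem_ball_iff.1 hi
    refine .inr ⟨w, ?_⟩
    have hle : ‖f (P.chart i w)‖ ≤ ‖Q.center i‖ + Q.radius * ‖f w‖ := by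
      rw [hf.map_chart i w hw, chart_apply]
      refine (norm_add_le _ _).trans_eq ?_
      rw [norm_smul, Real.norm_of_nonneg Q.radius_pos.le]
    rw [max_eq_left hw]
    linarith [Q.norm_center_add_radius_lt i, le_max_left 1 ‖P.chart i w‖]

lemma map_mem_ball [Nonempty ι] (hf : T.IsConjugacy f) (hz : z ∈ P.ball i) : f z ∈ Q.ball i := by
  obtain ⟨v, hv, rfl⟩ := mem_ball_iff.1 hz
  exact hf.map_chart i v hv ▸ Q.chart_mem_ball_iff.2 (hf.norm_map_le_one hv)

lemma leftInverse [Nonempty ι] (hf : T.IsConjugacy f) (hg : T.symm.IsConjugacy g) :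
    Function.LeftInverse g f := by
  obtain ⟨B, hB⟩ := hf.exists_dist_le
  obtain ⟨B', hB'⟩ := hg.exists_dist_le
  refine fun z => dist_le_zero.1 <| nonpos_of_forall_exists_le_mul
    (e := fun z => dist (g (f z)) z) (B := B' + B) P.radius_pos.le P.radius_lt_one
    (fun z => ?_) (fun z => ?_) z
  · exact (dist_triangle _ _ _).trans (add_le_add (hB' _) (hB z))
  by_cases hz : ∀ i, z ∉ P.ball i
  · left
    have hTz (i : ι) : T.map z ∉ Q.ball i := fun hi => hz i (T.map_mem_ball_iff.1 hi)
    rw [hf.map_eq z hz, hg.map_eq _ hTz, dist_le_zero]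
    exact T.map.symm_apply_apply z
  · push Not at hz
    obtain ⟨i, hi⟩ := hz
    obtain ⟨v, hv, rfl⟩ := mem_ball_iff.1 hi
    refine .inr ⟨v, ?_⟩
    rw [hf.map_chart i v hv, hg.map_chart i _ (hf.norm_map_le_one hv), dist_chart]

end Transport.IsConjugacy

lemma Transport.exists_homeomorph_isConjugacy [CompleteSpace V] [Finite ι] [Nonempty ι]
    (T : P.Transport Q) : ∃ f : V ≃ₜ V, T.IsConjugacy f ∧ T.symm.IsConjugacy f.symm := by
  obtain ⟨f, hf_cont, hf⟩ := T.exists_continuous_isConjugacy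
  obtain ⟨g, hg_cont, hg⟩ := T.symm.exists_continuous_isConjugacy
  exact ⟨⟨⟨f, g, hf.leftInverse hg, hg.leftInverse hf⟩, hf_cont, hg_cont⟩, hf, hg⟩

end Conjugacy

section Distortion

variable [NormedSpace ℝ V] [Nonempty ι] {P Q : BallPacking ι V} {T : P.Transport Q} {x y : V}

namespace Transport.IsConjugacy

lemma dist_transport_le {f : V → V} (hf : T.IsConjugacy f)
    (hxy : ∀ i, x ∈ P.ball i → y ∉ P.ball i) :
    dist (f x) (T.map x) ≤ 8 * (Q.radius / P.radius) * dist x y := by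
  have hP := P.radius_pos
  have hQ := Q.radius_pos
  by_cases hx : ∀ i, x ∉ P.ball i
  · rw [hf.map_eq x hx, dist_self]
    positivity
  push Not at hx
  obtain ⟨i, hi⟩ := hx
  obtain ⟨v, hv, rfl⟩ := mem_ball_iff.1 hi
  rcases le_total ‖v‖ (3 / 4) with hv' | hv'
  · calc dist (f (P.chart i v)) (T.map (P.chart i v))
        ≤ 2 * Q.radius := dist_le_of_mem_ball (hf.map_mem_ball hi) (T.map_mem_ball hi)
      _ = 8 * (Q.radius / P.radius) * (P.radius / 4) := by field_simp; norm_num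
      _ ≤ 8 * (Q.radius / P.radius) * dist (P.chart i v) y := by
        gcongr
        exact radius_div_four_le_dist_chart hv' (hxy i hi)
  · rw [hf.map_chart i v hv, T.map_chart i v hv, hf.map_eq v (notMem_ball_of_le_norm hv'),
      T.map_eq_self v hv', dist_self]
    positivity

lemma exists_dist_map_le {f : V → V} (hf : T.IsConjugacy f) :
    ∃ C : ℝ≥0, ∀ x y, (∀ i, x ∈ P.ball i → y ∉ P.ball i) → dist (f x) (f y) ≤ C * dist x y := by
  obtain ⟨K, hK⟩ := T.exists_lipschitzWith
  have hratio : 0 ≤ 8 * (Q.radius / P.radius) := by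
    have := P.radius_pos
    have := Q.radius_pos
    positivity
  refine ⟨K + 2 * Real.toNNReal (8 * (Q.radius / P.radius)), fun x y hxy => ?_⟩
  have hx := hf.dist_transport_le hxy
  have hy := hf.dist_transport_le (x := y) (y := x) fun i hy hx => hxy i hx hy
  rw [dist_comm y] at hy
  simp only [NNReal.coe_add, NNReal.coe_mul, NNReal.coe_ofNat, Real.coe_toNNReal _ hratio]
  linarith [dist_triangle4_right (f x) (f y) (T.map x) (T.map y), hK.dist_le_mul x y]

lemma exists_dist_map_le_of_dist_le {f : V → V} (hf : T.IsConjugacy f) :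
    ∃ C : ℝ≥0, ∀ x y z, dist x y ≤ dist x z → (∀ i, x ∈ P.ball i → y ∈ P.ball i → z ∉ P.ball i) →
      dist (f x) (f y) ≤ C * dist x z := by
  obtain ⟨C, hC⟩ := hf.exists_dist_map_le
  have hP := P.radius_pos
  have hQ := Q.radius_pos
  have hratio : 0 < Q.radius / P.radius := by positivity
  refine ⟨C + (C + 8) * Real.toNNReal (Q.radius / P.radius), fun x y z hle hxyz => ?_⟩
  simp only [NNReal.coe_add, NNReal.coe_mul, NNReal.coe_ofNat, Real.coe_toNNReal _ hratio.le]
  by_cases hxy : ∀ i, x ∈ P.ball i → y ∉ P.ball i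
  · calc dist (f x) (f y) ≤ C * dist x y := hC x y hxy
      _ ≤ (C + (C + 8) * (Q.radius / P.radius)) * dist x z := by
        gcongr
        exact le_add_of_nonneg_right (by positivity)
  push Not at hxy
  obtain ⟨i, hx, hy⟩ := hxy
  suffices dist (f x) (f y) ≤ (C + 8) * (Q.radius / P.radius) * dist x z by
    linarith [mul_nonneg C.coe_nonneg (dist_nonneg (x := x) (y := z))]
  have hz := hxyz i hx hy
  obtain ⟨v, hv, rfl⟩ := mem_ball_iff.1 hx
  obtain ⟨w, hw, rfl⟩ := mem_ball_iff.1 hy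
  rcases le_total ‖v‖ (3 / 4) with hv' | hv'
  · calc dist (f (P.chart i v)) (f (P.chart i w))
        ≤ 2 * Q.radius := dist_le_of_mem_ball (hf.map_mem_ball hx) (hf.map_mem_ball hy)
      _ = 8 * (Q.radius / P.radius) * (P.radius / 4) := by field_simp; norm_num
      _ ≤ (C + 8) * (Q.radius / P.radius) * dist (P.chart i v) z := by
        gcongr
        exacts [le_add_of_nonneg_left C.coe_nonneg, radius_div_four_le_dist_chart hv' hz]
  · calc dist (f (P.chart i v)) (f (P.chart i w)) = Q.radius * dist (f v) (f w) := by
          rw [hf.map_chart i v hv, hf.map_chart i w hw, dist_chart]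
      _ ≤ Q.radius * (C * dist v w) := by
        gcongr
        exact hC v w fun i hi => absurd hi (notMem_ball_of_le_norm hv' i)
      _ = C * (Q.radius / P.radius) * dist (P.chart i v) (P.chart i w) := by
        rw [dist_chart]
        field_simp
      _ ≤ (C + 8) * (Q.radius / P.radius) * dist (P.chart i v) z := by
        gcongr
        exact le_add_of_nonneg_right (by norm_num)

variable {f : V ≃ₜ V}

lemma exists_dist_le_mul_dist_map (hf : T.IsConjugacy f) (hf' : T.symm.IsConjugacy f.symm)
    (hPQ : P.radius ≤ Q.radius) : ∃ C : ℝ≥0, ∀ x y, dist x y ≤ C * dist (f x) (f y) := by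
  obtain ⟨C, hC⟩ := hf'.exists_dist_map_le
  have hmem {x : V} {i : ι} (hx : f x ∈ Q.ball i) : x ∈ P.ball i :=
    f.symm_apply_apply x ▸ hf'.map_mem_ball hx
  refine ⟨C, fun x y => ?_⟩
  rcases eq_or_ne x y with rfl | hne
  · simp
  refine dist_induction (P := P) (R := fun x y => dist x y ≤ C * dist (f x) (f y))
    (fun x y hxy => ?_) (fun i v w hv hw ih => ?_) hne
  · simpa using hC (f x) (f y) fun i hx hy => hxy i (hmem hx) (hmem hy)
  · calc dist (P.chart i v) (P.chart i w) = P.radius * dist v w := P.dist_chart i v w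
      _ ≤ Q.radius * (C * dist (f v) (f w)) := mul_le_mul hPQ ih dist_nonneg Q.radius_pos.le
      _ = C * dist (f (P.chart i v)) (f (P.chart i w)) := by
        rw [hf.map_chart i v hv, hf.map_chart i w hw, dist_chart, mul_left_comm]

lemma exists_isWeaklyQuasisymmetric (hf : T.IsConjugacy f) (hf' : T.symm.IsConjugacy f.symm)
    (hPQ : P.radius ≤ Q.radius) : ∃ H, IsWeaklyQuasisymmetric H f := by
  obtain ⟨C, hC⟩ := hf.exists_dist_map_le_of_dist_le
  obtain ⟨D, hD⟩ := hf.exists_dist_le_mul_dist_map hf' hPQ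
  have base (x y z : V) (hle : dist x y ≤ dist x z)
      (hxyz : ∀ i, x ∈ P.ball i → y ∈ P.ball i → z ∉ P.ball i) :
      dist (f x) (f y) ≤ C * D * dist (f x) (f z) := by
    rw [mul_assoc]
    exact (hC x y z hle hxyz).trans (mul_le_mul_of_nonneg_left (hD x z) C.coe_nonneg)
  refine ⟨C * D, fun x y z hle => ?_⟩
  rcases eq_or_ne x z with rfl | hne
  · simp_all
  refine dist_induction (P := P) (R := fun x z => ∀ y, dist x y ≤ dist x z →
    dist (f x) (f y) ≤ C * D * dist (f x) (f z)) (fun x z hxz y hle => ?_)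
    (fun i v t hv ht ih y hle => ?_) hne y hle
  · exact base x y z hle fun i hx _ => hxz i hx
  by_cases hy : y ∈ P.ball i
  · obtain ⟨w, hw, rfl⟩ := mem_ball_iff.1 hy
    rw [dist_chart, dist_chart, mul_le_mul_iff_right₀ P.radius_pos] at hle
    rw [hf.map_chart i v hv, hf.map_chart i w hw, hf.map_chart i t ht, dist_chart, dist_chart,
      mul_left_comm]
    exact mul_le_mul_of_nonneg_left (ih w hle) Q.radius_pos.le
  · refine base _ y _ hle fun j hj hyj => ?_
    rw [eq_of_mem_ball hj (P.chart_mem_ball_iff.2 hv)] at hyj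
    exact absurd hyj hy

end Transport.IsConjugacy

end Distortion

section Point

variable [NormedSpace ℝ V] (P : BallPacking ι V)

/-- The point of the limit set of the iterated function system with code `w`, namely the limit of
`chart (w 0) (chart (w 1) (⋯ (chart (w k) 0)))` as `k` tends to infinity. -/
noncomputable def point (w : ℕ → ι) : V := ∑' k, P.radius ^ k • P.center (w k)

lemma norm_smul_center_le (w : ℕ → ι) (k : ℕ) :
    ‖P.radius ^ k • P.center (w k)‖ ≤ (1 - P.radius) * P.radius ^ k := by
  have hr := P.radius_pos.le
  rw [norm_smul, norm_pow, Real.norm_of_nonneg hr, mul_comm]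
  gcongr
  linarith [P.norm_center_add_radius_lt (w k)]

lemma norm_point_le_one (w : ℕ → ι) : ‖P.point w‖ ≤ 1 :=
  have : Nonempty ι := ⟨w 0⟩
  tsum_of_norm_bounded (hasSum_one_sub_mul_pow P.radius_pos.le P.radius_lt_one)
    (P.norm_smul_center_le w)

variable {S : Submodule ℝ V}

variable {P} in
lemma point_mem (hS : IsClosed (S : Set V)) {w : ℕ → ι} (hw : ∀ k, P.center (w k) ∈ S) :
    P.point w ∈ S :=
  tsum_mem hS fun k => S.smul_mem _ (hw k)

variable [CompleteSpace V]

lemma summable_point (w : ℕ → ι) : Summable fun k => P.radius ^ k • P.center (w k) :=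
  have : Nonempty ι := ⟨w 0⟩
  .of_norm_bounded (hasSum_one_sub_mul_pow P.radius_pos.le P.radius_lt_one).summable
    (P.norm_smul_center_le w)

lemma point_eq_chart (w : ℕ → ι) : P.point w = P.chart (w 0) (P.point fun k => w (k + 1)) := by
  simp only [point, (P.summable_point w).tsum_eq_zero_add, chart_apply, pow_zero, one_smul,
    pow_succ', mul_smul]
  rw [(P.summable_point fun k => w (k + 1)).tsum_const_smul]

variable {P} in
lemma Transport.IsConjugacy.map_point {Q : BallPacking ι V} {T : P.Transport Q} {f : V → V}
    (hf : T.IsConjugacy f) (w : ℕ → ι) : f (P.point w) = Q.point w := by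
  have : Nonempty ι := ⟨w 0⟩
  refine dist_le_zero.1 <| nonpos_of_forall_exists_le_mul (B := 2)
    (e := fun w => dist (f (P.point w)) (Q.point w)) Q.radius_pos.le Q.radius_lt_one
    (fun w => ?_) (fun w => .inr ⟨fun k => w (k + 1), ?_⟩) w
  · linarith [dist_le_norm_add_norm (f (P.point w)) (Q.point w), Q.norm_point_le_one w,
      hf.norm_map_le_one (P.norm_point_le_one w)]
  · rw [P.point_eq_chart, Q.point_eq_chart, hf.map_chart _ _ (P.norm_point_le_one _), dist_chart]

lemma exists_mul_pow_le_dist_point [Finite ι] : ∃ η > 0, ∀ k w w', (∀ j < k, w j = w' j) →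
    w k ≠ w' k → η * P.radius ^ k ≤ dist (P.point w) (P.point w') := by
  obtain ⟨η, hη, hsep, -⟩ := P.exists_margin
  refine ⟨η, hη, fun k => ?_⟩
  induction k with
  | zero =>
    intro w w' _ hne
    have hmem (w : ℕ → ι) : P.point w ∈ P.ball (w 0) :=
      P.point_eq_chart w ▸ P.chart_mem_ball_iff.2 (P.norm_point_le_one _)
    linarith [hsep hne, mem_closedBall'.1 (hmem w), mem_closedBall.1 (hmem w'), pow_zero P.radius,
      dist_triangle4 (P.center (w 0)) (P.point w) (P.point w') (P.center (w' 0))]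
  | succ k ih =>
    intro w w' heq hne
    rw [P.point_eq_chart w, P.point_eq_chart w', heq 0 k.succ_pos, dist_chart, pow_succ',
      mul_left_comm]
    exact mul_le_mul_of_nonneg_left (ih _ _ (fun j hj => heq (j + 1) (Nat.succ_lt_succ hj)) hne)
      P.radius_pos.le

lemma le_dimH_range_point [Finite ι] {b : ℕ} (hb : 1 < b) {σ : ℝ} (hσ : 0 < σ)
    (hbσ : 1 ≤ b * P.radius ^ σ) {c : ℕ → Fin b → ι} (hc : ∀ k, (c k).Injective) :
    ENNReal.ofReal σ ≤ dimH (range fun ω : ℕ → Fin b => P.point fun k => c k (ω k)) := by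
  obtain ⟨η, hη, hdist⟩ := P.exists_mul_pow_le_dist_point
  refine le_dimH_range_of_mul_pow_le_dist hb hη P.radius_pos hσ hbσ fun k ω ω' heq hne => ?_
  exact hdist k _ _ (fun j hj => congrArg (c j) (heq j hj)) ((hc k).ne hne)

variable {P} in
lemma point_sub_point_mem (hS : IsClosed (S : Set V)) {w w' : ℕ → ι}
    (hw : ∀ k, P.center (w k) - P.center (w' k) ∈ S) : P.point w - P.point w' ∈ S := by
  rw [point, point, ← (P.summable_point w).tsum_sub (P.summable_point w')]
  refine tsum_mem hS fun k => ?_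
  rw [← smul_sub]
  exact S.smul_mem _ (hw k)

end Point

section GridPacking

variable [InnerProductSpace ℝ V] {M : ℕ} {e : Fin 2 → V} {cell : ι → Fin M ×ₗ Fin M}

/-- The packing by balls of radius `1 / (12 * M)` centered at chosen points of the grid. -/
noncomputable def gridPacking [NeZero M] (he : Orthonormal ℝ e) (hcell : cell.Injective) :
    BallPacking ι V where
  center i := gridPoint e (cell i)
  radius := (12 * M : ℝ)⁻¹
  radius_pos := by
    have := NeZero.pos M
    positivity
  two_mul_radius_lt_dist i j hij := by
    refine lt_of_lt_of_le ?_ (inv_le_dist_gridPoint he (hcell.ne hij))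
    have := NeZero.pos M
    field_simp
    norm_num
  norm_center_add_radius_lt i := by
    have hM : (1 : ℝ) ≤ M := by exact_mod_cast NeZero.one_le
    have hr : (12 * M : ℝ)⁻¹ ≤ 12⁻¹ := by
      gcongr
      linarith
    linarith [norm_gridPoint_le he.1 (cell i)]

lemma nonempty_transport_gridPacking [CompleteSpace V] [LinearOrder ι] [Finite ι] {N : ℕ}
    [NeZero M] [NeZero N] (he : Orthonormal ℝ e) (hcell : StrictMono cell)
    {cell' : ι → Fin N ×ₗ Fin N} (hcell' : StrictMono cell') :
    Nonempty ((gridPacking he hcell.injective).Transport (gridPacking he hcell'.injective)) :=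
  nonempty_transport_of_joined <| joined_of_convex (convex_lexCone e) zero_notMem_lexCone
    (fun _ _ hij => gridPoint_sub_mem_lexCone he (hcell hij))
    fun _ _ hij => gridPoint_sub_mem_lexCone he (hcell' hij)

end GridPacking

section Rectangle

variable [InnerProductSpace ℝ V] {N₁ N₂ : ℕ} {e : Fin 2 → V} {L : Submodule ℝ V}

/-- The packing by `N₁` columns of `N₂` balls of radius `1 / (12 * N₁)` each, centered at points of
the grid. -/
noncomputable abbrev rectanglePacking [NeZero N₁] (he : Orthonormal ℝ e) (h : N₂ ≤ N₁) :
    BallPacking (Fin N₁ ×ₗ Fin N₂) V :=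
  gridPacking he (strictMono_toLex_castLE h).injective

variable [NeZero N₁] (he : Orthonormal ℝ e) (h : N₂ ≤ N₁)

lemma point_rectanglePacking_zero_mem_orthogonal (hL : e 1 ∈ Lᗮ) (τ : ℕ → Fin N₂) :
    (rectanglePacking he h).point (fun k => toLex (0, τ k)) ∈ Lᗮ := by
  refine point_mem L.isClosed_orthogonal fun k => Lᗮ.smul_mem _ ?_
  simpa using Lᗮ.smul_mem _ hL

lemma point_rectanglePacking_sub_mem [CompleteSpace V] (hL : e 0 ∈ L) (ω ω' : ℕ → Fin N₁)
    (τ : ℕ → Fin N₂) :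
    (rectanglePacking he h).point (fun k => toLex (ω k, τ k)) -
      (rectanglePacking he h).point (fun k => toLex (ω' k, τ k)) ∈ L := by
  refine (Submodule.span_singleton_le_iff_mem _ _).2 hL <|
    point_sub_point_mem (Submodule.closed_of_finiteDimensional _) fun k => ?_
  simp only [gridPacking, gridPoint, ← smul_sub, ofLex_toLex, add_sub_add_right_eq_sub, ← sub_smul]
  exact Submodule.smul_mem _ _ (Submodule.smul_mem _ _ (Submodule.mem_span_singleton_self _))

lemma le_dimH_range_point_rectanglePacking [CompleteSpace V] (hN₂ : 1 < N₂) {β : ℝ} (hβ : 0 < β)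
    (hN₂β : 1 ≤ (N₂ : ℝ) * (12 * N₁ : ℝ)⁻¹ ^ β) : ENNReal.ofReal β ≤
      dimH (range fun τ : ℕ → Fin N₂ => (rectanglePacking he h).point fun k => toLex (0, τ k)) :=
  le_dimH_range_point _ hN₂ hβ hN₂β (c := fun _ j => toLex (0, j)) fun _ _ _ hij =>
    congrArg (fun i => (ofLex i).2) hij

variable {he h} in
lemma Transport.IsConjugacy.le_dimH_image_line [CompleteSpace V]
    {Q : BallPacking (Fin N₁ ×ₗ Fin N₂) V} {T : (rectanglePacking he h).Transport Q}
    {f : V → V} (hf : T.IsConjugacy f) (hL : e 0 ∈ L) (hN₁ : 1 < N₁) {α : ℝ} (hα : 0 < α)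
    (hN₁α : 1 ≤ (N₁ : ℝ) * Q.radius ^ α) (ω : ℕ → Fin N₁) (τ : ℕ → Fin N₂) :
    ENNReal.ofReal α ≤ dimH (f '' {x | ∃ v ∈ L,
      x = (rectanglePacking he h).point (fun k => toLex (ω k, τ k)) + v}) := by
  refine (Q.le_dimH_range_point hN₁ hα hN₁α (c := fun k i => toLex (i, τ k))
    fun _ _ _ hij => congrArg (fun i => (ofLex i).1) hij).trans (dimH_mono ?_)
  rintro _ ⟨ω', rfl⟩
  exact ⟨_, ⟨_, point_rectanglePacking_sub_mem he h hL ω' ω τ, (add_sub_cancel _ _).symm⟩,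
    hf.map_point _⟩

lemma exists_isConjugacy_quasiconformalOn [CompleteSpace V] {M : ℕ} [NeZero M] [NeZero N₂]
    (hM : M ≤ N₁) (hcard : N₁ * N₂ ≤ M * M) :
    ∃ (Q : BallPacking (Fin N₁ ×ₗ Fin N₂) V) (T : (rectanglePacking he h).Transport Q) (f : V ≃ₜ V),
      Q.radius = (12 * M : ℝ)⁻¹ ∧ T.IsConjugacy f ∧ QuasiconformalOn univ f := by
  obtain ⟨cell, hcell⟩ : ∃ cell : Fin N₁ ×ₗ Fin N₂ → Fin M ×ₗ Fin M, StrictMono cell :=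
    exists_strictMono_of_card_le (by simpa using hcard)
  obtain ⟨T⟩ := nonempty_transport_gridPacking he (strictMono_toLex_castLE h) hcell
  obtain ⟨f, hf, hf'⟩ := T.exists_homeomorph_isConjugacy
  have hradius : (12 * N₁ : ℝ)⁻¹ ≤ (12 * M : ℝ)⁻¹ := by
    have := NeZero.pos M
    gcongr
  obtain ⟨H, hH⟩ := hf.exists_isWeaklyQuasisymmetric hf' hradius
  exact ⟨_, T, f, rfl, hf, hH.quasiconformalOn_univ⟩

end Rectangle

end BallPacking

open BallPacking in
theorem BHW_qc_line_dimension_increase_general {V : Type*} [NormedAddCommGroup V]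
    [InnerProductSpace ℝ V] [CompleteSpace V] {α : ℝ} (hα₁ : 1 ≤ α) (hα₂ : α < 2)
    {L : Submodule ℝ V} (hL : L ≠ ⊥) (hL' : Lᗮ ≠ ⊥) {β : ℝ} (hβ : β < 2 / α - 1) :
    ∃ (E : Set V) (f : V ≃ₜ V), E ⊆ Lᗮ ∧ QuasiconformalOn univ f ∧
      (∀ a ∈ E, ENNReal.ofReal α ≤ dimH (f '' {x | ∃ v ∈ L, x = a + v})) ∧
      ENNReal.ofReal β < dimH E := by
  obtain ⟨e, he, he₀, he₁⟩ := exists_orthonormal_mem_mem_orthogonal hL hL'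
  obtain ⟨γ, hγ₀, hβγ, hαγ⟩ := exists_one_add_mul_lt_two hα₁ hα₂ hβ
  obtain ⟨M, N₁, N₂, hM, hMN₁, hN₂, hN₂₁, hcard, hdimα, hdimγ⟩ :=
    exists_grid_sizes (c := 12) (by norm_num) hα₁ hγ₀ hαγ
  have : NeZero M := ⟨by lia⟩
  have : NeZero N₁ := ⟨by lia⟩
  have : NeZero N₂ := ⟨by lia⟩
  obtain ⟨Q, T, f, hQ, hf, hqc⟩ :=
    exists_isConjugacy_quasiconformalOn he hN₂₁ hMN₁ hcard
  refine ⟨_, f, range_subset_iff.2 (point_rectanglePacking_zero_mem_orthogonal he hN₂₁ he₁),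
    hqc, ?_,
    ((ENNReal.ofReal_lt_ofReal_iff hγ₀).2 hβγ).trans_le <|
      le_dimH_range_point_rectanglePacking he hN₂₁ hN₂ hγ₀ hdimγ⟩
  rintro _ ⟨τ, rfl⟩
  exact hf.le_dimH_image_line he₀ (by lia) (by linarith) (hQ ▸ hdimα) _ τ

/-- **Bishop–Hakobyan–Williams.** Fix `α ∈ [1,2)` and a one-dimensional linear subspace
`L ⊂ ℝ²`. For any `β < 2/α - 1` there are a set `E ⊆ L^⊥` and a quasiconformal
homeomorphism `f : ℝ² → ℝ²` with `dim f(a + L) ≥ α` for every `a ∈ E`, and `dim E > β`. -/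
theorem BHW_qc_line_dimension_increase
    (α : ℝ) (hα₁ : 1 ≤ α) (hα₂ : α < 2)
    (L : Submodule ℝ (EuclideanSpace ℝ (Fin 2))) (hL : Module.finrank ℝ L = 1)
    (β : ℝ) (hβ : β < 2 / α - 1) :
    ∃ (E : Set (EuclideanSpace ℝ (Fin 2)))
      (f : EuclideanSpace ℝ (Fin 2) ≃ₜ EuclideanSpace ℝ (Fin 2)),
      E ⊆ (Lᗮ : Set (EuclideanSpace ℝ (Fin 2))) ∧
      QuasiconformalOn Set.univ ⇑f ∧
      (∀ a ∈ E, α ≤ (dimH (⇑f '' {x | ∃ v ∈ L, x = a + v})).toReal) ∧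
      β < (dimH E).toReal := by
  have hfin := L.finrank_add_finrank_orthogonal
  rw [hL, finrank_euclideanSpace_fin] at hfin
  have hL₀ : L ≠ ⊥ := by
    rintro rfl
    simp at hL
  have hL₀' : Lᗮ ≠ ⊥ := fun h => by
    rw [h, finrank_bot] at hfin
    lia
  obtain ⟨E, f, hE, hf, hα, hβE⟩ := BHW_qc_line_dimension_increase_general hα₁ hα₂ hL₀ hL₀' hβ
  refine ⟨E, f, hE, hf, fun a ha => ?_, ?_⟩
  · exact (ENNReal.ofReal_le_iff_le_toReal (Real.dimH_ne_top _)).1 (hα a ha)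
  · calc β ≤ (ENNReal.ofReal β).toReal := ENNReal.toReal_ofReal' ▸ le_max_left _ _
      _ < (dimH E).toReal := ENNReal.toReal_strict_mono (Real.dimH_ne_top _) hβE
end

section
/- Let p > n ≥ 2, fix α ∈ [1, p/(p-(n-1))), and let L be a one-dimensional linear subspace of ℝⁿ. For any β < (n-1) − p(1 − 1/α) there exist a set E ⊆ L^⊥ with Hausdorff dimension strictly greater than β and a quasiconformal homeomorphism Φ : ℝⁿ → ℝⁿ such that: (i) Φ is differentiable almost everywhere and for every compact set K ⊆ ℝⁿ the integral over K of ‖DΦ(x)‖^p with respect to Lebesgue measure is finite (i.e. Φ ∈ W^{1,p}_loc(ℝⁿ;ℝⁿ)); and (ii) the Hausdorff dimension of Φ(a + L) is strictly greater than α for every a ∈ E. -/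
open Set Metric Filter MeasureTheory
open scoped ENNReal Topology NNReal

/-!
Let `d = dim L`. For `σ < 1` slightly smaller than `d / α` and a small `r`, choose points
`t i ∈ L` and `e j ∈ Lᗮ` near the origin such that the `M * N` balls of radius `r` centred at
`t i + e j` are disjoint, where `M = r ^ (-s₁)` with `σ * α < s₁ < d`, and `N = r ^ (-s₂)` with
`β < s₂`. There is a bilipschitz homeomorphism which carries these balls by homotheties onto
disjoint balls of radius `ρ = r ^ σ`; inserting copies of it into the balls again and again yields
in the limit a homeomorphism `Φ` mapping one self-similar Cantor set onto another. At the scale of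
the `k`-th generation `Φ` is bilipschitz up to the factor `(ρ / r) ^ k`, with constants independent
of `k`, and therefore it is quasiconformal. The `k`-th generation contributes at most a multiple of
`(M * N * r ^ n * (ρ / r) ^ p) ^ k` to the integral of `‖DΦ‖ ^ p`, a convergent geometric series
when `d + s₂ + p * (1 - σ) < n`. The points `e j` generate a Cantor set `E` in `Lᗮ` of dimension
`log N / log (1 / r) > β`, and for `a ∈ E` the line `a + L` meets the source Cantor set in a Cantor
set of `M` pieces, whose image has dimension `log M / log (1 / ρ) > α`.
-/

theorem eq_of_forall_dist_le_mul_pow {X : Type*} [MetricSpace X] {x y : X} {C q : ℝ}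
    (hq₀ : 0 ≤ q) (hq₁ : q < 1) (h : ∀ k : ℕ, dist x y ≤ C * q ^ k) : x = y := by
  have hlim : Tendsto (fun k : ℕ => C * q ^ k) atTop (𝓝 0) := by
    simpa using (tendsto_pow_atTop_nhds_zero_of_lt_one hq₀ hq₁).const_mul C
  exact dist_le_zero.1 (ge_of_tendsto' hlim h)

/-! ### Hausdorff dimension of coded Cantor sets -/

/-- A coding `P` of points by infinite words separates words at rate `q` if words which first
differ at the letter `k` (letters are counted from `0`) code points at distance at least
`c * q ^ k`. -/
def SeparatesWords {ι X : Type*} [Dist X] (P : (ℕ → ι) → X) (c q : ℝ) : Prop :=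
  ∀ ω ω' : ℕ → ι, ∀ k, (∀ i < k, ω i = ω' i) → ω k ≠ ω' k → c * q ^ k ≤ dist (P ω) (P ω')

namespace SeparatesWords

variable {X : Type*}

theorem mul_pow_firstDiff_le_dist {ι : Type*} [Dist X] {P : (ℕ → ι) → X} {c q : ℝ}
    (h : SeparatesWords P c q) {ω ω' : ℕ → ι} (hne : ω ≠ ω') :
    c * q ^ PiNat.firstDiff ω ω' ≤ dist (P ω) (P ω') :=
  h ω ω' _ (fun _ => PiNat.apply_eq_of_lt_firstDiff) (PiNat.apply_firstDiff_ne hne)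

theorem injective {ι : Type*} [MetricSpace X] {P : (ℕ → ι) → X} {c q : ℝ}
    (h : SeparatesWords P c q) (hc : 0 < c) (hq : 0 < q) : Function.Injective P := by
  intro ω ω' heq
  by_contra hne
  have hle := h.mul_pow_firstDiff_le_dist hne
  rw [heq, dist_self] at hle
  exact hle.not_gt (by positivity)

theorem abs_ofDigits_sub_ofDigits_le [MetricSpace X] {M : ℕ} {P : (ℕ → Fin M) → X} {c q d : ℝ}
    (h : SeparatesWords P c q) (hc : 0 < c) (hq : 0 < q) (hd : 0 < d) (hM : 1 ≤ M * q ^ d)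
    (ω ω' : ℕ → Fin M) :
    |Real.ofDigits ω - Real.ofDigits ω'| ≤ (c ^ d)⁻¹ * dist (P ω) (P ω') ^ d := by
  obtain rfl | hne := eq_or_ne ω ω'
  · simp [Real.zero_rpow hd.ne']
  set k := PiNat.firstDiff ω ω'
  have hM₀ : (0 : ℝ) < M := pos_of_mul_pos_left (zero_lt_one.trans_le hM) (by positivity)
  calc |Real.ofDigits ω - Real.ofDigits ω'| ≤ ((M : ℝ) ^ k)⁻¹ :=
        Real.abs_ofDigits_sub_ofDigits_le fun _ => PiNat.apply_eq_of_lt_firstDiff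
    _ ≤ (q ^ d) ^ k := by
        rw [inv_le_iff_one_le_mul₀ (by positivity), ← mul_pow, mul_comm]
        exact one_le_pow₀ hM
    _ = (c ^ d)⁻¹ * (c * q ^ k) ^ d := by
        rw [Real.mul_rpow hc.le (by positivity), inv_mul_cancel_left₀ (by positivity),
          Real.rpow_pow_comm hq.le]
    _ ≤ (c ^ d)⁻¹ * dist (P ω) (P ω') ^ d := by
        gcongr
        exact h.mul_pow_firstDiff_le_dist hne

theorem ofReal_le_dimH_range [MetricSpace X] {M : ℕ} {P : (ℕ → Fin M) → X} {c q d : ℝ}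
    (h : SeparatesWords P c q) (hc : 0 < c) (hq : 0 < q) (hd : 0 < d) (hM₁ : 1 < M)
    (hM : 1 ≤ M * q ^ d) : ENNReal.ofReal d ≤ dimH (range P) := by
  have : Nonempty (ℕ → Fin M) := ⟨fun _ => ⟨0, by lia⟩⟩
  set f : X → ℝ := fun x => Real.ofDigits (Function.invFun P x)
  have hf (ω) : f (P ω) = Real.ofDigits ω :=
    congrArg Real.ofDigits (Function.leftInverse_invFun (h.injective hc hq) ω)
  have hHolder : HolderOnWith (Real.toNNReal (c ^ d)⁻¹) (Real.toNNReal d) f (range P) := by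
    rintro _ ⟨ω, rfl⟩ _ ⟨ω', rfl⟩
    rw [hf, hf, edist_dist, edist_dist, Real.dist_eq, Real.coe_toNNReal d hd.le,
      ENNReal.ofReal_rpow_of_nonneg dist_nonneg hd.le, ENNReal.ofNNReal_toNNReal,
      ← ENNReal.ofReal_mul (by positivity)]
    exact ENNReal.ofReal_le_ofReal (h.abs_ofDigits_sub_ofDigits_le hc hq hd hM ω ω')
  have hsubset : Icc (0 : ℝ) 1 ⊆ f '' range P := by
    intro y hy
    obtain ⟨ω, -, rfl⟩ := Real.ofDigits_SurjOn hM₁ hy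
    exact ⟨P ω, mem_range_self ω, hf ω⟩
  have hIcc : dimH (Icc (0 : ℝ) 1) = 1 := by
    rw [Real.dimH_of_nonempty_interior (by simp)]
    simp
  have hle : 1 ≤ dimH (range P) / ENNReal.ofReal d :=
    hIcc ▸ (dimH_mono hsubset).trans (hHolder.dimH_image_le (Real.toNNReal_pos.2 hd))
  rwa [ENNReal.le_div_iff_mul_le (by simp [hd]) (by simp), one_mul] at hle

end SeparatesWords

/-! ### Separated families of points -/

theorem exists_one_le_norm_sub_of_finrank (V : Type*) [NormedAddCommGroup V] [NormedSpace ℝ V]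
    [FiniteDimensional ℝ V] : ∃ c : ℝ, 0 < c ∧ ∀ m : ℕ,
      ∃ t : (Fin (Module.finrank ℝ V) → Fin m) → V,
        (∀ f, ‖t f‖ ≤ c * m) ∧ ∀ f g, f ≠ g → 1 ≤ ‖t f - t g‖ := by
  let A : V ≃L[ℝ] (Fin (Module.finrank ℝ V) → ℝ) := .ofFinrankEq (by simp)
  set a := ‖(A : V →L[ℝ] (Fin (Module.finrank ℝ V) → ℝ))‖
  set b := ‖(A.symm : (Fin (Module.finrank ℝ V) → ℝ) →L[ℝ] V)‖
  have hA (v) : ‖A v‖ ≤ a * ‖v‖ := (A : V →L[ℝ] (Fin (Module.finrank ℝ V) → ℝ)).le_opNorm v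
  have hAsymm (w) : ‖A.symm w‖ ≤ b * ‖w‖ := (A.symm : _ →L[ℝ] V).le_opNorm w
  refine ⟨a * b + 1, by positivity, fun m =>
    ⟨fun f => a • A.symm fun k => ((f k : ℕ) : ℝ), fun f => ?_, fun f g hfg => ?_⟩⟩
  · have hf : ‖fun k => ((f k : ℕ) : ℝ)‖ ≤ m := by
      rw [pi_norm_le_iff_of_nonneg (by positivity)]
      exact fun k => by simp
    calc ‖a • A.symm fun k => ((f k : ℕ) : ℝ)‖ ≤ a * (b * m) := by
          rw [norm_smul, Real.norm_of_nonneg (norm_nonneg _)]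
          gcongr
          exact (hAsymm _).trans (by gcongr)
      _ ≤ (a * b + 1) * m := by linarith [(Nat.cast_nonneg m : (0 : ℝ) ≤ m)]
  · obtain ⟨k, hk⟩ := Function.ne_iff.1 hfg
    calc (1 : ℝ) ≤ ‖((f k : ℕ) : ℝ) - ((g k : ℕ) : ℝ)‖ := by
          have hsub : ((f k : ℕ) : ℤ) - ((g k : ℕ) : ℤ) ≠ 0 := by grind
          rw [Real.norm_eq_abs]
          exact_mod_cast Int.one_le_abs hsub
      _ ≤ ‖(fun k => ((f k : ℕ) : ℝ)) - fun k => ((g k : ℕ) : ℝ)‖ :=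
          norm_le_pi_norm ((fun k => ((f k : ℕ) : ℝ)) - fun k => ((g k : ℕ) : ℝ)) k
      _ ≤ a * ‖A.symm ((fun k => ((f k : ℕ) : ℝ)) - fun k => ((g k : ℕ) : ℝ))‖ := by
          simpa using hA (A.symm ((fun k => ((f k : ℕ) : ℝ)) - fun k => ((g k : ℕ) : ℝ)))
      _ = ‖(a • A.symm fun k => ((f k : ℕ) : ℝ)) - a • A.symm fun k => ((g k : ℕ) : ℝ)‖ := by
          rw [← smul_sub, ← map_sub, norm_smul, Real.norm_of_nonneg (norm_nonneg _)]

theorem tendsto_rpow_nhdsGT_zero {σ : ℝ} (hσ : 0 < σ) :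
    Tendsto (fun r : ℝ => r ^ σ) (𝓝[>] 0) (𝓝[>] 0) := by
  refine tendsto_nhdsWithin_iff.2 ⟨?_, ?_⟩
  · simpa only [Real.zero_rpow hσ.ne'] using
      ((Real.continuousAt_rpow_const 0 σ (Or.inr hσ.le)).tendsto).mono_left nhdsWithin_le_nhds
  · filter_upwards [self_mem_nhdsWithin] with r (hr : 0 < r) using Real.rpow_pos_of_pos hr σ

theorem eventually_nhdsGT_zero_rpow_lt {s c : ℝ} (hs : 0 < s) (hc : 0 < c) :
    ∀ᶠ r : ℝ in 𝓝[>] 0, r ^ s < c :=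
  ((tendsto_rpow_nhdsGT_zero hs).mono_right nhdsWithin_le_nhds).eventually_lt_const hc

theorem eventually_exists_nat_between_rpow_neg {a b : ℝ} (ha : 0 < a) (hab : a < b) :
    ∀ᶠ r : ℝ in 𝓝[>] 0, ∃ N : ℕ, 1 < N ∧ r ^ (-a) ≤ N ∧ (N : ℝ) ≤ r ^ (-b) := by
  filter_upwards [Ioo_mem_nhdsGT one_pos,
    eventually_nhdsGT_zero_rpow_lt (sub_pos.2 hab) (half_pos (one_pos (α := ℝ)))]
    with r ⟨hr, hr₁⟩ hrab
  have hone : 1 < r ^ (-a) := Real.one_lt_rpow_of_pos_of_lt_one_of_neg hr hr₁ (neg_neg_of_pos ha)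
  refine ⟨⌈r ^ (-a)⌉₊, Nat.lt_ceil.2 (by simpa using hone), Nat.le_ceil _, ?_⟩
  calc (⌈r ^ (-a)⌉₊ : ℝ) ≤ 2 * r ^ (-a) := Nat.ceil_le_two_mul (by linarith)
    _ = r ^ (-b) * (2 * r ^ (b - a)) := by
        rw [mul_left_comm, ← Real.rpow_add hr]
        ring_nf
    _ ≤ r ^ (-b) * 1 := by gcongr; linarith
    _ = r ^ (-b) := mul_one _

theorem eventually_exists_separated (V : Type*) [NormedAddCommGroup V] [NormedSpace ℝ V]
    [FiniteDimensional ℝ V] {s : ℝ} (hs₀ : 0 < s) (hs : s < Module.finrank ℝ V) :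
    ∀ᶠ r : ℝ in 𝓝[>] 0, ∀ N : ℕ, (N : ℝ) ≤ r ^ (-s) →
      ∃ t : Fin N → V, (∀ i, ‖t i‖ ≤ 1 / 4) ∧ ∀ i j, i ≠ j → 3 * r ≤ ‖t i - t j‖ := by
  obtain ⟨c, hc, hlattice⟩ := exists_one_le_norm_sub_of_finrank V
  set d := Module.finrank ℝ V
  have hd : (0 : ℝ) < d := hs₀.trans hs
  have hsd : s / d < 1 := (div_lt_one hd).2 hs
  filter_upwards [Ioo_mem_nhdsGT one_pos,
    eventually_nhdsGT_zero_rpow_lt (sub_pos.2 hsd) (by positivity : 0 < 1 / (24 * c))]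
    with r ⟨hr, hr₁⟩ hrc N hN
  have hone : 1 < r ^ (-(s / d)) :=
    Real.one_lt_rpow_of_pos_of_lt_one_of_neg hr hr₁ (neg_neg_of_pos (div_pos hs₀ hd))
  set m := ⌈r ^ (-(s / d))⌉₊
  obtain ⟨t, ht, htsep⟩ := hlattice m
  have hcard : Fintype.card (Fin N) ≤ Fintype.card (Fin d → Fin m) := by
    have hpow : (N : ℝ) ≤ (m : ℝ) ^ d := calc
      (N : ℝ) ≤ (r ^ (-(s / d))) ^ d := by
          rwa [← Real.rpow_mul_natCast hr.le, neg_mul, div_mul_cancel₀ _ hd.ne']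
      _ ≤ (m : ℝ) ^ d := by gcongr; exact Nat.le_ceil _
    simpa using (by exact_mod_cast hpow : N ≤ m ^ d)
  obtain ⟨e⟩ := Function.Embedding.nonempty_of_card_le hcard
  have hnorm (v : V) : ‖(3 * r) • v‖ = 3 * r * ‖v‖ := norm_smul_of_nonneg (by positivity) v
  refine ⟨fun i => (3 * r) • t (e i), fun i => ?_, fun i j hij => ?_⟩
  · calc ‖(3 * r) • t (e i)‖ ≤ 3 * r * (c * (2 * r ^ (-(s / d)))) := by
          rw [hnorm]
          gcongr
          exact (ht _).trans (by gcongr; exact Nat.ceil_le_two_mul (by linarith))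
      _ = 6 * c * r ^ (1 - s / d) := by
          rw [sub_eq_add_neg, Real.rpow_add hr, Real.rpow_one]
          ring
      _ ≤ 6 * c * (1 / (24 * c)) := by gcongr
      _ = 1 / 4 := by field_simp; norm_num
  · rw [← smul_sub, hnorm]
    exact le_mul_of_one_le_right (by positivity) (htsep _ _ (e.injective.ne hij))

/-! ### Bilipschitz homeomorphisms with prescribed local behaviour -/

/-- A homeomorphism is bilipschitz with support in `U` if it and its inverse are Lipschitz and it
fixes a neighbourhood of every point outside `U`. -/
def IsBilipSupportedIn {X : Type*} [PseudoMetricSpace X] (U : Set X) (φ : X ≃ₜ X) : Prop :=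
  (∃ C : ℝ≥0, LipschitzWith C φ ∧ LipschitzWith C φ.symm) ∧ ∀ x ∉ U, ∀ᶠ z in 𝓝 x, φ z = z

namespace IsBilipSupportedIn

variable {X : Type*} [PseudoMetricSpace X] {U U' : Set X} {φ ψ : X ≃ₜ X}

protected theorem refl (U : Set X) : IsBilipSupportedIn U (Homeomorph.refl X) :=
  ⟨⟨1, LipschitzWith.id, LipschitzWith.id⟩, fun _ _ => .of_forall fun _ => rfl⟩

protected theorem symm (h : IsBilipSupportedIn U φ) : IsBilipSupportedIn U φ.symm := by
  obtain ⟨⟨C, hC, hCsymm⟩, hsupp⟩ := h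
  exact ⟨⟨C, hCsymm, hC⟩, fun x hx =>
    (hsupp x hx).mono fun z hz => φ.symm_apply_eq.2 hz.symm⟩

protected theorem trans (hφ : IsBilipSupportedIn U φ) (hψ : IsBilipSupportedIn U ψ) :
    IsBilipSupportedIn U (φ.trans ψ) := by
  obtain ⟨⟨C, hC, hCsymm⟩, hsupp⟩ := hφ
  obtain ⟨⟨C', hC', hCsymm'⟩, hsupp'⟩ := hψ
  refine ⟨⟨C' * C, hC'.comp hC, mul_comm C C' ▸ hCsymm.comp hCsymm'⟩, fun x hx => ?_⟩
  filter_upwards [hsupp x hx, hsupp' x hx] with z hz hz'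
  rw [Homeomorph.trans_apply, hz, hz']

theorem mono (h : IsBilipSupportedIn U φ) (hU : U ⊆ U') : IsBilipSupportedIn U' φ :=
  ⟨h.1, fun x hx => h.2 x (notMem_subset hU hx)⟩

end IsBilipSupportedIn

theorem exists_isBilipSupportedIn_id_add {V : Type*} [NormedAddCommGroup V] [NormedSpace ℝ V]
    [CompleteSpace V] {g : V → V} {K : ℝ≥0} (hK : K < 1)
    (hg : LipschitzWith K g) {U : Set V} (hU : ∀ x ∉ U, ∀ᶠ z in 𝓝 x, g z = 0) :
    ∃ φ : V ≃ₜ V, IsBilipSupportedIn U φ ∧ ∀ x, φ x = x + g x := by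
  have happrox : ApproximatesLinearOn (fun x => x + g x)
      ((ContinuousLinearEquiv.refl ℝ V : V ≃L[ℝ] V) : V →L[ℝ] V) univ K := by
    refine fun x _ y _ => ?_
    simpa [add_sub_add_comm] using hg.norm_sub_le x y
  have hanti : AntilipschitzWith (1 - K)⁻¹ fun x => x + g x := by
    simpa using AntilipschitzWith.id.add_lipschitzWith hg (by simpa using hK)
  have hnorm : Subsingleton V ∨
      K < ‖((ContinuousLinearEquiv.refl ℝ V : V ≃L[ℝ] V).symm : V →L[ℝ] V)‖₊⁻¹ := by
    refine (subsingleton_or_nontrivial V).imp_right fun (_ : Nontrivial V) => ?_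
    simpa [ContinuousLinearMap.nnnorm_id] using hK
  refine ⟨happrox.toHomeomorph _ hnorm, ⟨⟨max (1 + K) (1 - K)⁻¹, ?_, ?_⟩, ?_⟩, fun _ => rfl⟩
  · exact (LipschitzWith.id.add hg).weaken (le_max_left _ _)
  · exact (hanti.to_rightInverse (happrox.toHomeomorph _ hnorm).right_inv).weaken
      (le_max_right _ _)
  · exact fun x hx => (hU x hx).mono fun z hz => add_eq_left.2 hz

/-- The piecewise linear cutoff function on `ℝ` which is `1` on `(-∞, R₁]` and `0` on
`[R₂, ∞)`, for `R₁ < R₂`. -/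
noncomputable def cutoff (R₁ R₂ t : ℝ) : ℝ := max 0 (min 1 ((R₂ - t) / (R₂ - R₁)))

section cutoff

variable {R₁ R₂ : ℝ}

theorem cutoff_of_le (h : R₁ < R₂) {t : ℝ} (ht : t ≤ R₁) : cutoff R₁ R₂ t = 1 := by
  have hone : 1 ≤ (R₂ - t) / (R₂ - R₁) := (one_le_div₀ (sub_pos.2 h)).2 (by linarith)
  rw [cutoff, min_eq_left hone, max_eq_right zero_le_one]

theorem cutoff_of_ge (h : R₁ < R₂) {t : ℝ} (ht : R₂ ≤ t) : cutoff R₁ R₂ t = 0 :=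
  max_eq_left <| (min_le_right _ _).trans <|
    div_nonpos_of_nonpos_of_nonneg (sub_nonpos.2 ht) (sub_pos.2 h).le

theorem abs_cutoff_le_one (t : ℝ) : |cutoff R₁ R₂ t| ≤ 1 := by
  rw [abs_of_nonneg (le_max_left _ _)]
  exact max_le zero_le_one (min_le_left _ _)

theorem abs_cutoff_sub_cutoff_le (h : R₁ < R₂) (t u : ℝ) :
    |cutoff R₁ R₂ t - cutoff R₁ R₂ u| ≤ |t - u| / (R₂ - R₁) := calc
  |cutoff R₁ R₂ t - cutoff R₁ R₂ u|
    ≤ |min 1 ((R₂ - t) / (R₂ - R₁)) - min 1 ((R₂ - u) / (R₂ - R₁))| := by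
      simpa [cutoff] using abs_max_sub_max_le_max 0 (min 1 ((R₂ - t) / (R₂ - R₁))) 0 _
  _ ≤ |(R₂ - t) / (R₂ - R₁) - (R₂ - u) / (R₂ - R₁)| := by
      simpa using abs_min_sub_min_le_max 1 ((R₂ - t) / (R₂ - R₁)) 1 _
  _ = |t - u| / (R₂ - R₁) := by
      rw [← sub_div, abs_div, abs_of_pos (sub_pos.2 h), sub_sub_sub_cancel_left, abs_sub_comm]

theorem abs_cutoff_norm_sub_le {V : Type*} [SeminormedAddCommGroup V] (h : R₁ < R₂) (v w : V) :
    |cutoff R₁ R₂ ‖v‖ - cutoff R₁ R₂ ‖w‖| ≤ ‖v - w‖ / (R₂ - R₁) :=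
  (abs_cutoff_sub_cutoff_le h _ _).trans <|
    div_le_div_of_nonneg_right (abs_norm_sub_norm_le v w) (sub_pos.2 h).le

theorem norm_cutoff_smul_sub_le {V : Type*} [SeminormedAddCommGroup V] [NormedSpace ℝ V]
    (h : R₁ < R₂) (hR₂ : 0 ≤ R₂) (v w : V) :
    ‖cutoff R₁ R₂ ‖v‖ • v - cutoff R₁ R₂ ‖w‖ • w‖ ≤ (R₂ / (R₂ - R₁) + 1) * ‖v - w‖ := by
  have : 0 < R₂ - R₁ := sub_pos.2 h
  wlog hv : ‖v‖ ≤ R₂ generalizing v w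
  · by_cases hw : ‖w‖ ≤ R₂
    · simpa only [norm_sub_rev] using this w v hw
    · rw [cutoff_of_ge h (not_le.1 hv).le, cutoff_of_ge h (not_le.1 hw).le, zero_smul, zero_smul,
        sub_zero, norm_zero]
      positivity
  calc ‖cutoff R₁ R₂ ‖v‖ • v - cutoff R₁ R₂ ‖w‖ • w‖
    _ = ‖(cutoff R₁ R₂ ‖v‖ - cutoff R₁ R₂ ‖w‖) • v + cutoff R₁ R₂ ‖w‖ • (v - w)‖ := by
        congr 1
        module
    _ ≤ |cutoff R₁ R₂ ‖v‖ - cutoff R₁ R₂ ‖w‖| * ‖v‖ + |cutoff R₁ R₂ ‖w‖| * ‖v - w‖ := by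
        simpa only [norm_smul, Real.norm_eq_abs] using norm_add_le
          ((cutoff R₁ R₂ ‖v‖ - cutoff R₁ R₂ ‖w‖) • v) (cutoff R₁ R₂ ‖w‖ • (v - w))
    _ ≤ ‖v - w‖ / (R₂ - R₁) * R₂ + 1 * ‖v - w‖ := by
        gcongr
        exacts [abs_cutoff_norm_sub_le h v w, abs_cutoff_le_one _]
    _ = (R₂ / (R₂ - R₁) + 1) * ‖v - w‖ := by ring

theorem norm_sum_cutoff_smul_sub_le {V ι : Type*} [SeminormedAddCommGroup V] [NormedSpace ℝ V]
    [Fintype ι] (h : R₁ < R₂) (hR₂ : 0 ≤ R₂) (a : ι → V) (x y : V) :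
    ‖∑ i, cutoff R₁ R₂ ‖x - a i‖ • (x - a i) - ∑ i, cutoff R₁ R₂ ‖y - a i‖ • (y - a i)‖ ≤
      Fintype.card ι * ((R₂ / (R₂ - R₁) + 1) * ‖x - y‖) := by
  rw [← Finset.sum_sub_distrib, ← nsmul_eq_mul, ← Finset.card_univ, ← Finset.sum_const]
  refine norm_sum_le_of_le _ fun i _ => ?_
  simpa only [sub_sub_sub_cancel_right] using norm_cutoff_smul_sub_le h hR₂ (x - a i) (y - a i)

end cutoff

section Shrink

variable {V ι : Type*} [NormedAddCommGroup V] [NormedSpace ℝ V] [CompleteSpace V]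
  {a : ι → V} {s R : ℝ}

theorem exists_shrink_of_close_to_one [Fintype ι] (hs : 0 < s) (ha : ∀ i, ‖a i‖ + 3 / 2 * s < R)
    (hsep : ∀ i j, i ≠ j → 3 * s ≤ ‖a i - a j‖) {q : ℝ} (hq₁ : q ≤ 1)
    (hq : (1 - q) * (10 * (Fintype.card ι + 1)) ≤ 1) :
    ∃ φ : V ≃ₜ V, IsBilipSupportedIn (ball 0 R) φ ∧
      ∀ i u, ‖u‖ ≤ 9 / 8 * s → φ (a i + u) = a i + q • u := by
  have hlt : 9 / 8 * s < 3 / 2 * s := by linarith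
  set χ : V → ℝ := fun v => cutoff (9 / 8 * s) (3 / 2 * s) ‖v‖
  have hχ {v} (hv : 3 / 2 * s ≤ ‖v‖) : χ v = 0 := cutoff_of_ge hlt hv
  have hconst : 3 / 2 * s / (3 / 2 * s - 9 / 8 * s) + 1 = 5 := by field_simp; norm_num
  set g : V → V := fun x => (q - 1) • ∑ i, χ (x - a i) • (x - a i)
  have hlip : LipschitzWith (1 / 2) g := by
    refine LipschitzWith.of_dist_le_mul fun x y => ?_
    rw [dist_eq_norm, dist_eq_norm, ← smul_sub, norm_smul, Real.norm_eq_abs, abs_sub_comm,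
      abs_of_nonneg (sub_nonneg.2 hq₁)]
    calc (1 - q) * ‖∑ i, χ (x - a i) • (x - a i) - ∑ i, χ (y - a i) • (y - a i)‖
      _ ≤ (1 - q) * (Fintype.card ι * (5 * ‖x - y‖)) :=
          mul_le_mul_of_nonneg_left (hconst ▸ norm_sum_cutoff_smul_sub_le hlt (by positivity) a x y)
            (sub_nonneg.2 hq₁)
      _ ≤ (1 - q) * (10 * (Fintype.card ι + 1)) * (1 / 2 * ‖x - y‖) := by
          nlinarith [mul_nonneg (sub_nonneg.2 hq₁) (norm_nonneg (x - y))]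
      _ ≤ ((1 / 2 : ℝ≥0) : ℝ) * ‖x - y‖ := by
          push_cast
          exact mul_le_of_le_one_left (by positivity) hq
  have hsupp : ∀ x ∉ ball 0 R, ∀ᶠ z in 𝓝 x, g z = 0 := by
    intro x hx
    have hnhds (i) : ∀ᶠ z in 𝓝 x, 3 / 2 * s < ‖z - a i‖ := by
      refine (by fun_prop : Continuous fun z => ‖z - a i‖).continuousAt.eventually_const_lt ?_
      linarith [ha i, norm_sub_norm_le x (a i), not_lt.1 (mem_ball_zero_iff.not.1 hx)]
    filter_upwards [eventually_all.2 hnhds] with z hz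
    simp only [g, hχ (hz _).le, zero_smul, Finset.sum_const_zero, smul_zero]
  obtain ⟨φ, hφ, hφg⟩ :=
    exists_isBilipSupportedIn_id_add (NNReal.half_lt_self one_ne_zero) hlip hsupp
  refine ⟨φ, hφ, fun i u hu => ?_⟩
  have hsingle : ∑ j, χ (a i + u - a j) • (a i + u - a j) = u := by
    rw [Finset.sum_eq_single_of_mem i (Finset.mem_univ i), add_sub_cancel_left]
    · simp only [χ, cutoff_of_le hlt hu, one_smul]
    · intro j _ hji
      have hfar : ‖a i - a j‖ - ‖u‖ ≤ ‖a i + u - a j‖ := by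
        simpa [sub_add_eq_add_sub] using norm_sub_le_norm_add (a i - a j) u
      rw [hχ (by linarith [hsep i j hji.symm]), zero_smul]
  rw [hφg]
  simp only [g, hsingle]
  module

theorem exists_shrink [Finite ι] (hs : 0 < s) (ha : ∀ i, ‖a i‖ + 3 / 2 * s < R)
    (hsep : ∀ i j, i ≠ j → 3 * s ≤ ‖a i - a j‖) {τ : ℝ} (hτ₀ : 0 < τ) (hτ₁ : τ ≤ 1) :
    ∃ φ : V ≃ₜ V, IsBilipSupportedIn (ball 0 R) φ ∧
      ∀ i u, ‖u‖ ≤ 9 / 8 * s → φ (a i + u) = a i + τ • u := by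
  cases nonempty_fintype ι
  obtain ⟨k, hk₀, hk⟩ : ∃ k : ℕ, k ≠ 0 ∧
      (1 - τ ^ (k : ℝ)⁻¹) * (10 * (Fintype.card ι + 1)) < 1 := by
    have hlim : Tendsto (fun k : ℕ => (1 - τ ^ (k : ℝ)⁻¹) * (10 * (Fintype.card ι + 1))) atTop
        (𝓝 ((1 - τ ^ (0 : ℝ)) * (10 * (Fintype.card ι + 1)))) :=
      ((tendsto_const_nhds.rpow tendsto_inv_atTop_nhds_zero_nat
        (Or.inl hτ₀.ne')).const_sub 1).mul_const _
    have hev := hlim.eventually_lt_const (u := 1) (by simp)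
    exact ((eventually_ne_atTop 0).and hev).exists
  set q := τ ^ (k : ℝ)⁻¹
  have hq₀ : 0 < q := Real.rpow_pos_of_pos hτ₀ _
  have hq₁ : q ≤ 1 := Real.rpow_le_one hτ₀.le hτ₁ (by positivity)
  obtain ⟨φ, hφ, hφq⟩ := exists_shrink_of_close_to_one hs ha hsep hq₁ hk.le
  have hiterate (j : ℕ) : ∃ ψ : V ≃ₜ V, IsBilipSupportedIn (ball 0 R) ψ ∧
      ∀ i u, ‖u‖ ≤ 9 / 8 * s → ψ (a i + u) = a i + q ^ j • u := by
    induction j with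
    | zero => exact ⟨_, .refl _, fun i u _ => by simp⟩
    | succ j ih =>
      obtain ⟨ψ, hψ, hψq⟩ := ih
      refine ⟨ψ.trans φ, hψ.trans hφ, fun i u hu => ?_⟩
      have hnorm : ‖q ^ j • u‖ ≤ 9 / 8 * s := by
        rw [norm_smul_of_nonneg (by positivity)]
        exact (mul_le_of_le_one_left (norm_nonneg u) (pow_le_one₀ hq₀.le hq₁)).trans hu
      rw [Homeomorph.trans_apply, hψq i u hu, hφq i _ hnorm, smul_smul, ← pow_succ']
  simpa only [q, Real.rpow_inv_natCast_pow hτ₀.le hk₀] using hiterate k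

end Shrink

/-- The configurations `c` and `c'` of points are related if some bilipschitz homeomorphism
supported in `U` translates a neighbourhood of each `c i` to a neighbourhood of `c' i`. -/
def ConfigRel {V ι : Type*} [NormedAddCommGroup V] (U : Set V) (c c' : ι → V) : Prop :=
  ∃ φ : V ≃ₜ V, IsBilipSupportedIn U φ ∧ ∀ i, ∀ᶠ v in 𝓝 (0 : V), φ (c i + v) = c' i + v

namespace ConfigRel

variable {V ι : Type*} [NormedAddCommGroup V] {U : Set V} {c c' c'' : ι → V}

protected theorem refl (U : Set V) (c : ι → V) : ConfigRel U c c :=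
  ⟨_, .refl U, fun _ => .of_forall fun _ => rfl⟩

protected theorem symm (h : ConfigRel U c c') : ConfigRel U c' c := by
  obtain ⟨φ, hφ, htrans⟩ := h
  exact ⟨φ.symm, hφ.symm, fun i => (htrans i).mono fun v hv => φ.symm_apply_eq.2 hv.symm⟩

protected theorem trans (h : ConfigRel U c c') (h' : ConfigRel U c' c'') : ConfigRel U c c'' := by
  obtain ⟨φ, hφ, htrans⟩ := h
  obtain ⟨φ', hφ', htrans'⟩ := h'
  refine ⟨φ.trans φ', hφ.trans hφ', fun i => ?_⟩
  filter_upwards [htrans i, htrans' i] with v hv hv'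
  rw [Homeomorph.trans_apply, hv, hv']

end ConfigRel

section Move

variable {V ι : Type*} [NormedAddCommGroup V] [NormedSpace ℝ V] [CompleteSpace V] {U : Set V}
  {c c' : ι → V}

theorem ConfigRel.of_dist_lt {x y : V} {R : ℝ} (hR : 0 < R) (hU : closedBall x R ⊆ U)
    (hxy : dist y x < R / 4) : ConfigRel U (fun _ : Unit => x) fun _ => y := by
  have hlt : R / 2 < R := half_lt_self hR
  set g : V → V := fun z => cutoff (R / 2) R ‖z - x‖ • (y - x)
  have hlip : LipschitzWith (1 / 2) g := by
    refine LipschitzWith.of_dist_le_mul fun z w => ?_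
    rw [dist_eq_norm, dist_eq_norm, ← sub_smul, norm_smul, Real.norm_eq_abs]
    calc |cutoff (R / 2) R ‖z - x‖ - cutoff (R / 2) R ‖w - x‖| * ‖y - x‖
      _ ≤ ‖z - w‖ / (R - R / 2) * (R / 4) := by
          rw [dist_eq_norm] at hxy
          gcongr
          simpa only [sub_sub_sub_cancel_right] using abs_cutoff_norm_sub_le hlt (z - x) (w - x)
      _ = ((1 / 2 : ℝ≥0) : ℝ) * ‖z - w‖ := by
          push_cast
          field_simp
          norm_num
  have hsupp : ∀ z ∉ closedBall x R, ∀ᶠ w in 𝓝 z, g w = 0 := fun z hz =>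
    mem_of_superset (isClosed_closedBall.isOpen_compl.mem_nhds hz) fun w (hw : ¬dist w x ≤ R) => by
      change cutoff (R / 2) R ‖w - x‖ • (y - x) = 0
      rw [cutoff_of_ge hlt (dist_eq_norm w x ▸ (not_le.1 hw).le), zero_smul]
  obtain ⟨φ, hφ, hφg⟩ :=
    exists_isBilipSupportedIn_id_add (NNReal.half_lt_self one_ne_zero) hlip hsupp
  refine ⟨φ, hφ.mono hU, fun _ => ?_⟩
  filter_upwards [closedBall_mem_nhds (0 : V) (half_pos hR)] with v hv
  have hone : cutoff (R / 2) R ‖x + v - x‖ = 1 :=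
    cutoff_of_le hlt (by simpa using hv)
  rw [hφg]
  simp only [g, hone]
  module

theorem ConfigRel.of_isPreconnected (hU : IsPreconnected U) (hUo : IsOpen U) {x y : V}
    (hx : x ∈ U) (hy : y ∈ U) : ConfigRel U (fun _ : Unit => x) fun _ => y := by
  refine hU.induction₂ (fun x y => ConfigRel U (fun _ : Unit => x) fun _ => y) (fun z hz => ?_)
    (fun _ _ _ _ _ _ h h' => h.trans h') (fun _ _ _ _ h => h.symm) hx hy
  obtain ⟨R, hR, hRU⟩ := nhds_basis_closedBall.mem_iff.1 (hUo.mem_nhds hz)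
  filter_upwards [mem_nhdsWithin_of_mem_nhds (ball_mem_nhds z (by positivity : 0 < R / 4))]
    with w hw
  exact .of_dist_lt hR hRU hw

theorem isPreconnected_ball_diff_of_countable {V : Type*} [NormedAddCommGroup V] [NormedSpace ℝ V]
    (hV : 1 < Module.rank ℝ V) (x : V) (R : ℝ) {s : Set V} (hs : s.Countable) :
    IsPreconnected (ball x R \ s) := by
  obtain hR | hR := le_or_gt R 0
  · simp [ball_eq_empty.2 hR, isPreconnected_empty]
  set e := OpenPartialHomeomorph.univBall x R
  have hsource : e.source = univ := OpenPartialHomeomorph.univBall_source x R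
  have htarget : e.target = ball x R := OpenPartialHomeomorph.univBall_target x hR
  have hinj : Function.Injective e := injOn_univ.1 (hsource ▸ e.injOn)
  have hrange : range e = ball x R := by
    rw [← htarget, ← e.image_source_eq_target, hsource, image_univ]
  have himage : e '' (e ⁻¹' s)ᶜ = ball x R \ s := by
    rw [← preimage_compl, image_preimage_eq_range_inter, hrange, sdiff_eq]
  rw [← himage]
  exact ((hs.preimage_of_injOn hinj.injOn).isConnected_compl_of_one_lt_rank
    hV).isPreconnected.image e (OpenPartialHomeomorph.continuous_univBall x R).continuousOn

namespace ConfigRel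

variable {V ι : Type*} [NormedAddCommGroup V] [NormedSpace ℝ V] [CompleteSpace V] {R : ℝ}
  {c c' : ι → V}

theorem update [Finite ι] [DecidableEq ι] (hV : 1 < Module.rank ℝ V) {i : ι} {x : V}
    (hci : c i ∈ ball 0 R) (hx : x ∈ ball 0 R) (hne : ∀ j ≠ i, c j ≠ c i)
    (hne' : ∀ j ≠ i, c j ≠ x) : ConfigRel (ball 0 R) c (Function.update c i x) := by
  set U := ball (0 : V) R \ c '' {i}ᶜ
  have hfinite : (c '' {i}ᶜ).Finite := Set.toFinite _
  obtain ⟨φ, hφ, htrans⟩ := of_isPreconnected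
    (isPreconnected_ball_diff_of_countable hV (0 : V) R hfinite.countable)
    (isOpen_ball.sdiff hfinite.isClosed)
    (show c i ∈ U from ⟨hci, by simpa using hne⟩) (show x ∈ U from ⟨hx, by simpa using hne'⟩)
  refine ⟨φ, hφ.mono sdiff_subset, fun j => ?_⟩
  obtain rfl | hj := eq_or_ne j i
  · simpa using htrans ()
  · have hfix : ∀ᶠ z in 𝓝 (c j), φ z = z := hφ.2 _ fun h => h.2 (mem_image_of_mem c hj)
    have hadd : Tendsto (fun v => c j + v) (𝓝 0) (𝓝 (c j)) := by
      simpa using (continuous_const_add (c j)).tendsto 0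
    simpa [hj] using hadd.eventually hfix

theorem of_injective_of_ne [Finite ι] (hV : 1 < Module.rank ℝ V)
    (hc : ∀ i, c i ∈ ball 0 R) (hc' : ∀ i, c' i ∈ ball 0 R) (hinj : Function.Injective c)
    (hinj' : Function.Injective c') (hne : ∀ i j, c i ≠ c' j) : ConfigRel (ball 0 R) c c' := by
  classical
  cases nonempty_fintype ι
  have hpiecewise (S : Finset ι) : ConfigRel (ball 0 R) c (S.piecewise c' c) := by
    induction S using Finset.induction_on with
    | empty => simpa using ConfigRel.refl _ c
    | insert k S hk ih =>
      rw [Finset.piecewise_insert]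
      refine ih.trans (update hV (by simpa [hk] using hc k) (hc' k) (fun j hj => ?_)
        fun j hj => ?_) <;> by_cases hjS : j ∈ S
      · simpa [hjS, hk] using (hne k j).symm
      · simpa [hjS, hk] using hinj.ne hj
      · simpa [hjS] using hinj'.ne hj
      · simpa [hjS] using hne j k
  simpa using hpiecewise Finset.univ

theorem of_injective [Finite ι] (hV : 1 < Module.rank ℝ V) (hc : ∀ i, c i ∈ ball 0 R)
    (hc' : ∀ i, c' i ∈ ball 0 R) (hinj : Function.Injective c) (hinj' : Function.Injective c') :
    ConfigRel (ball 0 R) c c' := by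
  obtain _ | ⟨⟨i₀⟩⟩ := isEmpty_or_nonempty ι
  · exact Subsingleton.elim c c' ▸ .refl _ c
  have : Nontrivial V := rank_pos_iff_nontrivial.1 (zero_lt_one.trans hV)
  have : Infinite ↑(ball (0 : V) R \ (range c ∪ range c')) :=
    ((infinite_of_mem_nhds (0 : V) (ball_mem_nhds 0 (pos_of_mem_ball (hc i₀)))).sdiff
      ((finite_range c).union (finite_range c'))).to_subtype
  let e : ι ↪ ↑(ball (0 : V) R \ (range c ∪ range c')) :=
    ((Finite.equivFin ι).toEmbedding.trans Fin.valEmbedding).trans (Infinite.natEmbedding _)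
  have hinj_e : Function.Injective fun i => (e i : V) := Subtype.val_injective.comp e.injective
  exact (of_injective_of_ne hV hc (fun i => (e i).2.1) hinj hinj_e
      fun i j h => (e j).2.2 (.inl ⟨i, h⟩)).trans
    (of_injective_of_ne hV (fun i => (e i).2.1) hc' hinj_e hinj'
      fun i j h => (e i).2.2 (.inr ⟨j, h.symm⟩))

end ConfigRel

end Move

theorem injective_of_le_norm_sub {V ι : Type*} [SeminormedAddCommGroup V] {a : ι → V}
    {δ : ℝ} (hδ : 0 < δ) (hsep : ∀ i j, i ≠ j → δ ≤ ‖a i - a j‖) : Function.Injective a := by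
  intro i j hij
  by_contra hne
  exact (hsep i j hne).not_gt (by rwa [hij, sub_self, norm_zero])

theorem exists_isBilipSupportedIn_map_balls {V ι : Type*} [NormedAddCommGroup V]
    [NormedSpace ℝ V] [CompleteSpace V] [Finite ι] (hV : 1 < Module.rank ℝ V) {a b : ι → V}
    {r ρ R : ℝ} (hr : 0 < r) (hρ : 0 < ρ) (ha : ∀ i, ‖a i‖ + 3 / 2 * r < R)
    (hasep : ∀ i j, i ≠ j → 3 * r ≤ ‖a i - a j‖) (hb : ∀ i, ‖b i‖ + 3 / 2 * ρ < R)
    (hbsep : ∀ i j, i ≠ j → 3 * ρ ≤ ‖b i - b j‖) :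
    ∃ φ : V ≃ₜ V, IsBilipSupportedIn (ball 0 R) φ ∧
      ∀ i u, ‖u‖ ≤ 9 / 8 → φ (a i + r • u) = b i + ρ • u := by
  -- The balls are shrunk to a tiny size, their centres are moved, and the balls are expanded again.
  obtain ⟨φ, hφ, htrans⟩ := ConfigRel.of_injective hV
    (fun i => mem_ball_zero_iff.2 (show ‖a i‖ < R by linarith [ha i]))
    (fun i => mem_ball_zero_iff.2 (show ‖b i‖ < R by linarith [hb i]))
    (injective_of_le_norm_sub (by positivity : 0 < 3 * r) hasep)
    (injective_of_le_norm_sub (by positivity : 0 < 3 * ρ) hbsep)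
  obtain ⟨ε, hε, hball⟩ := nhds_basis_closedBall.eventually_iff.1 (eventually_all.2 htrans)
  set η := min (ε / 2) (min r ρ)
  have hη : 0 < η := by positivity
  have hηr : η / r ≤ 1 := (div_le_one hr).2 ((min_le_right _ _).trans (min_le_left _ _))
  have hηρ : η / ρ ≤ 1 := (div_le_one hρ).2 ((min_le_right _ _).trans (min_le_right _ _))
  obtain ⟨ψ, hψ, hψη⟩ := exists_shrink hr ha hasep (div_pos hη hr) hηr
  obtain ⟨χ, hχ, hχη⟩ := exists_shrink hρ hb hbsep (div_pos hη hρ) hηρ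
  refine ⟨ψ.trans (φ.trans χ.symm), hψ.trans (hφ.trans hχ.symm), fun i u hu => ?_⟩
  have hscale {s : ℝ} (hs : 0 < s) : ‖s • u‖ ≤ 9 / 8 * s := by
    rw [norm_smul_of_nonneg hs.le, mul_comm]
    gcongr
  have hηu : ‖η • u‖ ≤ ε := by
    linarith [hscale hη, (min_le_left _ _ : η ≤ ε / 2)]
  rw [Homeomorph.trans_apply, Homeomorph.trans_apply, hψη i _ (hscale hr),
    Homeomorph.symm_apply_eq, hχη i _ (hscale hρ), smul_smul, smul_smul,
    div_mul_cancel₀ _ hr.ne', div_mul_cancel₀ _ hρ.ne']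
  exact hball (mem_closedBall_zero_iff.2 hηu) i

/-! ### Systems of separated balls -/

/-- The centres and the common ratio of finitely many similarities `u ↦ center i + ratio • u` of
`V`. The numerical bounds keep the images of the ball of radius `3/2` disjoint and within
distance `3/4` of the origin. -/
structure BallSystem (V ι : Type*) [NormedAddCommGroup V] [NormedSpace ℝ V] where
  ratio : ℝ
  center : ι → V
  ratio_pos : 0 < ratio
  ratio_le : ratio ≤ 1 / 8
  norm_center_le : ∀ i, ‖center i‖ ≤ 1 / 2
  le_norm_sub : ∀ i j, i ≠ j → 3 * ratio ≤ ‖center i - center j‖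

namespace BallSystem

variable {V ι : Type*} [NormedAddCommGroup V] [NormedSpace ℝ V] (A : BallSystem V ι)

theorem ratio_lt_one : A.ratio < 1 :=
  A.ratio_le.trans_lt (by norm_num)

/-- The similarity `u ↦ center i + ratio • u`. -/
noncomputable def sim (i : ι) : V ≃ₜ V :=
  (Homeomorph.smulOfNeZero A.ratio A.ratio_pos.ne').trans (Homeomorph.addLeft (A.center i))

theorem sim_apply (i : ι) (u : V) : A.sim i u = A.center i + A.ratio • u :=
  rfl

theorem dist_sim (i : ι) (u v : V) : dist (A.sim i u) (A.sim i v) = A.ratio * dist u v := by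
  rw [sim_apply, sim_apply, dist_add_left, dist_smul₀, Real.norm_of_nonneg A.ratio_pos.le]

theorem dist_sim_symm (i : ι) (x y : V) :
    A.ratio * dist ((A.sim i).symm x) ((A.sim i).symm y) = dist x y := by
  rw [← dist_sim, Homeomorph.apply_symm_apply, Homeomorph.apply_symm_apply]

theorem norm_sim_sub_center (i : ι) (u : V) : ‖A.sim i u - A.center i‖ = A.ratio * ‖u‖ := by
  rw [sim_apply, add_sub_cancel_left, norm_smul, Real.norm_of_nonneg A.ratio_pos.le]

theorem ratio_mul_norm_sim_symm (i : ι) (x : V) :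
    A.ratio * ‖(A.sim i).symm x‖ = ‖x - A.center i‖ := by
  rw [← norm_sim_sub_center, Homeomorph.apply_symm_apply]

theorem norm_sim_le (i : ι) {u : V} (hu : ‖u‖ ≤ 9 / 8) : ‖A.sim i u‖ ≤ 3 / 4 := by
  have hsmul : A.ratio * ‖u‖ ≤ 1 / 8 * (9 / 8) :=
    mul_le_mul A.ratio_le hu (norm_nonneg _) (by norm_num)
  have := norm_sub_norm_le (A.sim i u) (A.center i)
  rw [norm_sim_sub_center] at this
  linarith [A.norm_center_le i]

theorem le_norm_sim_symm_sim {i j : ι} (hij : i ≠ j) {u : V} (hu : ‖u‖ ≤ 9 / 8) :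
    7 / 8 ≤ ‖(A.sim j).symm (A.sim i u)‖ := by
  have hcenter := norm_sub_le_norm_sub_add_norm_sub (A.center i) (A.sim i u) (A.center j)
  rw [norm_sub_rev (A.center i) (A.sim i u), norm_sim_sub_center,
    ← ratio_mul_norm_sim_symm A j (A.sim i u)] at hcenter
  refine le_of_mul_le_mul_left ?_ A.ratio_pos
  linarith [A.le_norm_sub i j hij, mul_le_mul_of_nonneg_left hu A.ratio_pos.le, A.ratio_pos]

theorem le_norm_sim_symm (i : ι) {x : V} (hx : 7 / 8 ≤ ‖x‖) : 7 / 8 ≤ ‖(A.sim i).symm x‖ := by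
  have hnorm := norm_sub_norm_le x (A.center i)
  rw [← ratio_mul_norm_sim_symm] at hnorm
  refine le_of_mul_le_mul_left ?_ A.ratio_pos
  linarith [A.norm_center_le i, A.ratio_le]

theorem exists_eq_sim_or_forall_lt (x : V) :
    (∃ i u, ‖u‖ ≤ 9 / 8 ∧ x = A.sim i u) ∨ ∀ i, 9 / 8 < ‖(A.sim i).symm x‖ := by
  rw [or_iff_not_imp_right]
  intro h
  obtain ⟨i, hi⟩ := not_forall.1 h
  exact ⟨i, (A.sim i).symm x, not_lt.1 hi, ((A.sim i).apply_symm_apply x).symm⟩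

theorem norm_le_of_dist_sim_le (i : ι) {u v : V} (hu : ‖u‖ ≤ 1)
    (h : dist (A.sim i v) (A.sim i u) ≤ 1 / 8 * A.ratio) : ‖v‖ ≤ 9 / 8 := by
  rw [dist_sim, mul_comm] at h
  have hdist := le_of_mul_le_mul_right h A.ratio_pos
  have := norm_sub_norm_le v u
  rw [← dist_eq_norm] at this
  linarith

/-- The union of the images of the closed unit ball under the compositions of `k` of the
similarities, except that the level `0` is the whole space, so that the successive differences of
the levels exhaust the complement of the limit set. -/
def level : ℕ → Set V
  | 0 => univ
  | k + 1 => ⋃ i, A.sim i '' (level k ∩ closedBall 0 1)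

theorem mem_level_succ {k : ℕ} {x : V} :
    x ∈ A.level (k + 1) ↔ ∃ i, ∃ u ∈ A.level k, ‖u‖ ≤ 1 ∧ A.sim i u = x := by
  simp [level, and_assoc]

theorem sim_mem_level_succ {k : ℕ} (i : ι) {u : V} (hu : u ∈ A.level k) (hu₁ : ‖u‖ ≤ 1) :
    A.sim i u ∈ A.level (k + 1) :=
  A.mem_level_succ.2 ⟨i, u, hu, hu₁, rfl⟩

theorem norm_le_of_mem_level_succ {k : ℕ} {x : V} (hx : x ∈ A.level (k + 1)) : ‖x‖ ≤ 3 / 4 := by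
  obtain ⟨i, u, -, hu, rfl⟩ := A.mem_level_succ.1 hx
  exact A.norm_sim_le i (hu.trans (by norm_num))

theorem isClosed_level [Finite ι] (k : ℕ) : IsClosed (A.level k) := by
  induction k with
  | zero => exact isClosed_univ
  | succ k ih =>
    exact isClosed_iUnion_of_finite fun i =>
      (A.sim i).isClosedMap _ (ih.inter isClosed_closedBall)

theorem exists_mem_level_diff {x : V} (hx : x ∉ ⋂ k, A.level k) :
    ∃ k, x ∈ A.level k \ A.level (k + 1) := by
  by_contra! h
  refine hx (mem_iInter.2 fun k => ?_)
  induction k with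
  | zero => trivial
  | succ k ih => exact not_not.1 fun hk => h k ⟨ih, hk⟩

/-! ### Addresses of the points of the limit set -/

/-- The point of the limit set of the system whose address is `ω`. -/
noncomputable def point (ω : ℕ → ι) : V :=
  ∑' k, A.ratio ^ k • A.center (ω k)

theorem norm_pow_smul_center_le (ω : ℕ → ι) (k : ℕ) :
    ‖A.ratio ^ k • A.center (ω k)‖ ≤ A.ratio ^ k * (1 / 2) := by
  rw [norm_smul, norm_pow, Real.norm_of_nonneg A.ratio_pos.le]
  exact mul_le_mul_of_nonneg_left (A.norm_center_le _) (pow_pos A.ratio_pos k).le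

theorem norm_point_le (ω : ℕ → ι) : ‖A.point ω‖ ≤ 1 := by
  have hgeom := (hasSum_geometric_of_lt_one A.ratio_pos.le A.ratio_lt_one).mul_right (1 / 2)
  refine (tsum_of_norm_bounded hgeom (A.norm_pow_smul_center_le ω)).trans ?_
  rw [inv_mul_le_iff₀ (sub_pos.2 A.ratio_lt_one)]
  linarith [A.ratio_le]

section Complete

variable [CompleteSpace V]

theorem summable_pow_smul_center (ω : ℕ → ι) :
    Summable fun k => A.ratio ^ k • A.center (ω k) :=
  .of_norm_bounded ((summable_geometric_of_lt_one A.ratio_pos.le A.ratio_lt_one).mul_right _)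
    (A.norm_pow_smul_center_le ω)

theorem point_eq_sim (ω : ℕ → ι) : A.point ω = A.sim (ω 0) (A.point fun k => ω (k + 1)) := by
  rw [point, (A.summable_pow_smul_center ω).tsum_eq_zero_add, sim_apply, point,
    ← (A.summable_pow_smul_center fun k => ω (k + 1)).tsum_const_smul]
  simp only [pow_zero, one_smul, pow_succ', mul_smul]

theorem separatesWords_point : SeparatesWords A.point A.ratio A.ratio := by
  intro ω ω' k
  induction k generalizing ω ω' with
  | zero =>
    intro _ hne
    rw [point_eq_sim A ω, point_eq_sim A ω', pow_zero, mul_one, dist_eq_norm]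
    set u := A.point fun k => ω (k + 1)
    set v := A.point fun k => ω' (k + 1)
    have hsplit : A.sim (ω 0) u - A.sim (ω' 0) v =
        A.center (ω 0) - A.center (ω' 0) - A.ratio • (v - u) := by
      simp only [sim_apply]
      module
    have hsmul : ‖A.ratio • (v - u)‖ ≤ A.ratio * 2 := by
      rw [norm_smul, Real.norm_of_nonneg A.ratio_pos.le]
      have := norm_sub_le v u
      exact mul_le_mul_of_nonneg_left
        (by linarith [A.norm_point_le fun k => ω (k + 1), A.norm_point_le fun k => ω' (k + 1)])
        A.ratio_pos.le
    rw [hsplit]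
    linarith [A.le_norm_sub _ _ hne,
      norm_sub_norm_le (A.center (ω 0) - A.center (ω' 0)) (A.ratio • (v - u))]
  | succ k ih =>
    intro heq hne
    rw [point_eq_sim A ω, point_eq_sim A ω', heq 0 k.succ_pos, dist_sim, pow_succ']
    exact mul_le_mul_of_nonneg_left
      (ih (fun k => ω (k + 1)) (fun k => ω' (k + 1)) (fun i hi => heq _ (by lia)) hne)
      A.ratio_pos.le

end Complete

end BallSystem

/-! ### Self-similar extensions -/

section SelfSimilar

variable {V ι : Type*} [NormedAddCommGroup V]

/-- `Ψ` is a continuous map of the closed ball of radius `7/8` into itself, extended by the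
identity. -/
structure IsSupportedInBall (Ψ : V → V) : Prop where
  continuous : Continuous Ψ
  apply_eq_self : ∀ x, 7 / 8 ≤ ‖x‖ → Ψ x = x
  norm_apply_le : ∀ x, ‖x‖ ≤ 7 / 8 → ‖Ψ x‖ ≤ 7 / 8

namespace IsSupportedInBall

theorem id : IsSupportedInBall (id : V → V) :=
  ⟨continuous_id, fun _ _ => rfl, fun _ h => h⟩

theorem norm_apply_le_of_le {Ψ : V → V} (h : IsSupportedInBall Ψ) {t : ℝ} (ht : 7 / 8 ≤ t) {x : V}
    (hx : ‖x‖ ≤ t) : ‖Ψ x‖ ≤ t := by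
  obtain hx' | hx' := le_total ‖x‖ (7 / 8)
  · exact (h.norm_apply_le x hx').trans ht
  · rwa [h.apply_eq_self x hx']

theorem comp {Ψ Ψ' : V → V} (h : IsSupportedInBall Ψ) (h' : IsSupportedInBall Ψ') :
    IsSupportedInBall (Ψ ∘ Ψ') where
  continuous := h.continuous.comp h'.continuous
  apply_eq_self x hx := by
    rw [Function.comp_apply, h'.apply_eq_self x hx, h.apply_eq_self x hx]
  norm_apply_le x hx := h.norm_apply_le _ (h'.norm_apply_le x hx)

theorem dist_apply_le {Ψ Ψ' : V → V} (h : IsSupportedInBall Ψ) (h' : IsSupportedInBall Ψ')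
    (x : V) : dist (Ψ x) (Ψ' x) ≤ 2 := by
  obtain hx | hx := le_total ‖x‖ (7 / 8)
  · linarith [dist_le_norm_add_norm (Ψ x) (Ψ' x), h.norm_apply_le x hx, h'.norm_apply_le x hx]
  · rw [h.apply_eq_self x hx, h'.apply_eq_self x hx, dist_self]
    norm_num

end IsSupportedInBall

variable [NormedSpace ℝ V]

theorem IsSupportedInBall.eq_self_of_apply_sim {Ψ : V → V} (h : IsSupportedInBall Ψ)
    (A : BallSystem V ι)
    (hsim : ∀ i u, ‖u‖ ≤ 9 / 8 → Ψ (A.sim i u) = A.sim i (Ψ u))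
    (hfar : ∀ x, (∀ i, 9 / 8 < ‖(A.sim i).symm x‖) → Ψ x = x) (x : V) : Ψ x = x := by
  refine eq_of_forall_dist_le_mul_pow (C := 2) A.ratio_pos.le A.ratio_lt_one fun k => ?_
  induction k generalizing x with
  | zero => simpa using h.dist_apply_le .id x
  | succ k ih =>
    obtain ⟨i, u, hu, rfl⟩ | hx := A.exists_eq_sim_or_forall_lt x
    · rw [hsim i u hu, A.dist_sim, pow_succ, ← mul_assoc, mul_comm]
      exact mul_le_mul_of_nonneg_right (ih u) A.ratio_pos.le
    · rw [hfar x hx, dist_self]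
      have := A.ratio_pos
      positivity

/-- `φ` is a bilipschitz homeomorphism supported in the ball of radius `7/8` which carries the
first generation of enlarged balls of `A` to that of `B` by similarities. -/
structure IsFirstLevelConjugacy (A B : BallSystem V ι) (φ : V ≃ₜ V) : Prop where
  exists_lipschitzWith : ∃ C : ℝ≥0, LipschitzWith C φ ∧ LipschitzWith C φ.symm
  apply_eq_self : ∀ x, 7 / 8 ≤ ‖x‖ → φ x = x
  apply_sim : ∀ i u, ‖u‖ ≤ 9 / 8 → φ (A.sim i u) = B.sim i u

/-- `Φ` agrees with `φ` off the first generation of balls of `A` and conjugates the similarities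
of `A` to those of `B`. -/
structure IsSelfSimilarExtension (A B : BallSystem V ι) (φ Φ : V → V) : Prop
    extends IsSupportedInBall Φ where
  apply_sim : ∀ i u, ‖u‖ ≤ 9 / 8 → Φ (A.sim i u) = B.sim i (Φ u)
  apply_of_far : ∀ x, (∀ i, 7 / 8 ≤ ‖(A.sim i).symm x‖) → Φ x = φ x

namespace IsFirstLevelConjugacy

variable {A B : BallSystem V ι} {φ : V ≃ₜ V}

theorem symm (h : IsFirstLevelConjugacy A B φ) : IsFirstLevelConjugacy B A φ.symm where
  exists_lipschitzWith := h.exists_lipschitzWith.imp fun _ hC => ⟨hC.2, hC.1⟩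
  apply_eq_self x hx := by rw [Homeomorph.symm_apply_eq, h.apply_eq_self x hx]
  apply_sim i u hu := by rw [Homeomorph.symm_apply_eq, h.apply_sim i u hu]

theorem isSupportedInBall (h : IsFirstLevelConjugacy A B φ) : IsSupportedInBall φ where
  continuous := φ.continuous
  apply_eq_self := h.apply_eq_self
  norm_apply_le x hx := by
    by_contra! hlt
    exact (hlt.trans_le' hx).ne (by rw [φ.injective (h.apply_eq_self _ hlt.le)])

theorem lt_norm_sim_symm (h : IsFirstLevelConjugacy A B φ) {x : V}
    (hx : ∀ i, 9 / 8 < ‖(A.sim i).symm x‖) (i : ι) : 9 / 8 < ‖(B.sim i).symm (φ x)‖ := by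
  by_contra! hle
  have heq := h.apply_sim i _ hle
  rw [Homeomorph.apply_symm_apply, φ.injective.eq_iff] at heq
  refine (hx i).not_ge ?_
  rwa [← heq, Homeomorph.symm_apply_apply]

end IsFirstLevelConjugacy

section Step

theorem sim_apply_sim_symm_sub_eq_zero (A : BallSystem V ι) {Ψ : V → V} (hΨ : IsSupportedInBall Ψ)
    {x : V} {i : ι} (hx : 7 / 8 ≤ ‖(A.sim i).symm x‖) :
    A.sim i (Ψ ((A.sim i).symm x)) - x = 0 := by
  rw [hΨ.apply_eq_self _ hx, Homeomorph.apply_symm_apply, sub_self]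

variable [Fintype ι] {A B : BallSystem V ι} {φ : V ≃ₜ V}

/-- The operator whose fixed point is the self-similar extension of `φ`: first transplant `Ψ`
into the balls of `A`, then apply `φ`. -/
noncomputable def transplant (A : BallSystem V ι) (φ Ψ : V → V) (x : V) : V :=
  φ (x + ∑ i, (A.sim i (Ψ ((A.sim i).symm x)) - x))

theorem transplant_sim (hφ : IsFirstLevelConjugacy A B φ) {Ψ : V → V} (hΨ : IsSupportedInBall Ψ)
    (i : ι) {u : V} (hu : ‖u‖ ≤ 9 / 8) : transplant A φ Ψ (A.sim i u) = B.sim i (Ψ u) := by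
  rw [transplant, Fintype.sum_eq_single i fun j hj =>
      sim_apply_sim_symm_sub_eq_zero A hΨ (A.le_norm_sim_symm_sim hj.symm hu),
    Homeomorph.symm_apply_apply, add_sub_cancel,
    hφ.apply_sim i _ (hΨ.norm_apply_le_of_le (by norm_num) hu)]

theorem transplant_of_far {Ψ : V → V} (hΨ : IsSupportedInBall Ψ) {x : V}
    (hx : ∀ i, 7 / 8 ≤ ‖(A.sim i).symm x‖) : transplant A φ Ψ x = φ x := by
  rw [transplant,
    Finset.sum_eq_zero fun i _ => sim_apply_sim_symm_sub_eq_zero A hΨ (hx i), add_zero]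

theorem isSupportedInBall_transplant (hφ : IsFirstLevelConjugacy A B φ) {Ψ : V → V}
    (hΨ : IsSupportedInBall Ψ) : IsSupportedInBall (transplant A φ Ψ) where
  continuous := by
    refine φ.continuous.comp (continuous_id.add (continuous_finsetSum _ fun i _ => ?_))
    exact ((A.sim i).continuous.comp (hΨ.continuous.comp (A.sim i).symm.continuous)).sub
      continuous_id
  apply_eq_self x hx := by
    rw [transplant_of_far hΨ fun i => A.le_norm_sim_symm i hx, hφ.apply_eq_self x hx]
  norm_apply_le x hx := by
    obtain ⟨i, u, hu, rfl⟩ | hfar := A.exists_eq_sim_or_forall_lt x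
    · rw [transplant_sim hφ hΨ i hu]
      exact (B.norm_sim_le i (hΨ.norm_apply_le_of_le (by norm_num) hu)).trans (by norm_num)
    · rw [transplant_of_far hΨ fun i => (hfar i).le.trans' (by norm_num)]
      exact hφ.isSupportedInBall.norm_apply_le x hx

theorem dist_transplant_le (hφ : IsFirstLevelConjugacy A B φ) {Ψ Ψ' : V → V}
    (hΨ : IsSupportedInBall Ψ) (hΨ' : IsSupportedInBall Ψ') {D : ℝ}
    (hD : ∀ x, dist (Ψ x) (Ψ' x) ≤ D) (x : V) :
    dist (transplant A φ Ψ x) (transplant A φ Ψ' x) ≤ B.ratio * D := by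
  obtain ⟨i, u, hu, rfl⟩ | hx := A.exists_eq_sim_or_forall_lt x
  · rw [transplant_sim hφ hΨ i hu, transplant_sim hφ hΨ' i hu, B.dist_sim]
    exact mul_le_mul_of_nonneg_left (hD u) B.ratio_pos.le
  · have hx' (i) : 7 / 8 ≤ ‖(A.sim i).symm x‖ := (hx i).le.trans' (by norm_num)
    rw [transplant_of_far hΨ hx', transplant_of_far hΨ' hx', dist_self]
    exact mul_nonneg B.ratio_pos.le (dist_nonneg.trans (hD 0))

theorem isSupportedInBall_iterate_transplant (hφ : IsFirstLevelConjugacy A B φ) (k : ℕ) :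
    IsSupportedInBall ((transplant A φ)^[k] id) := by
  induction k with
  | zero => exact .id
  | succ k ih =>
    rw [Function.iterate_succ_apply']
    exact isSupportedInBall_transplant hφ ih

theorem dist_iterate_transplant_le (hφ : IsFirstLevelConjugacy A B φ) (k : ℕ) (x : V) :
    dist ((transplant A φ)^[k] id x) ((transplant A φ)^[k + 1] id x) ≤
      2 * B.ratio ^ k := by
  induction k generalizing x with
  | zero =>
    have h₁ := isSupportedInBall_iterate_transplant hφ 1
    simpa using IsSupportedInBall.id.dist_apply_le h₁ x
  | succ k ih =>
    have hk := isSupportedInBall_iterate_transplant hφ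
    rw [Function.iterate_succ_apply', Function.iterate_succ_apply' _ (k + 1), pow_succ, ← mul_assoc,
      mul_comm]
    exact dist_transplant_le hφ (hk k) (hk (k + 1)) ih x

end Step

theorem exists_tendstoUniformly_of_dist_le_geometric {X Y : Type*} [PseudoMetricSpace Y]
    [CompleteSpace Y] {F : ℕ → X → Y} {C q : ℝ} (hq₀ : 0 ≤ q) (hq₁ : q < 1)
    (hF : ∀ k x, dist (F k x) (F (k + 1) x) ≤ C * q ^ k) :
    ∃ G : X → Y, TendstoUniformly F G atTop := by
  choose G hG using fun x => cauchySeq_tendsto_of_complete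
    (cauchySeq_of_le_geometric q C hq₁ fun k => hF k x)
  refine ⟨G, Metric.tendstoUniformly_iff.2 fun ε hε => ?_⟩
  have hlim : Tendsto (fun k => C * q ^ k / (1 - q)) atTop (𝓝 0) := by
    simpa using ((tendsto_pow_atTop_nhds_zero_of_lt_one hq₀ hq₁).const_mul C).div_const (1 - q)
  filter_upwards [hlim.eventually_lt_const hε] with k hk x
  rw [dist_comm]
  exact (dist_le_of_le_geometric_of_tendsto q C hq₁ (fun k => hF k x) (hG x) k).trans_lt hk

variable {A B : BallSystem V ι} {φ : V ≃ₜ V}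

theorem IsFirstLevelConjugacy.exists_isSelfSimilarExtension [CompleteSpace V] [Finite ι]
    (hφ : IsFirstLevelConjugacy A B φ) : ∃ Φ : V → V, IsSelfSimilarExtension A B φ Φ := by
  cases nonempty_fintype ι
  obtain ⟨Φ, hΦ⟩ := exists_tendstoUniformly_of_dist_le_geometric B.ratio_pos.le B.ratio_lt_one
    (dist_iterate_transplant_le hφ)
  have hlim (x) := hΦ.tendsto_at x
  have hlim' (x) := (hlim x).comp (tendsto_add_atTop_nat 1)
  simp only [Function.comp_def, Function.iterate_succ_apply'] at hlim'
  have hF := isSupportedInBall_iterate_transplant hφ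
  refine ⟨Φ, ⟨?_, fun x hx => ?_, fun x hx => ?_⟩, fun i u hu => ?_, fun x hx => ?_⟩
  · exact hΦ.continuous (.of_forall fun k => (hF k).continuous)
  · exact tendsto_nhds_unique (hlim x)
      (tendsto_const_nhds.congr fun k => ((hF k).apply_eq_self x hx).symm)
  · exact le_of_tendsto (hlim x).norm (.of_forall fun k => (hF k).norm_apply_le x hx)
  · refine tendsto_nhds_unique (hlim' _)
      ((((B.sim i).continuous.tendsto _).comp (hlim u)).congr fun k => ?_)
    exact (transplant_sim hφ (hF k) i hu).symm
  · exact tendsto_nhds_unique (hlim' x)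
      (tendsto_const_nhds.congr fun k => (transplant_of_far (hF k) hx).symm)

theorem IsSelfSimilarExtension.leftInverse {Φ Φ' : V → V}
    (hφ : IsFirstLevelConjugacy A B φ) (h : IsSelfSimilarExtension A B φ Φ)
    (h' : IsSelfSimilarExtension B A φ.symm Φ') : Function.LeftInverse Φ' Φ := by
  refine (h'.toIsSupportedInBall.comp h.toIsSupportedInBall).eq_self_of_apply_sim A
    (fun i u hu => ?_) fun x hx => ?_
  · rw [Function.comp_apply, h.apply_sim i u hu,
      h'.apply_sim i _ (h.norm_apply_le_of_le (by norm_num) hu), Function.comp_apply]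
  · rw [Function.comp_apply, h.apply_of_far x fun i => (hx i).le.trans' (by norm_num),
      h'.apply_of_far _ fun i => (hφ.lt_norm_sim_symm hx i).le.trans' (by norm_num),
      Homeomorph.symm_apply_apply]

theorem IsFirstLevelConjugacy.exists_homeomorph_isSelfSimilarExtension [CompleteSpace V]
    [Finite ι] (hφ : IsFirstLevelConjugacy A B φ) :
    ∃ Φ : V ≃ₜ V, IsSelfSimilarExtension A B φ Φ := by
  obtain ⟨Φ, h⟩ := hφ.exists_isSelfSimilarExtension
  obtain ⟨Φ', h'⟩ := hφ.symm.exists_isSelfSimilarExtension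
  exact ⟨⟨⟨Φ, Φ', h.leftInverse hφ h', h'.leftInverse hφ.symm h⟩, h.continuous, h'.continuous⟩, h⟩

theorem IsSelfSimilarExtension.apply_point [CompleteSpace V] {φ Φ : V → V}
    (h : IsSelfSimilarExtension A B φ Φ) (ω : ℕ → ι) : Φ (A.point ω) = B.point ω := by
  refine eq_of_forall_dist_le_mul_pow (C := 2) B.ratio_pos.le B.ratio_lt_one fun k => ?_
  induction k generalizing ω with
  | zero =>
    have hnorm := h.norm_apply_le_of_le (by norm_num) (A.norm_point_le ω)
    linarith [dist_le_norm_add_norm (Φ (A.point ω)) (B.point ω), B.norm_point_le ω,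
      pow_zero B.ratio]
  | succ k ih =>
    rw [A.point_eq_sim, B.point_eq_sim,
      h.apply_sim _ _ ((A.norm_point_le _).trans (by norm_num)), B.dist_sim, pow_succ, ← mul_assoc,
      mul_comm]
    exact mul_le_mul_of_nonneg_right (ih _) B.ratio_pos.le

end SelfSimilar

/-! ### Quasiconformality -/

theorem qcH_le_of_eventually {X : Type*} [MetricSpace X] {Φ : X → X} {x : X} {H : ℝ} (hH : 0 ≤ H)
    (h : ∀ᶠ s : ℝ in 𝓝[>] 0, ∃ D : ℝ, (∀ y, dist y x ≤ s → dist (Φ y) (Φ x) ≤ H * D) ∧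
      ∀ y, s ≤ dist y x → D ≤ dist (Φ y) (Φ x)) :
    qcH univ Φ x ≤ ENNReal.ofReal H := by
  refine limsup_le_of_le (by isBoundedDefault) ?_
  filter_upwards [h] with s ⟨D, hle, hge⟩
  apply ENNReal.div_le_of_le_mul
  calc linDil univ Φ x s ≤ ENNReal.ofReal (H * D) := iSup₂_le fun y hy => by
        rw [edist_comm, edist_dist]
        exact ENNReal.ofReal_le_ofReal (hle y (dist_comm x y ▸ hy.2))
    _ = ENNReal.ofReal H * ENNReal.ofReal D := ENNReal.ofReal_mul hH
    _ ≤ ENNReal.ofReal H * linCon univ Φ x s := mul_le_mul_right (le_iInf₂ fun y hy => by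
        rw [edist_comm, edist_dist]
        exact ENNReal.ofReal_le_ofReal (hge y (dist_comm x y ▸ hy.2))) _

/-- `f` multiplies all distances by `lam`, up to the factor `C`. -/
def IsQuasisimilarity {X Y : Type*} [Dist X] [Dist Y] (C lam : ℝ) (f : X → Y) : Prop :=
  ∀ x y, dist (f x) (f y) ≤ C * (lam * dist x y) ∧ lam * dist x y ≤ C * dist (f x) (f y)

theorem IsQuasisimilarity.qcH_le {X : Type*} [MetricSpace X] {C lam : ℝ} {F : X → X}
    (hF : IsQuasisimilarity C lam F) (hC : 0 < C) (hlam : 0 < lam) {Φ : X ≃ₜ X} {x : X}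
    (hΦ : F =ᶠ[𝓝 x] Φ) : qcH univ Φ x ≤ ENNReal.ofReal (C * C) := by
  obtain ⟨ε, hε, hball⟩ := Metric.eventually_nhds_iff.1 hΦ
  obtain ⟨η, hη, hfar⟩ := Metric.continuousAt_iff.1 (Φ.symm.continuous.continuousAt (x := Φ x)) ε hε
  have hx : F x = Φ x := hΦ.self_of_nhds
  refine qcH_le_of_eventually (by positivity) ?_
  filter_upwards [Ioo_mem_nhdsGT (show 0 < min ε (η * C / lam) by positivity)] with s ⟨hs₀, hs⟩
  obtain ⟨hsε, hsη⟩ := lt_min_iff.1 hs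
  refine ⟨lam * s / C, fun y hy => ?_, fun y hy => ?_⟩
  · rw [← hball (hy.trans_lt hsε), ← hx]
    calc dist (F y) (F x) ≤ C * (lam * dist y x) := (hF y x).1
      _ ≤ C * (lam * s) := by gcongr
      _ = C * C * (lam * s / C) := by field_simp
  · rw [div_le_iff₀' hC]
    obtain hyε | hyε := lt_or_ge (dist y x) ε
    · rw [← hball hyε, ← hx]
      exact (hF y x).2.trans' (by gcongr)
    · have hη_le : η ≤ dist (Φ y) (Φ x) := by
        by_contra! hlt
        simpa using (hfar hlt).trans_le hyε
      rw [lt_div_iff₀ hlam] at hsη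
      nlinarith

namespace IsSelfSimilarExtension

variable {V ι : Type*} [NormedAddCommGroup V] [NormedSpace ℝ V] {A B : BallSystem V ι}

theorem isQuasisimilarity_conj {C lam : ℝ} {F : V → V} (hF : IsQuasisimilarity C lam F) (i : ι) :
    IsQuasisimilarity C (B.ratio / A.ratio * lam) fun x => B.sim i (F ((A.sim i).symm x)) := by
  intro x y
  obtain ⟨hle, hge⟩ := hF ((A.sim i).symm x) ((A.sim i).symm y)
  have hscale : B.ratio / A.ratio * lam * dist x y =
      B.ratio * (lam * dist ((A.sim i).symm x) ((A.sim i).symm y)) := by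
    rw [← A.dist_sim_symm i x y]
    have := A.ratio_pos
    field_simp
  rw [hscale, B.dist_sim, mul_left_comm C B.ratio, mul_left_comm C B.ratio]
  exact ⟨mul_le_mul_of_nonneg_left hle B.ratio_pos.le, mul_le_mul_of_nonneg_left hge B.ratio_pos.le⟩

theorem exists_isQuasisimilarity_eventuallyEq [Finite ι] {φ Φ : V → V}
    (h : IsSelfSimilarExtension A B φ Φ) {C : ℝ} (hφ : IsQuasisimilarity C 1 φ) {k : ℕ} {x : V}
    (hx : x ∈ A.level k \ A.level (k + 1)) :
    ∃ F : V → V, IsQuasisimilarity C ((B.ratio / A.ratio) ^ k) F ∧ F =ᶠ[𝓝 x] Φ := by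
  induction k generalizing x with
  | zero =>
    refine ⟨φ, by rwa [pow_zero], ?_⟩
    have hfar (i) : 7 / 8 < ‖(A.sim i).symm x‖ := by
      by_contra! hle
      exact hx.2 (A.mem_level_succ.2 ⟨i, (A.sim i).symm x, mem_univ _,
        hle.trans (by norm_num), (A.sim i).apply_symm_apply x⟩)
    have hopen : ∀ᶠ y in 𝓝 x, ∀ i, 7 / 8 < ‖(A.sim i).symm y‖ := eventually_all.2 fun i =>
      ((A.sim i).symm.continuous.norm.tendsto x).eventually_const_lt (hfar i)
    filter_upwards [hopen] with y hy
    exact (h.apply_of_far y fun i => (hy i).le).symm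
  | succ k ih =>
    obtain ⟨i, u, hu, hu₁, rfl⟩ := A.mem_level_succ.1 hx.1
    obtain ⟨F, hF, hFΦ⟩ := ih ⟨hu, fun hu' => hx.2 (A.sim_mem_level_succ i hu' hu₁)⟩
    refine ⟨fun y => B.sim i (F ((A.sim i).symm y)), ?_, ?_⟩
    · rw [pow_succ']
      exact isQuasisimilarity_conj hF i
    · have hnorm : ∀ᶠ v in 𝓝 u, ‖v‖ < 9 / 8 :=
        (continuous_norm.tendsto u).eventually_lt_const (hu₁.trans_lt (by norm_num))
      have hsymm : Tendsto (A.sim i).symm (𝓝 (A.sim i u)) (𝓝 u) :=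
        (A.sim i).symm.continuous.tendsto' _ _ ((A.sim i).symm_apply_apply u)
      filter_upwards [hsymm.eventually (hFΦ.and hnorm)] with y ⟨hFy, hy⟩
      rw [hFy, ← h.apply_sim i _ hy.le, Homeomorph.apply_symm_apply]

theorem dist_apply_le_of_mem_level {φ Φ : V → V} (h : IsSelfSimilarExtension A B φ Φ) {k : ℕ}
    {x y : V} (hx : x ∈ A.level k) (hy : dist y x ≤ 1 / 8 * A.ratio ^ k) :
    dist (Φ y) (Φ x) ≤ 5 * B.ratio ^ k := by
  induction k generalizing x y with
  | zero =>
    have htri := dist_triangle4_right (Φ y) (Φ x) y x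
    have hy' := h.dist_apply_le .id y
    have hx' := h.dist_apply_le .id x
    simp only [id, pow_zero, mul_one] at hx' hy' hy ⊢
    linarith
  | succ k ih =>
    obtain ⟨i, u, hu, hu₁, rfl⟩ := A.mem_level_succ.1 hx
    obtain ⟨v, rfl⟩ := (A.sim i).surjective y
    have hpow : A.ratio ^ (k + 1) ≤ A.ratio :=
      pow_le_of_le_one A.ratio_pos.le A.ratio_lt_one.le k.succ_ne_zero
    have hv : ‖v‖ ≤ 9 / 8 := A.norm_le_of_dist_sim_le i hu₁ (by linarith)
    rw [h.apply_sim i v hv, h.apply_sim i u (hu₁.trans (by norm_num)), B.dist_sim, pow_succ',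
      mul_left_comm]
    refine mul_le_mul_of_nonneg_left (ih hu ?_) B.ratio_pos.le
    rw [A.dist_sim, pow_succ', mul_left_comm] at hy
    exact le_of_mul_le_mul_left hy A.ratio_pos

variable {φ : V → V} {Φ : V ≃ₜ V}

theorem lt_norm_sim_symm_apply (h : IsSelfSimilarExtension A B φ Φ) {i : ι} {y : V}
    (hy : 9 / 8 < ‖(A.sim i).symm y‖) : 9 / 8 < ‖(B.sim i).symm (Φ y)‖ := by
  by_contra! hle
  obtain ⟨v, hv⟩ := Φ.surjective ((B.sim i).symm (Φ y))
  have hv₁ : ‖v‖ ≤ 9 / 8 := by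
    by_contra! hlt
    rw [← hv, h.apply_eq_self v (hlt.le.trans' (by norm_num))] at hle
    exact hlt.not_ge hle
  have heq : Φ (A.sim i v) = Φ y := by rw [h.apply_sim i v hv₁, hv, Homeomorph.apply_symm_apply]
  rw [← Φ.injective heq, Homeomorph.symm_apply_apply] at hy
  exact hy.not_ge hv₁

theorem le_dist_apply_of_mem_level (h : IsSelfSimilarExtension A B φ Φ) {k : ℕ} {x y : V}
    (hx : x ∈ A.level (k + 1)) (hy : 2 * A.ratio ^ k ≤ dist y x) :
    1 / 8 * B.ratio ^ k ≤ dist (Φ y) (Φ x) := by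
  have hnorm {u : V} {l : ℕ} (hu : u ∈ A.level (l + 1)) : ‖Φ u‖ ≤ 7 / 8 :=
    h.norm_apply_le u ((A.norm_le_of_mem_level_succ hu).trans (by norm_num))
  induction k generalizing x y with
  | zero =>
    have hy' := (dist_le_norm_add_norm y x).trans' hy
    rw [pow_zero, mul_one] at hy' ⊢
    have hx₁ := A.norm_le_of_mem_level_succ hx
    rw [h.apply_eq_self y (by linarith), dist_eq_norm]
    linarith [norm_sub_norm_le y (Φ x), hnorm hx]
  | succ k ih =>
    obtain ⟨i, u, hu, hu₁, rfl⟩ := A.mem_level_succ.1 hx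
    obtain ⟨v, rfl⟩ := (A.sim i).surjective y
    rw [h.apply_sim i u (hu₁.trans (by norm_num)), pow_succ', mul_left_comm]
    obtain hv | hv := le_or_gt ‖v‖ (9 / 8)
    · rw [h.apply_sim i v hv, B.dist_sim]
      refine mul_le_mul_of_nonneg_left (ih hu ?_) B.ratio_pos.le
      rw [A.dist_sim, pow_succ', mul_left_comm] at hy
      exact le_of_mul_le_mul_left hy A.ratio_pos
    · have hw := h.lt_norm_sim_symm_apply (i := i) (y := A.sim i v)
        (by rwa [Homeomorph.symm_apply_apply])
      rw [← B.dist_sim_symm i, Homeomorph.symm_apply_apply, dist_eq_norm]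
      refine mul_le_mul_of_nonneg_left ?_ B.ratio_pos.le
      linarith [norm_sub_norm_le ((B.sim i).symm (Φ (A.sim i v))) (Φ u), hnorm hu,
        pow_le_one₀ (n := k) B.ratio_pos.le B.ratio_lt_one.le]

theorem qcH_le_of_mem_iInter_level (h : IsSelfSimilarExtension A B φ Φ) {x : V}
    (hx : x ∈ ⋂ k, A.level k) : qcH univ Φ x ≤ ENNReal.ofReal (40 / B.ratio ^ 3) := by
  have hr := A.ratio_pos
  have hρ := B.ratio_pos
  rw [mem_iInter] at hx
  refine qcH_le_of_eventually (by positivity) ?_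
  filter_upwards [Ioo_mem_nhdsGT (show (0 : ℝ) < 1 / 8 by norm_num)] with s ⟨hs₀, hs⟩
  obtain ⟨k, hk, hk'⟩ := exists_nat_pow_near_of_lt_one (x := 8 * s) (by linarith) (by linarith)
    hr A.ratio_lt_one
  refine ⟨1 / 8 * B.ratio ^ (k + 3), fun y hy => ?_, fun y hy => ?_⟩
  · calc dist (Φ y) (Φ x) ≤ 5 * B.ratio ^ k := h.dist_apply_le_of_mem_level (hx k) (by linarith)
      _ = 40 / B.ratio ^ 3 * (1 / 8 * B.ratio ^ (k + 3)) := by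
        rw [pow_add]
        field_simp
        norm_num
  · refine h.le_dist_apply_of_mem_level (hx _) ?_
    have hsq : A.ratio * A.ratio ≤ 1 / 8 * (1 / 8) :=
      mul_le_mul A.ratio_le A.ratio_le hr.le (by norm_num)
    calc 2 * A.ratio ^ (k + 3) = 2 * (A.ratio ^ (k + 1) * (A.ratio * A.ratio)) := by ring
      _ ≤ 2 * (A.ratio ^ (k + 1) * (1 / 8 * (1 / 8))) := by gcongr
      _ ≤ dist y x := by linarith

end IsSelfSimilarExtension

section Quasiconformal

variable {V ι : Type*} [NormedAddCommGroup V] [NormedSpace ℝ V] {A B : BallSystem V ι}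
  {φ : V ≃ₜ V}

theorem IsFirstLevelConjugacy.exists_isQuasisimilarity (hφ : IsFirstLevelConjugacy A B φ) :
    ∃ C, 1 ≤ C ∧ IsQuasisimilarity C 1 φ := by
  obtain ⟨C, hC, hC'⟩ := hφ.exists_lipschitzWith
  refine ⟨max C 1, le_max_right _ _, fun x y => ?_⟩
  rw [one_mul]
  constructor
  · exact (hC.dist_le_mul x y).trans (by gcongr; exact le_max_left _ _)
  · calc dist x y = dist (φ.symm (φ x)) (φ.symm (φ y)) := by
          rw [φ.symm_apply_apply, φ.symm_apply_apply]
      _ ≤ C * dist (φ x) (φ y) := hC'.dist_le_mul _ _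
      _ ≤ max C 1 * dist (φ x) (φ y) := by gcongr; exact le_max_left _ _

theorem IsSelfSimilarExtension.quasiconformalOn_univ [Finite ι] {Φ : V ≃ₜ V}
    (hφ : IsFirstLevelConjugacy A B φ) (h : IsSelfSimilarExtension A B φ Φ) :
    QuasiconformalOn univ Φ := by
  obtain ⟨C, hC, hφC⟩ := hφ.exists_isQuasisimilarity
  have hr := A.ratio_pos
  have hρ := B.ratio_pos
  refine ⟨max (C * C) (40 / B.ratio ^ 3), le_max_of_le_left (by nlinarith), fun x _ => ?_⟩
  by_cases hx : x ∈ ⋂ k, A.level k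
  · exact (h.qcH_le_of_mem_iInter_level hx).trans (ENNReal.ofReal_le_ofReal (le_max_right _ _))
  · obtain ⟨k, hk⟩ := A.exists_mem_level_diff hx
    obtain ⟨F, hF, hFΦ⟩ := h.exists_isQuasisimilarity_eventuallyEq hφC hk
    exact (hF.qcH_le (by linarith) (by positivity) hFΦ).trans
      (ENNReal.ofReal_le_ofReal (le_max_left _ _))

end Quasiconformal

/-! ### Differentiability almost everywhere and integrability of the derivative -/

theorem ae_differentiableAt_of_ae_lipschitzOnWith {E F : Type*} [NormedAddCommGroup E]
    [NormedSpace ℝ E] [FiniteDimensional ℝ E] [MeasurableSpace E] [BorelSpace E]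
    [NormedAddCommGroup F] [NormedSpace ℝ F] [FiniteDimensional ℝ F]
    {μ : Measure E} [μ.IsAddHaarMeasure] {f : E → F}
    (h : ∀ᵐ x ∂μ, ∃ C : ℝ≥0, ∃ s ∈ 𝓝 x, LipschitzOnWith C f s) :
    ∀ᵐ x ∂μ, DifferentiableAt ℝ f x := by
  suffices hnull : μ {x | (∃ C : ℝ≥0, ∃ s ∈ 𝓝 x, LipschitzOnWith C f s) ∧
      ¬ DifferentiableAt ℝ f x} = 0 by
    filter_upwards [h, measure_eq_zero_iff_ae_notMem.1 hnull] with x hx hx'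
    exact not_not.1 fun hdiff => hx' ⟨hx, hdiff⟩
  refine measure_null_of_locally_null _ fun x ⟨⟨C, s, hs, hf⟩, _⟩ => ?_
  refine ⟨{y | s ∈ 𝓝 y ∧ ¬ DifferentiableAt ℝ f y}, ?_, ?_⟩
  · filter_upwards [self_mem_nhdsWithin, mem_nhdsWithin_of_mem_nhds (eventually_mem_nhds_iff.2 hs)]
      with y hy hsy
    exact ⟨hsy, hy.2⟩
  · refine measure_mono_null ?_ (ae_iff.1 hf.ae_differentiableWithinAt_of_mem)
    rintro y ⟨hsy, hy⟩ hdiff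
    exact hy ((hdiff (mem_of_mem_nhds hsy)).differentiableAt hsy)

section MeasureEstimates

variable {V ι : Type*} [NormedAddCommGroup V] [NormedSpace ℝ V] {A B : BallSystem V ι}

theorem IsSelfSimilarExtension.exists_lipschitzOnWith [Finite ι] {φ Φ : V → V}
    (h : IsSelfSimilarExtension A B φ Φ) {C : ℝ} (hφ : IsQuasisimilarity C 1 φ) {k : ℕ} {x : V}
    (hx : x ∈ A.level k \ A.level (k + 1)) :
    ∃ s ∈ 𝓝 x, LipschitzOnWith (C * (B.ratio / A.ratio) ^ k).toNNReal Φ s := by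
  obtain ⟨F, hF, hFΦ⟩ := h.exists_isQuasisimilarity_eventuallyEq hφ hx
  refine ⟨_, hFΦ, LipschitzOnWith.of_dist_le' fun y hy z hz => ?_⟩
  rw [← show F y = Φ y from hy, ← show F z = Φ z from hz, mul_assoc]
  exact (hF y z).1

theorem IsSelfSimilarExtension.ofReal_norm_fderiv_rpow_le_tsum [Finite ι] {φ Φ : V → V}
    (h : IsSelfSimilarExtension A B φ Φ) {C : ℝ} (hφ : IsQuasisimilarity C 1 φ) (hC : 0 ≤ C)
    {p : ℝ} (hp : 0 ≤ p) {x : V} (hx : x ∉ ⋂ k, A.level k) :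
    ENNReal.ofReal (‖fderiv ℝ Φ x‖ ^ p) ≤ ∑' k, (A.level k).indicator
      (fun _ => ENNReal.ofReal ((C * (B.ratio / A.ratio) ^ k) ^ p)) x := by
  have hr := A.ratio_pos
  have hρ := B.ratio_pos
  obtain ⟨k, hk⟩ := A.exists_mem_level_diff hx
  obtain ⟨s, hs, hΦ⟩ := h.exists_lipschitzOnWith hφ hk
  have hnorm := norm_fderiv_le_of_lipschitzOn ℝ hs hΦ
  rw [Real.coe_toNNReal _ (by positivity)] at hnorm
  refine le_trans ?_ (ENNReal.le_tsum k)
  rw [indicator_of_mem hk.1]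
  gcongr

variable [FiniteDimensional ℝ V] [MeasurableSpace V] [BorelSpace V] (μ : Measure V)
  [μ.IsAddHaarMeasure]

open scoped Pointwise in
theorem BallSystem.measure_sim_image (A : BallSystem V ι) (i : ι) (s : Set V) :
    μ (A.sim i '' s) = ENNReal.ofReal (A.ratio ^ Module.finrank ℝ V) * μ s := by
  have himage : A.sim i '' s = (A.center i + ·) '' (A.ratio • s) := by
    rw [← image_smul, image_image]
    rfl
  rw [himage, image_add_left, measure_preimage_add, Measure.addHaar_smul,
    abs_of_pos (pow_pos A.ratio_pos _)]

variable [Fintype ι]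

theorem BallSystem.measure_level_inter_le (A : BallSystem V ι) {s : Set V}
    (hs : closedBall 0 1 ⊆ s) (k : ℕ) :
    μ (A.level k ∩ s) ≤
      ENNReal.ofReal ((Fintype.card ι * A.ratio ^ Module.finrank ℝ V) ^ k) * μ s := by
  have hr := A.ratio_pos
  induction k with
  | zero => simpa using measure_mono inter_subset_right
  | succ k ih =>
    have hsub : A.level (k + 1) ∩ s ⊆ ⋃ i, A.sim i '' (A.level k ∩ s) :=
      inter_subset_left.trans (iUnion_mono fun i => image_mono (inter_subset_inter_right _ hs))
    calc μ (A.level (k + 1) ∩ s) ≤ ∑ i, μ (A.sim i '' (A.level k ∩ s)) :=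
          (measure_mono hsub).trans (measure_iUnion_fintype_le _ _)
      _ = ENNReal.ofReal (Fintype.card ι * A.ratio ^ Module.finrank ℝ V) * μ (A.level k ∩ s) := by
          simp only [A.measure_sim_image μ, Finset.sum_const, Finset.card_univ, nsmul_eq_mul]
          rw [ENNReal.ofReal_mul (by positivity), ENNReal.ofReal_natCast, mul_assoc]
      _ ≤ _ := by
          rw [pow_succ', ENNReal.ofReal_mul (p := Fintype.card ι * _) (by positivity), mul_assoc]
          gcongr

theorem BallSystem.ofReal_rpow_mul_measure_level_inter_le (A : BallSystem V ι) {s : Set V}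
    (hs : closedBall 0 1 ⊆ s) {C lam : ℝ} (hC : 0 ≤ C) (hlam : 0 ≤ lam) (p : ℝ) (k : ℕ) :
    ENNReal.ofReal ((C * lam ^ k) ^ p) * μ (A.level k ∩ s) ≤
      ENNReal.ofReal ((Fintype.card ι * A.ratio ^ Module.finrank ℝ V * lam ^ p) ^ k) *
        (ENNReal.ofReal (C ^ p) * μ s) := by
  have hr := A.ratio_pos
  set q := Fintype.card ι * A.ratio ^ Module.finrank ℝ V
  have hpow : (C * lam ^ k) ^ p * q ^ k = (q * lam ^ p) ^ k * C ^ p := by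
    rw [Real.mul_rpow hC (by positivity), ← Real.rpow_pow_comm hlam, mul_pow]
    ring
  calc _ ≤ ENNReal.ofReal ((C * lam ^ k) ^ p) * (ENNReal.ofReal (q ^ k) * μ s) :=
        mul_le_mul_right (A.measure_level_inter_le μ hs k) _
    _ = ENNReal.ofReal ((q * lam ^ p) ^ k) * (ENNReal.ofReal (C ^ p) * μ s) := by
        rw [← mul_assoc, ← ENNReal.ofReal_mul (by positivity), hpow,
          ENNReal.ofReal_mul (by positivity), mul_assoc]

theorem BallSystem.measure_iInter_level (A : BallSystem V ι)
    (hq : Fintype.card ι * A.ratio ^ Module.finrank ℝ V < 1) : μ (⋂ k, A.level k) = 0 := by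
  have hr := A.ratio_pos
  have hproper : ProperSpace V := FiniteDimensional.proper ℝ V
  have hlim : Tendsto (fun k => ENNReal.ofReal
      ((Fintype.card ι * A.ratio ^ Module.finrank ℝ V) ^ k) * μ (closedBall 0 1)) atTop (𝓝 0) := by
    simpa using ENNReal.Tendsto.mul_const
      (ENNReal.tendsto_ofReal (tendsto_pow_atTop_nhds_zero_of_lt_one (by positivity) hq))
      (Or.inr (isCompact_closedBall (0 : V) 1).measure_lt_top.ne)
  refine le_antisymm (ge_of_tendsto' hlim fun k => ?_) zero_le
  refine (measure_mono fun x hx => ?_).trans (A.measure_level_inter_le μ subset_rfl k)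
  rw [mem_iInter] at hx
  exact ⟨hx k, mem_closedBall_zero_iff.2
    ((A.norm_le_of_mem_level_succ (hx 1)).trans (by norm_num))⟩

namespace IsSelfSimilarExtension

variable {φ Φ : V → V} {C : ℝ}

theorem ae_differentiableAt (h : IsSelfSimilarExtension A B φ Φ) (hφ : IsQuasisimilarity C 1 φ)
    (hq : Fintype.card ι * A.ratio ^ Module.finrank ℝ V < 1) :
    ∀ᵐ x ∂μ, DifferentiableAt ℝ Φ x := by
  apply ae_differentiableAt_of_ae_lipschitzOnWith
  filter_upwards [measure_eq_zero_iff_ae_notMem.1 (A.measure_iInter_level μ hq)] with x hx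
  obtain ⟨k, hk⟩ := A.exists_mem_level_diff hx
  exact ⟨_, h.exists_lipschitzOnWith hφ hk⟩

theorem lintegral_norm_fderiv_rpow_lt_top (h : IsSelfSimilarExtension A B φ Φ)
    (hφ : IsQuasisimilarity C 1 φ) (hC : 0 ≤ C)
    (hq : Fintype.card ι * A.ratio ^ Module.finrank ℝ V < 1) {p : ℝ} (hp : 0 ≤ p)
    (hqp : Fintype.card ι * A.ratio ^ Module.finrank ℝ V * (B.ratio / A.ratio) ^ p < 1)
    {K : Set V} (hK : IsCompact K) :
    ∫⁻ x in K, ENNReal.ofReal (‖fderiv ℝ Φ x‖ ^ p) ∂μ < ⊤ := by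
  have hr := A.ratio_pos
  have hρ := B.ratio_pos
  have hproper : ProperSpace V := FiniteDimensional.proper ℝ V
  set S := K ∪ closedBall (0 : V) 1
  set q := Fintype.card ι * A.ratio ^ Module.finrank ℝ V
  set lam := B.ratio / A.ratio
  let f (k : ℕ) : ℝ≥0∞ := ENNReal.ofReal ((C * lam ^ k) ^ p)
  have hmeas (k) : MeasurableSet (A.level k) := (A.isClosed_level k).measurableSet
  calc ∫⁻ x in K, ENNReal.ofReal (‖fderiv ℝ Φ x‖ ^ p) ∂μ
      ≤ ∫⁻ x in S, ENNReal.ofReal (‖fderiv ℝ Φ x‖ ^ p) ∂μ := lintegral_mono_set subset_union_left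
    _ ≤ ∫⁻ x in S, ∑' k, (A.level k).indicator (fun _ => f k) x ∂μ := by
        refine lintegral_mono_ae (ae_restrict_of_ae ?_)
        filter_upwards [measure_eq_zero_iff_ae_notMem.1 (A.measure_iInter_level μ hq)] with x hx
        exact h.ofReal_norm_fderiv_rpow_le_tsum hφ hC hp hx
    _ = ∑' k, f k * μ (A.level k ∩ S) := by
        rw [lintegral_tsum fun k => (measurable_const.indicator (hmeas k)).aemeasurable]
        simp only [lintegral_indicator_const (hmeas _), Measure.restrict_apply (hmeas _)]
    _ ≤ ∑' k, ENNReal.ofReal ((q * lam ^ p) ^ k) * (ENNReal.ofReal (C ^ p) * μ S) :=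
        ENNReal.tsum_le_tsum fun k =>
          A.ofReal_rpow_mul_measure_level_inter_le μ subset_union_right hC (by positivity) p k
    _ < ⊤ := by
        rw [ENNReal.tsum_mul_right]
        exact ENNReal.mul_lt_top
          (summable_geometric_of_lt_one (by positivity) hqp).tsum_ofReal_lt_top
          (ENNReal.mul_lt_top ENNReal.ofReal_lt_top
            (hK.union (isCompact_closedBall 0 1)).measure_lt_top)

end IsSelfSimilarExtension

end MeasureEstimates

/-! ### Orthogonal sums of ball systems -/

section OrthogonalSum

variable {V ι κ : Type*} [NormedAddCommGroup V] [InnerProductSpace ℝ V] {L : Submodule ℝ V}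

theorem norm_le_norm_add_of_mem_orthogonal (x : L) (y : Lᗮ) :
    ‖x‖ ≤ ‖(x : V) + y‖ ∧ ‖y‖ ≤ ‖(x : V) + y‖ := by
  have hpyth := norm_add_sq_eq_norm_sq_add_norm_sq_real
    (Submodule.inner_right_of_mem_orthogonal x.2 y.2)
  simp only [Submodule.coe_norm] at hpyth ⊢
  constructor <;> refine le_of_sq_le_sq ?_ (norm_nonneg _) <;> nlinarith

namespace BallSystem

/-- The system centred at the sums of the centres of a system of `L` and of a system of `Lᗮ` with
the same ratio. -/
noncomputable def orthogonalSum (A₁ : BallSystem L ι) (A₂ : BallSystem Lᗮ κ)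
    (hratio : A₂.ratio = A₁.ratio) (h₁ : ∀ i, ‖A₁.center i‖ ≤ 1 / 4)
    (h₂ : ∀ j, ‖A₂.center j‖ ≤ 1 / 4) : BallSystem V (ι × κ) where
  ratio := A₁.ratio
  center q := A₁.center q.1 + A₂.center q.2
  ratio_pos := A₁.ratio_pos
  ratio_le := A₁.ratio_le
  norm_center_le q := by
    have hle₁ : ‖(A₁.center q.1 : V)‖ ≤ 1 / 4 := h₁ q.1
    have hle₂ : ‖(A₂.center q.2 : V)‖ ≤ 1 / 4 := h₂ q.2
    exact (norm_add_le _ _).trans (by linarith)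
  le_norm_sub q q' hne := by
    obtain ⟨hle₁, hle₂⟩ := norm_le_norm_add_of_mem_orthogonal
      (A₁.center q.1 - A₁.center q'.1) (A₂.center q.2 - A₂.center q'.2)
    rw [add_sub_add_comm]
    by_cases h : q.1 = q'.1
    · rw [← hratio]
      exact (A₂.le_norm_sub _ _ fun h' => hne (Prod.ext h h')).trans hle₂
    · exact (A₁.le_norm_sub _ _ h).trans hle₁

variable {A₁ : BallSystem L ι} {A₂ : BallSystem Lᗮ κ} (hratio : A₂.ratio = A₁.ratio)
  (h₁ : ∀ i, ‖A₁.center i‖ ≤ 1 / 4) (h₂ : ∀ j, ‖A₂.center j‖ ≤ 1 / 4)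

@[simp]
theorem orthogonalSum_ratio : (orthogonalSum A₁ A₂ hratio h₁ h₂).ratio = A₁.ratio :=
  rfl

theorem point_orthogonalSum [CompleteSpace V] [CompleteSpace L] (ω : ℕ → ι) (η : ℕ → κ) :
    (orthogonalSum A₁ A₂ hratio h₁ h₂).point (fun k => (ω k, η k)) = A₁.point ω + A₂.point η := by
  have hsum₁ := (A₁.summable_pow_smul_center ω).hasSum.mapL L.subtypeL
  have hsum₂ := (A₂.summable_pow_smul_center η).hasSum.mapL Lᗮ.subtypeL
  refine ((hsum₁.add hsum₂).congr_fun fun k => ?_).tsum_eq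
  simp [orthogonalSum, hratio]

theorem ofReal_le_dimH_range_coe_point {N : ℕ} {W : Submodule ℝ V} [CompleteSpace W]
    (A : BallSystem W (Fin N)) {d : ℝ} (hd : 0 < d) (hN : 1 < N) (h : 1 ≤ N * A.ratio ^ d) :
    ENNReal.ofReal d ≤ dimH (range fun η => (A.point η : V)) :=
  SeparatesWords.ofReal_le_dimH_range (fun ω ω' k => A.separatesWords_point ω ω' k) A.ratio_pos
    A.ratio_pos hd hN h

theorem ofReal_le_dimH_image_line [CompleteSpace V] [CompleteSpace L] {M : ℕ}
    {A₁ : BallSystem L (Fin M)} (h₁ : ∀ i, ‖A₁.center i‖ ≤ 1 / 4)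
    (hratio : A₂.ratio = A₁.ratio) {B : BallSystem V (Fin M × κ)} {Φ : V → V}
    (hΦ : ∀ ω, Φ ((orthogonalSum A₁ A₂ hratio h₁ h₂).point ω) = B.point ω)
    {d : ℝ} (hd : 0 < d) (hM : 1 < M) (h : 1 ≤ M * B.ratio ^ d) (η : ℕ → κ) :
    ENNReal.ofReal d ≤ dimH (Φ '' {x | ∃ v ∈ L, x = A₂.point η + v}) := by
  have hsep : SeparatesWords (fun ω : ℕ → Fin M => B.point fun k => (ω k, η k))
      B.ratio B.ratio := fun ω ω' k heq hne =>
    B.separatesWords_point _ _ k (fun i hi => by rw [heq i hi])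
      fun hpair => hne (congrArg Prod.fst hpair)
  refine (hsep.ofReal_le_dimH_range B.ratio_pos B.ratio_pos hd hM h).trans (dimH_mono ?_)
  rintro _ ⟨ω, rfl⟩
  refine ⟨_, ⟨A₁.point ω, (A₁.point ω).2, add_comm _ _⟩, ?_⟩
  rw [← point_orthogonalSum hratio h₁ h₂ ω η, hΦ]

end BallSystem

end OrthogonalSum

/-! ### Quasiconformal maps between limit sets -/

section LimitSetMap

variable {V ι : Type*} [NormedAddCommGroup V] [NormedSpace ℝ V]

theorem BallSystem.exists_isFirstLevelConjugacy [CompleteSpace V] [Finite ι]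
    (hV : 1 < Module.rank ℝ V) (A B : BallSystem V ι) :
    ∃ φ, IsFirstLevelConjugacy A B φ := by
  have hroom (S : BallSystem V ι) (i) : ‖S.center i‖ + 3 / 2 * S.ratio < 7 / 8 := by
    linarith [S.norm_center_le i, S.ratio_le]
  obtain ⟨φ, ⟨hbilip, hsupp⟩, hmap⟩ := exists_isBilipSupportedIn_map_balls hV A.ratio_pos
    B.ratio_pos (hroom A) A.le_norm_sub (hroom B) B.le_norm_sub
  exact ⟨φ, hbilip, fun x hx => (hsupp x (by simpa using hx)).self_of_nhds, hmap⟩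

theorem BallSystem.exists_quasiconformalOn_apply_point [FiniteDimensional ℝ V] [MeasurableSpace V]
    [BorelSpace V] (μ : Measure V) [μ.IsAddHaarMeasure] [Fintype ι] (hV : 1 < Module.rank ℝ V)
    (A B : BallSystem V ι) (hq : Fintype.card ι * A.ratio ^ Module.finrank ℝ V < 1)
    {p : ℝ} (hp : 0 ≤ p)
    (hqp : Fintype.card ι * A.ratio ^ Module.finrank ℝ V * (B.ratio / A.ratio) ^ p < 1) :
    ∃ Φ : V ≃ₜ V, QuasiconformalOn univ Φ ∧ (∀ᵐ x ∂μ, DifferentiableAt ℝ Φ x) ∧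
      (∀ K, IsCompact K → ∫⁻ x in K, ENNReal.ofReal (‖fderiv ℝ Φ x‖ ^ p) ∂μ < ⊤) ∧
      ∀ ω, Φ (A.point ω) = B.point ω := by
  have hcomplete : CompleteSpace V := FiniteDimensional.complete ℝ V
  obtain ⟨φ, hφ⟩ := A.exists_isFirstLevelConjugacy hV B
  obtain ⟨C, hC, hφC⟩ := hφ.exists_isQuasisimilarity
  obtain ⟨Φ, hΦ⟩ := hφ.exists_homeomorph_isSelfSimilarExtension
  exact ⟨Φ, hΦ.quasiconformalOn_univ hφ, hΦ.ae_differentiableAt μ hφC hq, fun K hK =>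
    hΦ.lintegral_norm_fderiv_rpow_lt_top μ hφC (by linarith) hq hp hqp hK, hΦ.apply_point⟩

end LimitSetMap

/-! ### Choice of the parameters -/

theorem eventually_exists_ballSystem (V : Type*) [NormedAddCommGroup V] [NormedSpace ℝ V]
    [FiniteDimensional ℝ V] {s : ℝ} (hs₀ : 0 < s) (hs : s < Module.finrank ℝ V) :
    ∀ᶠ r : ℝ in 𝓝[>] 0, ∀ (ι : Type) [Fintype ι], (Fintype.card ι : ℝ) ≤ r ^ (-s) →
      ∃ A : BallSystem V ι, A.ratio = r ∧ ∀ i, ‖A.center i‖ ≤ 1 / 4 := by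
  filter_upwards [Ioc_mem_nhdsGT (show (0 : ℝ) < 1 / 8 by norm_num),
    eventually_exists_separated V hs₀ hs] with r ⟨hr₀, hr⟩ hsep ι _ hcard
  obtain ⟨t, ht, htsep⟩ := hsep _ hcard
  let e := Fintype.equivFin ι
  exact ⟨⟨r, t ∘ e, hr₀, hr, fun i => (ht _).trans (by norm_num),
    fun i j hij => htsep _ _ (e.injective.ne hij)⟩, rfl, fun i => ht _⟩

theorem exists_exponents {n d p α β : ℝ} (hd₀ : 0 ≤ d) (hnp : n ≤ p) (hα₁ : d ≤ α)
    (hα₂ : α < p * d / (p - (n - d))) (hβ : β < (n - d) - p * (1 - d / α)) :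
    ∃ σ α' β' s₁ s₂ : ℝ, 0 < σ ∧ σ < 1 ∧ α < α' ∧ β < β' ∧ 0 < β' ∧ σ * α' < s₁ ∧ s₁ < d ∧
      β' < s₂ ∧ d + s₂ + p * (1 - σ) < n := by
  have hd : 0 < d := by
    refine hd₀.lt_of_ne' fun h => hα₁.not_gt ?_
    simpa only [h, mul_zero, zero_div] using hα₂
  have hα : 0 < α := hd.trans_le hα₁
  have hpn : 0 < p - (n - d) := by linarith
  have hβ₀ : max β 0 < (n - d) - p * (1 - d / α) := by
    refine max_lt hβ ?_
    rw [lt_div_iff₀ hpn] at hα₂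
    have hfrac : (n - d) - p * (1 - d / α) = (p * d - α * (p - (n - d))) / α := by
      field_simp
      ring
    rw [hfrac]
    exact div_pos (by linarith) hα
  have hlim : ∀ᶠ σ in 𝓝[<] (d / α), max β 0 < (n - d) - p * (1 - σ) :=
    (ContinuousAt.tendsto (x := d / α) (f := fun σ => (n - d) - p * (1 - σ))
      (by fun_prop)).mono_left nhdsWithin_le_nhds |>.eventually_const_lt hβ₀
  obtain ⟨σ, hσβ, hσ₀, hσα⟩ := (hlim.and (Ioo_mem_nhdsLT (div_pos hd hα))).exists
  obtain ⟨β', hβ', hβ's⟩ := exists_between hσβ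
  obtain ⟨s₂, hβs₂, hs₂⟩ := exists_between hβ's
  obtain ⟨α', hα', hσα'⟩ := exists_between ((lt_div_iff₀' hσ₀).2 ((lt_div_iff₀ hα).1 hσα))
  obtain ⟨s₁, hs₁, hs₁d⟩ := exists_between ((lt_div_iff₀' hσ₀).1 hσα')
  exact ⟨σ, α', β', s₁, s₂, hσ₀, hσα.trans_le ((div_le_one hα).2 hα₁), hα',
    (le_max_left _ _).trans_lt hβ', (le_max_right _ _).trans_lt hβ', hs₁, hs₁d, hβs₂,
    by linarith⟩

theorem mul_pow_mul_rpow_lt_one {r K s σ p : ℝ} {n : ℕ} (hr₀ : 0 < r) (hr₁ : r < 1)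
    (hK : K ≤ r ^ (-s)) (hs : s + p * (1 - σ) < n) : K * r ^ n * (r ^ σ / r) ^ p < 1 := by
  calc K * r ^ n * (r ^ σ / r) ^ p ≤ r ^ (-s) * r ^ n * (r ^ σ / r) ^ p := by gcongr
    _ = r ^ (n - (s + p * (1 - σ))) := by
      rw [← Real.rpow_sub_one hr₀.ne', ← Real.rpow_mul hr₀.le, ← Real.rpow_natCast,
        ← Real.rpow_add hr₀, ← Real.rpow_add hr₀]
      ring_nf
    _ < 1 := Real.rpow_lt_one hr₀.le hr₁ (by linarith)

theorem one_le_mul_rpow_of_rpow_neg_le {r K s : ℝ} (hr : 0 < r) (h : r ^ (-s) ≤ K) :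
    1 ≤ K * r ^ s := by
  rwa [Real.rpow_neg hr.le, inv_le_iff_one_le_mul₀ (by positivity)] at h

section Parameters

variable {V : Type*} [NormedAddCommGroup V] [InnerProductSpace ℝ V] [FiniteDimensional ℝ V]

theorem eventually_exists_ballSystems_orthogonal (L : Submodule ℝ V) {σ s₁ s₂ : ℝ} (hσ : 0 < σ)
    (hs₁ : 0 < s₁) (hs₁' : s₁ < Module.finrank ℝ L) (hs₂ : 0 < s₂)
    (hs₂' : s₂ < Module.finrank ℝ Lᗮ) (hs : s₁ + s₂ < σ * Module.finrank ℝ V) :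
    ∀ᶠ r : ℝ in 𝓝[>] 0, ∀ M N : ℕ, (M : ℝ) ≤ r ^ (-s₁) → (N : ℝ) ≤ r ^ (-s₂) →
      ∃ (A₁ : BallSystem L (Fin M)) (A₂ : BallSystem Lᗮ (Fin N)) (B : BallSystem V (Fin M × Fin N)),
        A₁.ratio = r ∧ A₂.ratio = r ∧ B.ratio = r ^ σ ∧
        (∀ i, ‖A₁.center i‖ ≤ 1 / 4) ∧ ∀ j, ‖A₂.center j‖ ≤ 1 / 4 := by
  filter_upwards [self_mem_nhdsWithin, eventually_exists_ballSystem L hs₁ hs₁',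
    eventually_exists_ballSystem Lᗮ hs₂ hs₂', (tendsto_rpow_nhdsGT_zero hσ).eventually
      (eventually_exists_ballSystem V (div_pos (add_pos hs₁ hs₂) hσ) ((div_lt_iff₀' hσ).2 hs))]
    with r (hr : 0 < r) hL hLo hV M N hM hN
  obtain ⟨A₁, hA₁, h₁⟩ := hL (Fin M) (by rwa [Fintype.card_fin])
  obtain ⟨A₂, hA₂, h₂⟩ := hLo (Fin N) (by rwa [Fintype.card_fin])
  have hcard : (Fintype.card (Fin M × Fin N) : ℝ) ≤ (r ^ σ) ^ (-((s₁ + s₂) / σ)) := by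
    rw [← Real.rpow_mul hr.le, mul_neg, mul_div_cancel₀ _ hσ.ne', neg_add, Real.rpow_add hr,
      Fintype.card_prod, Fintype.card_fin, Fintype.card_fin, Nat.cast_mul]
    gcongr
  obtain ⟨B, hB, -⟩ := hV _ hcard
  exact ⟨A₁, A₂, B, hA₁, hA₂, hB, h₁, h₂⟩

theorem exists_ballSystems_orthogonal (L : Submodule ℝ V) {p σ α β s₁ s₂ : ℝ}
    (hnp : Module.finrank ℝ V ≤ p) (hσ₀ : 0 < σ) (hσ₁ : σ < 1) (hα : 0 < α) (hβ : 0 < β)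
    (hαs : σ * α < s₁) (hs₁ : s₁ < Module.finrank ℝ L) (hβs : β < s₂)
    (hs₂ : Module.finrank ℝ L + s₂ + p * (1 - σ) < Module.finrank ℝ V) :
    ∃ (M N : ℕ) (A₁ : BallSystem L (Fin M)) (A₂ : BallSystem Lᗮ (Fin N))
      (B : BallSystem V (Fin M × Fin N)), A₂.ratio = A₁.ratio ∧
      (∀ i, ‖A₁.center i‖ ≤ 1 / 4) ∧ (∀ j, ‖A₂.center j‖ ≤ 1 / 4) ∧ 1 < M ∧ 1 < N ∧
      1 ≤ M * B.ratio ^ α ∧ 1 ≤ N * A₂.ratio ^ β ∧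
      (M * N : ℝ) * A₁.ratio ^ Module.finrank ℝ V < 1 ∧
      (M * N : ℝ) * A₁.ratio ^ Module.finrank ℝ V * (B.ratio / A₁.ratio) ^ p < 1 := by
  have hp : Module.finrank ℝ V * (1 - σ) ≤ p * (1 - σ) :=
    mul_le_mul_of_nonneg_right hnp (by linarith)
  have hV : 0 ≤ Module.finrank ℝ V * (1 - σ) := mul_nonneg (Nat.cast_nonneg _) (by linarith)
  have hfinrank : (Module.finrank ℝ L + Module.finrank ℝ Lᗮ : ℝ) = Module.finrank ℝ V := by
    exact_mod_cast L.finrank_add_finrank_orthogonal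
  have hσα : 0 < σ * α := mul_pos hσ₀ hα
  have hsystems := eventually_exists_ballSystems_orthogonal L hσ₀ (hσα.trans hαs) hs₁
    (hβ.trans hβs) (by linarith) (by linarith)
  have hr : ∀ᶠ r : ℝ in 𝓝[>] 0, r ∈ Ioo 0 1 := Ioo_mem_nhdsGT one_pos
  obtain ⟨r, ⟨hr₀, hr₁⟩, ⟨M, hM, hαM, hMs⟩, ⟨N, hN, hβN, hNs⟩, hsys⟩ :=
    (hr.and ((eventually_exists_nat_between_rpow_neg hσα hαs).and
      ((eventually_exists_nat_between_rpow_neg hβ hβs).and hsystems))).exists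
  have hMN : (M * N : ℝ) ≤ r ^ (-(s₁ + s₂)) := by
    rw [neg_add, Real.rpow_add hr₀]
    gcongr
  obtain ⟨A₁, A₂, B, hA₁, hA₂, hB, h₁, h₂⟩ := hsys M N hMs hNs
  refine ⟨M, N, A₁, A₂, B, hA₂.trans hA₁.symm, h₁, h₂, hM, hN, ?_, ?_, ?_, ?_⟩
  · rw [hB, ← Real.rpow_mul hr₀.le]
    exact one_le_mul_rpow_of_rpow_neg_le hr₀ hαM
  · rw [hA₂]
    exact one_le_mul_rpow_of_rpow_neg_le hr₀ hβN
  · rw [hA₁]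
    simpa using mul_pow_mul_rpow_lt_one (p := 0) (σ := σ) hr₀ hr₁ hMN (by linarith)
  · rw [hA₁, hB]
    exact mul_pow_mul_rpow_lt_one hr₀ hr₁ hMN (by linarith)

end Parameters

theorem lt_toReal_dimH_of_ofReal_le {V : Type*} [NormedAddCommGroup V] [NormedSpace ℝ V]
    [FiniteDimensional ℝ V] {S : Set V} {x y : ℝ} (hxy : x < y)
    (h : ENNReal.ofReal y ≤ dimH S) : x < (dimH S).toReal := by
  have htop : dimH S ≠ ⊤ := by
    refine ne_top_of_le_ne_top (ENNReal.natCast_ne_top (Module.finrank ℝ V)) ?_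
    rw [← Real.dimH_univ_eq_finrank]
    exact dimH_mono (subset_univ S)
  exact hxy.trans_le ((ENNReal.ofReal_le_iff_le_toReal htop).1 h)

theorem qc_sharp_line_dimension_distortion_general {V : Type*} [NormedAddCommGroup V]
    [InnerProductSpace ℝ V] [FiniteDimensional ℝ V] [MeasurableSpace V] [BorelSpace V]
    (μ : Measure V) [μ.IsAddHaarMeasure] (L : Submodule ℝ V) {p α β : ℝ}
    (hp : Module.finrank ℝ V ≤ p) (hα₁ : Module.finrank ℝ L ≤ α)
    (hα₂ : α < p * Module.finrank ℝ L / (p - (Module.finrank ℝ V - Module.finrank ℝ L)))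
    (hβ : β < (Module.finrank ℝ V - Module.finrank ℝ L) - p * (1 - Module.finrank ℝ L / α)) :
    ∃ (E : Set V) (Φ : V ≃ₜ V), E ⊆ (Lᗮ : Set V) ∧ β < (dimH E).toReal ∧
      QuasiconformalOn univ Φ ∧ (∀ᵐ x ∂μ, DifferentiableAt ℝ Φ x) ∧
      (∀ K, IsCompact K → ∫⁻ x in K, ENNReal.ofReal (‖fderiv ℝ Φ x‖ ^ p) ∂μ < ⊤) ∧
      ∀ a ∈ E, α < (dimH (Φ '' {x | ∃ v ∈ L, x = a + v})).toReal := by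
  have hcomplete : CompleteSpace V := FiniteDimensional.complete ℝ V
  have hcomplete' : CompleteSpace L := FiniteDimensional.complete ℝ L
  have hp₀ : 0 ≤ p := (Nat.cast_nonneg _).trans hp
  obtain ⟨σ, α', β', s₁, s₂, hσ₀, hσ₁, hα', hβ', hβ'₀, hs₁, hs₁', hs₂, hs₂'⟩ :=
    exists_exponents (Nat.cast_nonneg _) hp hα₁ hα₂ hβ
  have hα'₀ : 0 < α' := hα'.trans_le' ((Nat.cast_nonneg _).trans hα₁)
  obtain ⟨M, N, A₁, A₂, B, hratio, h₁, h₂, hM, hN, hMα, hNβ, hq, hqp⟩ :=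
    exists_ballSystems_orthogonal L hp hσ₀ hσ₁ hα'₀ hβ'₀ hs₁ hs₁' hs₂ hs₂'
  have hrank : 1 < Module.rank ℝ V := by
    have hL : (0 : ℝ) < Module.finrank ℝ L := hs₁'.trans' (hs₁.trans' (mul_pos hσ₀ hα'₀))
    have hLV : (Module.finrank ℝ L : ℝ) < Module.finrank ℝ V := by nlinarith
    rw [Nat.cast_pos] at hL
    rw [Nat.cast_lt] at hLV
    exact Module.one_lt_rank_of_one_lt_finrank (hLV.trans_le' hL)
  obtain ⟨Φ, hqc, hdiff, hint, hΦ⟩ := BallSystem.exists_quasiconformalOn_apply_point μ hrank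
    (A₁.orthogonalSum A₂ hratio h₁ h₂) B (by simpa using hq) hp₀ (by simpa using hqp)
  refine ⟨range fun η => (A₂.point η : V), Φ, range_subset_iff.2 fun η => (A₂.point η).2,
    lt_toReal_dimH_of_ofReal_le hβ' (A₂.ofReal_le_dimH_range_coe_point hβ'₀ hN hNβ),
    hqc, hdiff, hint, ?_⟩
  rintro _ ⟨η, rfl⟩
  exact lt_toReal_dimH_of_ofReal_le hα'
    (BallSystem.ofReal_le_dimH_image_line h₂ h₁ hratio hΦ hα'₀ hM hMα η)

/-- **Main theorem.** Let `p > n ≥ 2`, `α ∈ [1, p/(p-(n-1)))`, and let `L` be a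
one-dimensional linear subspace of `ℝⁿ`. For any `β < (n-1) - p(1 - 1/α)` there are a set
`E ⊆ L^⊥` with `dim E > β` and a quasiconformal homeomorphism `Φ : ℝⁿ → ℝⁿ` belonging to
`W^{1,p}_loc(ℝⁿ;ℝⁿ)` such that `dim Φ(a + L) > α` for every `a ∈ E`. -/
theorem qc_sharp_line_dimension_distortion
    (n : ℕ) (hn : 2 ≤ n) (p : ℝ) (hp : (n : ℝ) < p)
    (α : ℝ) (hα₁ : 1 ≤ α) (hα₂ : α < p / (p - ((n : ℝ) - 1)))
    (L : Submodule ℝ (EuclideanSpace ℝ (Fin n))) (hL : Module.finrank ℝ L = 1)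
    (β : ℝ) (hβ : β < ((n : ℝ) - 1) - p * (1 - 1 / α)) :
    ∃ (E : Set (EuclideanSpace ℝ (Fin n)))
      (Φ : EuclideanSpace ℝ (Fin n) ≃ₜ EuclideanSpace ℝ (Fin n)),
      E ⊆ (Lᗮ : Set (EuclideanSpace ℝ (Fin n))) ∧
      β < (dimH E).toReal ∧
      QuasiconformalOn Set.univ ⇑Φ ∧
      (∀ᵐ x, DifferentiableAt ℝ (⇑Φ) x) ∧
      (∀ K : Set (EuclideanSpace ℝ (Fin n)), IsCompact K →
        ∫⁻ x in K, ENNReal.ofReal (‖fderiv ℝ (⇑Φ) x‖ ^ p) < ⊤) ∧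
      ∀ a ∈ E, α < (dimH (⇑Φ '' {x | ∃ v ∈ L, x = a + v})).toReal := by
  exact qc_sharp_line_dimension_distortion_general volume L (by simpa using hp.le)
    (by simpa [hL] using hα₁) (by simpa [hL] using hα₂) (by simpa [hL] using hβ)
end
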